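/- arXiv:1205.5993 — 2 statements merged into one kernel-verified Lean document; each statement's English description precedes it below -/
import Mathlib

section
/- Let (X,‖·‖_X) be a Banach space with Rademacher cotype q < ∞ and Rademacher type p > 1. Then there exist κ, C ∈ (0,∞) (depending only on X) such that for every n ∈ ℕ there is an even integer m ≤ κ n^{1/q} with the property that every f : ℤ_m^n → X satisfies Σ_{j=1}^n Σ_{x∈ℤ_m^n} ‖f(x + (m/2)e_j) − f(x)‖_X^q ≤ (Cm)^q 3^{−n} Σ_{ε∈{−1,0,1}^n} Σ_{x∈ℤ_m^n} ‖f(x+ε) − f(x)‖_X^q, where e_1,…,e_n is the standard basis of the discrete torus ℤ_m^n and addition is modulo m. -/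
open scoped BigOperators

/-- A Banach space `X` has Rademacher type `p` if there is `T < ∞` such that for every `n` and
every `x₁,…,xₙ ∈ X`, `𝔼_ε ‖∑ᵢ εᵢ xᵢ‖ ≤ T (∑ᵢ ‖xᵢ‖^p)^{1/p}`. -/
def RademacherType (X : Type*) [NormedAddCommGroup X] [NormedSpace ℝ X] (p : ℝ) : Prop :=
  ∃ T : ℝ, 0 < T ∧ ∀ (n : ℕ) (x : Fin n → X),
    ((2 : ℝ) ^ n)⁻¹ * ∑ ε : Fin n → Bool, ‖∑ i : Fin n, (if ε i then (1 : ℝ) else -1) • x i‖ ≤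
      T * (∑ i : Fin n, ‖x i‖ ^ p) ^ (1 / p)

/-- A Banach space `X` has Rademacher cotype `q` if there is `C > 0` such that for every `n` and
every `x₁,…,xₙ ∈ X`, `(∑ᵢ ‖xᵢ‖^q)^{1/q} ≤ C 𝔼_ε ‖∑ᵢ εᵢ xᵢ‖`. -/
def RademacherCotype (X : Type*) [NormedAddCommGroup X] [NormedSpace ℝ X] (q : ℝ) : Prop :=
  ∃ C : ℝ, 0 < C ∧ ∀ (n : ℕ) (x : Fin n → X),
    (∑ i : Fin n, ‖x i‖ ^ q) ^ (1 / q) ≤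
      C * (((2 : ℝ) ^ n)⁻¹ *
        ∑ ε : Fin n → Bool, ‖∑ i : Fin n, (if ε i then (1 : ℝ) else -1) • x i‖)

/-!
Type `p > 1` makes every space of `X`-valued functions with the `ℓ²` norm B-convex, with constants
that depend only on `X`. In a B-convex space a product of `n` complements `1 - e` of commuting
contractive idempotents has norm bounded away from `2 ^ n` for some fixed `n`. By the criterion of
Kato and Beurling this makes the noise semigroup on the hypercube analytic, uniformly in the
dimension, so the spectral projections of its generator are bounded; the one for the eigenvalue `1`
is the Rademacher projection (Pisier's K-convexity theorem).

Together with cotype `q`, this bounds the averages over `δ ∈ {-1, 0, 1} ^ n` of the increments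
`f (x + δ) - f x` weighted by `δ j`. These are, up to the factor `3`, the differences in direction
`2 e_j` of the average of `f` over the `δ` with `δ j = 0`. Telescoping `m / 4` of these differences
gives the half turn `(m / 2) e_j`, while replacing `f` by its average costs a term proportional to
`n`, which is absorbed into `m ^ q` as soon as `m` is of order `n ^ (1 / q)`.
-/

open MeasureTheory Set Filter Topology

section ScalarIntegrals

lemma tendsto_pow_mul_cexp_neg_mul_atTop_nhds_zero {z : ℂ} (hz : 0 < z.re) (k : ℕ) :
    Tendsto (fun s : ℝ => (s : ℂ) ^ k * Complex.exp (-z * s)) atTop (𝓝 0) := by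
  rw [tendsto_zero_iff_norm_tendsto_zero]
  refine (tendsto_rpow_mul_exp_neg_mul_atTop_nhds_zero (k : ℝ) z.re hz).congr' ?_
  filter_upwards [eventually_ge_atTop (0 : ℝ)] with s hs
  simp [Complex.norm_exp, abs_of_nonneg hs]

lemma integrableOn_pow_mul_cexp_neg_mul_Ioi {z : ℂ} (hz : 0 < z.re) (k : ℕ) :
    IntegrableOn (fun s : ℝ => (s : ℂ) ^ k * Complex.exp (-z * s)) (Ioi 0) := by
  have real_integrable := integrableOn_rpow_mul_exp_neg_mul_rpow (p := 1) (s := k) (b := z.re)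
    (by linarith [k.cast_nonneg (α := ℝ)]) one_pos hz
  refine Integrable.mono real_integrable (Continuous.aestronglyMeasurable (by fun_prop))
    (.of_forall fun s => ?_)
  simp [Complex.norm_exp]

lemma integral_pow_mul_cexp_neg_mul_Ioi {z : ℂ} (hz : 0 < z.re) (k : ℕ) :
    ∫ s in Ioi (0 : ℝ), (s : ℂ) ^ k * Complex.exp (-z * s) = k.factorial / z ^ (k + 1) := by
  have hz0 : z ≠ 0 := by rintro rfl; simp at hz
  induction k with
  | zero =>
    have h := integral_exp_mul_complex_Ioi (a := -z) (by simpa using hz) 0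
    simpa [neg_div_neg_eq] using h
  | succ k ih =>
    have integral_deriv := integral_Ioi_of_hasDerivAt_of_tendsto' (a := 0) (m := 0)
      (f := fun s : ℝ => (s : ℂ) ^ (k + 1) * Complex.exp (-z * s))
      (f' := fun s : ℝ => (k + 1) * ((s : ℂ) ^ k * Complex.exp (-z * s)) -
        z * ((s : ℂ) ^ (k + 1) * Complex.exp (-z * s))) (fun s _ => ?_)
      (((integrableOn_pow_mul_cexp_neg_mul_Ioi hz k).const_mul _).sub
        ((integrableOn_pow_mul_cexp_neg_mul_Ioi hz (k + 1)).const_mul _))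
      (tendsto_pow_mul_cexp_neg_mul_atTop_nhds_zero hz _)
    · rw [integral_sub ((integrableOn_pow_mul_cexp_neg_mul_Ioi hz k).const_mul _)
        ((integrableOn_pow_mul_cexp_neg_mul_Ioi hz (k + 1)).const_mul _), integral_const_mul,
        integral_const_mul, ih] at integral_deriv
      simp only [Complex.ofReal_zero, ne_eq, Nat.add_eq_zero_iff, one_ne_zero, and_false,
        not_false_eq_true, zero_pow, zero_mul, sub_zero, sub_eq_zero] at integral_deriv
      apply mul_left_cancel₀ hz0
      rw [← integral_deriv, Nat.factorial_succ]
      push_cast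
      field_simp
      ring
    · have hs : HasDerivAt (fun s : ℝ => (s : ℂ)) 1 s := Complex.ofRealCLM.hasDerivAt
      refine ((hs.pow (k + 1)).mul (hs.const_mul (-z)).cexp).congr_deriv ?_
      simp only [Nat.cast_add_one, add_tsub_cancel_right, Pi.pow_apply]
      ring

lemma cexp_neg_add_mul_I_mul_pi_div_abs (a : ℝ) {μ : ℝ} (hμ : μ ≠ 0) :
    Complex.exp (-(a + μ * Complex.I) * (Real.pi / |μ| : ℝ)) =
      -(Real.exp (-(Real.pi / |μ| * a)) : ℝ) := by
  have hμ' : (μ : ℂ) ≠ 0 := mod_cast hμ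
  have exp_rotation : Complex.exp (-(μ * Complex.I) * (Real.pi / |μ| : ℝ)) = -1 := by
    rcases abs_cases μ with ⟨habs, -⟩ | ⟨habs, -⟩ <;> rw [habs]
    · rw [← inv_neg_one, ← Complex.exp_pi_mul_I, ← Complex.exp_neg]
      push_cast
      field_simp
    · rw [← Complex.exp_pi_mul_I]
      push_cast
      field_simp
  rw [neg_add, add_mul, Complex.exp_add, exp_rotation, Complex.ofReal_exp]
  push_cast
  ring_nf

variable {y : ℝ}

lemma add_mul_I_ne_zero (hy : 0 < y) (μ : ℝ) : (y + μ * Complex.I : ℂ) ≠ 0 :=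
  fun h => hy.ne' (by simpa using congrArg Complex.re h)

lemma norm_inv_add_mul_I_pow_three_le (hy : 0 < y) (μ : ℝ) :
    ‖((y + μ * Complex.I : ℂ)⁻¹) ^ 3‖ ≤ (y ^ 3)⁻¹ * (1 + (μ / y) ^ 2)⁻¹ := by
  have norm_sq : ‖(y + μ * Complex.I : ℂ)‖ ^ 2 = y ^ 2 * (1 + (μ / y) ^ 2) := by
    rw [← Complex.normSq_eq_norm_sq, Complex.normSq_add_mul_I]
    field_simp
  have le_norm : y ≤ ‖(y + μ * Complex.I : ℂ)‖ := by
    simpa using (le_abs_self _).trans (Complex.abs_re_le_norm (y + μ * Complex.I))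
  rw [norm_pow, norm_inv, inv_pow, ← mul_inv]
  gcongr
  calc y ^ 3 * (1 + (μ / y) ^ 2) = y * ‖(y + μ * Complex.I : ℂ)‖ ^ 2 := by rw [norm_sq]; ring
    _ ≤ ‖(y + μ * Complex.I : ℂ)‖ ^ 3 := by rw [pow_succ' _ 2]; gcongr

lemma integrable_inv_add_mul_I_pow_three (hy : 0 < y) :
    Integrable fun μ : ℝ => ((y + μ * Complex.I : ℂ)⁻¹) ^ 3 := by
  refine ((integrable_inv_one_add_sq.comp_div hy.ne').const_mul (y ^ 3)⁻¹).mono' ?_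
    (.of_forall (norm_inv_add_mul_I_pow_three_le hy))
  exact ((Continuous.inv₀ (by fun_prop) (add_mul_I_ne_zero hy)).pow 3).aestronglyMeasurable

lemma integrable_cexp_mul_inv_add_mul_I_pow_three (hy : 0 < y) :
    Integrable fun μ : ℝ => Complex.exp (μ * Complex.I) * ((y + μ * Complex.I : ℂ)⁻¹) ^ 3 :=
  (integrable_inv_add_mul_I_pow_three hy).bdd_mul (c := 1)
    (Continuous.aestronglyMeasurable (by fun_prop))
    (.of_forall fun μ => (Complex.norm_exp_ofReal_mul_I μ).le)

lemma fourier_indicator_sq_mul_cexp_neg (hy : 0 < y) (w : ℝ) :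
    FourierTransform.fourier
        (indicator (Ioi 0) fun s : ℝ => (s : ℂ) ^ 2 * Complex.exp (-(y : ℂ) * s)) w =
      2 * ((y + (2 * Real.pi * w : ℝ) * Complex.I : ℂ)⁻¹) ^ 3 := by
  have laplace := integral_pow_mul_cexp_neg_mul_Ioi
    (z := y + (2 * Real.pi * w : ℝ) * Complex.I) (by simpa using hy) 2
  rw [Nat.factorial_two, Nat.cast_two] at laplace
  rw [inv_pow, ← div_eq_mul_inv, ← laplace, Real.fourier_eq',
    ← integral_indicator measurableSet_Ioi]
  congr 1 with s
  by_cases hs : s ∈ Ioi (0 : ℝ)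
  · simp only [indicator_of_mem hs, smul_eq_mul]
    rw [mul_left_comm, ← Complex.exp_add]
    congr 2
    simp only [neg_mul, RCLike.inner_apply, Real.ringHom_apply, Complex.ofReal_neg,
      Complex.ofReal_mul, Complex.ofReal_ofNat, neg_add_rev]
    ring
  · simp only [indicator_of_notMem hs, smul_zero]

lemma integral_cexp_mul_inv_add_mul_I_pow_three (hy : 0 < y) :
    ∫ μ : ℝ, Complex.exp (μ * Complex.I) * ((y + μ * Complex.I : ℂ)⁻¹) ^ 3 =
      Real.pi * Complex.exp (-y) := by
  set f : ℝ → ℂ := indicator (Ioi 0) fun s : ℝ => (s : ℂ) ^ 2 * Complex.exp (-(y : ℂ) * s)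
  have hf : Integrable f := (integrable_indicator_iff measurableSet_Ioi).2
    (integrableOn_pow_mul_cexp_neg_mul_Ioi (by simpa using hy) 2)
  have fourier_f : FourierTransform.fourier f =
      fun w : ℝ => 2 * ((y + (2 * Real.pi * w : ℝ) * Complex.I : ℂ)⁻¹) ^ 3 :=
    funext (fourier_indicator_sq_mul_cexp_neg hy)
  have fourier_integrable : Integrable (FourierTransform.fourier f) := by
    rw [fourier_f]
    exact ((integrable_inv_add_mul_I_pow_three hy).comp_mul_left'
      (R := 2 * Real.pi) (by positivity)).const_mul 2
  have f_continuousAt : ContinuousAt f 1 := by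
    refine ContinuousAt.congr (f := fun s : ℝ => (s : ℂ) ^ 2 * Complex.exp (-(y : ℂ) * s))
      (by fun_prop) ?_
    filter_upwards [Ioi_mem_nhds (zero_lt_one' ℝ)] with s hs
    exact (indicator_of_mem hs fun s : ℝ => (s : ℂ) ^ 2 * Complex.exp (-(y : ℂ) * s)).symm
  have inversion := hf.fourierInv_fourier_eq fourier_integrable f_continuousAt
  have rescale := Measure.integral_comp_mul_left
    (fun μ : ℝ => Complex.exp (μ * Complex.I) * ((y + μ * Complex.I : ℂ)⁻¹) ^ 3) (2 * Real.pi)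
  have f_one : f 1 = Complex.exp (-y) := by simp [f]
  rw [f_one, fourier_f, Real.fourierInv_eq'] at inversion
  calc _ = (Real.pi : ℂ) * ∫ w : ℝ, 2 * (Complex.exp ((2 * Real.pi * w : ℝ) * Complex.I) *
        ((y + (2 * Real.pi * w : ℝ) * Complex.I : ℂ)⁻¹) ^ 3) := by
        rw [integral_const_mul, rescale, abs_of_pos (by positivity), Complex.real_smul,
          ← mul_assoc, ← mul_assoc]
        refine (one_mul _).symm.trans (congrArg (· * _) ?_)
        push_cast
        field_simp
    _ = Real.pi * Complex.exp (-y) := by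
        rw [← inversion]
        congr 2 with w
        simp only [Complex.ofReal_mul, Complex.ofReal_ofNat, inv_pow, RCLike.inner_apply,
          Real.ringHom_apply, one_mul, smul_eq_mul]
        ring_nf

end ScalarIntegrals

section Complexification

lemma norm_map_integral_le {α V F : Type*} [MeasurableSpace α]
    [NormedAddCommGroup V] [NormedSpace ℝ V] [CompleteSpace V] [NormedAddCommGroup F]
    [NormedSpace ℝ F] (L : V →L[ℝ] F) {μ : Measure α} {φ : α → V} (hφ : Integrable φ μ)
    {g : α → ℝ} (hg : Integrable g μ) (hL : ∀ᵐ w ∂μ, ‖L (φ w)‖ ≤ g w) :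
    ‖L (∫ w, φ w ∂μ)‖ ≤ ∫ w, g w ∂μ := by
  let ι : F →L[ℝ] UniformSpace.Completion F := UniformSpace.Completion.toComplL
  have norm_ι (v : F) : ‖ι v‖ = ‖v‖ := UniformSpace.Completion.norm_coe v
  calc ‖L (∫ w, φ w ∂μ)‖ = ‖∫ w, (ι ∘L L) (φ w) ∂μ‖ := by
        rw [(ι ∘L L).integral_comp_comm hφ, ContinuousLinearMap.comp_apply, norm_ι]
    _ ≤ ∫ w, g w ∂μ := norm_integral_le_of_norm_le hg (hL.mono fun w hw => by
        rwa [ContinuousLinearMap.comp_apply, norm_ι])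

variable {S B : Type*} [NormedRing B] [NormedAlgebra ℝ B] (Φ : (S → ℝ) →ₐ[ℝ] B)

/-- The extension of a functional calculus `Φ` on real functions to complex functions. The
complexification of `B` is modelled by `B × B` (real and imaginary part) with the maximum norm,
which is submultiplicative only up to a factor `2`. -/
noncomputable def complexify : (S → ℂ) →ₗ[ℝ] B × B :=
  (Φ.toLinearMap ∘ₗ Complex.reLm.compLeft S).prod (Φ.toLinearMap ∘ₗ Complex.imLm.compLeft S)

lemma complexify_apply (F : S → ℂ) :
    complexify Φ F = (Φ fun s => (F s).re, Φ fun s => (F s).im) := rfl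

lemma norm_map_re_le_norm_complexify (F : S → ℂ) :
    ‖Φ fun s => (F s).re‖ ≤ ‖complexify Φ F‖ := norm_fst_le (complexify Φ F)

lemma norm_map_im_le_norm_complexify (F : S → ℂ) :
    ‖Φ fun s => (F s).im‖ ≤ ‖complexify Φ F‖ := norm_snd_le (complexify Φ F)

lemma norm_complexify_ofReal (g : S → ℝ) : ‖complexify Φ fun s => (g s : ℂ)‖ = ‖Φ g‖ := by
  have im_eq_zero : Φ (fun _ => 0) = 0 := map_zero Φ
  simp [complexify_apply, im_eq_zero]

lemma norm_complexify_one : ‖complexify Φ 1‖ = ‖Φ 1‖ := by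
  rw [← norm_complexify_ofReal]
  congr 2 with s

lemma norm_complexify_mul_le (F G : S → ℂ) :
    ‖complexify Φ (F * G)‖ ≤ 2 * ‖complexify Φ F‖ * ‖complexify Φ G‖ := by
  have re_mul : (fun s => ((F * G) s).re) =
      (fun s => (F s).re) * (fun s => (G s).re) - (fun s => (F s).im) * fun s => (G s).im := by
    ext; simp
  have im_mul : (fun s => ((F * G) s).im) =
      (fun s => (F s).re) * (fun s => (G s).im) + (fun s => (F s).im) * fun s => (G s).re := by
    ext; simp
  have hFre := norm_map_re_le_norm_complexify Φ F
  have hFim := norm_map_im_le_norm_complexify Φ F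
  have hGre := norm_map_re_le_norm_complexify Φ G
  have hGim := norm_map_im_le_norm_complexify Φ G
  rw [complexify_apply, re_mul, im_mul, map_sub, map_add, map_mul, map_mul, map_mul, map_mul,
    mul_assoc, two_mul]
  exact max_le (norm_sub_le_of_le (norm_mul_le_of_le hFre hGre) (norm_mul_le_of_le hFim hGim))
    (norm_add_le_of_le (norm_mul_le_of_le hFre hGim) (norm_mul_le_of_le hFim hGre))

lemma norm_complexify_const_mul_le (c : ℂ) (F : S → ℂ) :
    ‖complexify Φ fun s => c * F s‖ ≤ 2 * ‖c‖ * ‖complexify Φ F‖ := by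
  have re_mul : (fun s => (c * F s).re) =
      c.re • (fun s => (F s).re) - c.im • fun s => (F s).im := by
    ext; simp
  have im_mul : (fun s => (c * F s).im) =
      c.re • (fun s => (F s).im) + c.im • fun s => (F s).re := by
    ext; simp
  have norm_smul_bound {r : ℝ} {f : S → ℝ} (hr : |r| ≤ ‖c‖) (hf : ‖Φ f‖ ≤ ‖complexify Φ F‖) :
      ‖r • Φ f‖ ≤ ‖c‖ * ‖complexify Φ F‖ := by
    rw [norm_smul]
    exact mul_le_mul hr hf (norm_nonneg _) (norm_nonneg c)
  have hre := norm_map_re_le_norm_complexify Φ F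
  have him := norm_map_im_le_norm_complexify Φ F
  have c_re := Complex.abs_re_le_norm c
  have c_im := Complex.abs_im_le_norm c
  rw [complexify_apply, re_mul, im_mul, map_sub, map_add, map_smul, map_smul, map_smul, map_smul,
    mul_assoc, two_mul]
  exact max_le (norm_sub_le_of_le (norm_smul_bound c_re hre) (norm_smul_bound c_im him))
    (norm_add_le_of_le (norm_smul_bound c_re him) (norm_smul_bound c_im hre))

lemma norm_complexify_integral_le [Finite S] {α : Type*} [MeasurableSpace α] {μ : Measure α}
    {φ : α → S → ℂ} (hφ : ∀ s, Integrable (fun w => φ w s) μ) {g : α → ℝ} (hg : Integrable g μ)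
    (hΦ : ∀ᵐ w ∂μ, ‖complexify Φ (φ w)‖ ≤ g w) :
    ‖complexify Φ fun s => ∫ w, φ w s ∂μ‖ ≤ ∫ w, g w ∂μ := by
  cases nonempty_fintype S
  rw [← funext fun s => eval_integral hφ s]
  exact norm_map_integral_le (LinearMap.toContinuousLinearMap (complexify Φ))
    (Integrable.of_eval hφ) hg hΦ

end Complexification

section ContractionSemigroups

lemma norm_map_one_sub_pow_le {A B : Type*} [Ring A] [Algebra ℝ A] [NormedRing B]
    [NormedAlgebra ℝ B] (Φ : A →ₐ[ℝ] B) {v : A} (h_one : ‖Φ 1‖ ≤ 1) (hv : ‖Φ v‖ ≤ 1) (i : ℕ) :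
    ‖Φ ((1 - v) ^ i)‖ ≤ 2 ^ i := by
  have norm_one_sub : ‖Φ (1 - v)‖ ≤ 2 := by
    rw [map_sub, ← one_add_one_eq_two]
    exact norm_sub_le_of_le h_one hv
  induction i with
  | zero => simpa using h_one
  | succ i ih =>
    rw [pow_succ, map_mul, pow_succ]
    exact norm_mul_le_of_le ih norm_one_sub

/-- The geometric sum `Q = ∑ i < n, (1 - v) ^ i * 2 ^ (n - 1 - i)` satisfies
`Q * (1 + v) = 2 ^ n - (1 - v) ^ n`, so that `2 ^ n * u = Q + (1 - v) ^ n * u`. -/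
lemma norm_map_inv_one_add_le {A B : Type*} [CommRing A] [Algebra ℝ A] [NormedRing B]
    [NormedAlgebra ℝ B] (Φ : A →ₐ[ℝ] B) {u v : A} (huv : (1 + v) * u = 1) (h_one : ‖Φ 1‖ ≤ 1)
    (hv : ‖Φ v‖ ≤ 1) {n : ℕ} {ρ : ℝ} (hρ : ρ < 2 ^ n) (hpow : ‖Φ ((1 - v) ^ n)‖ ≤ ρ) :
    ‖Φ u‖ ≤ n * 2 ^ (n - 1) / (2 ^ n - ρ) := by
  set Q : A := ∑ i ∈ Finset.range n, (1 - v) ^ i * 2 ^ (n - 1 - i)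
  have smul_u_eq : (2 : ℝ) ^ n • u = Q + (1 - v) ^ n * u := by
    have geom : Q * (1 - v - 2) = (1 - v) ^ n - 2 ^ n := geom_sum₂_mul _ _ _
    have two_pow_smul : (2 : ℝ) ^ n • u = 2 ^ n * u := by
      rw [Algebra.smul_def, map_pow, map_ofNat]
    linear_combination two_pow_smul + Q * huv + u * geom
  have norm_Q : ‖Φ Q‖ ≤ n * 2 ^ (n - 1) := by
    rw [map_sum]
    refine (norm_sum_le_of_le (n := fun _ => 2 ^ (n - 1)) _ fun i hi => ?_).trans_eq (by simp)
    have two_pow_eq : (2 : A) ^ (n - 1 - i) = algebraMap ℝ A (2 ^ (n - 1 - i)) := by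
      rw [map_pow, map_ofNat]
    rw [two_pow_eq, mul_comm, ← Algebra.smul_def, map_smul, norm_smul, norm_pow, Real.norm_ofNat]
    calc (2 : ℝ) ^ (n - 1 - i) * ‖Φ ((1 - v) ^ i)‖ ≤ 2 ^ (n - 1 - i) * 2 ^ i := by
          gcongr
          exact norm_map_one_sub_pow_le Φ h_one hv i
      _ = 2 ^ (n - 1) := by
          rw [← pow_add, Nat.sub_add_cancel (Nat.le_sub_one_of_lt (Finset.mem_range.1 hi))]
  have norm_u : 2 ^ n * ‖Φ u‖ ≤ n * 2 ^ (n - 1) + ρ * ‖Φ u‖ := by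
    calc 2 ^ n * ‖Φ u‖ = ‖Φ ((2 : ℝ) ^ n • u)‖ := by simp [norm_smul]
      _ = ‖Φ Q + Φ ((1 - v) ^ n) * Φ u‖ := by rw [smul_u_eq, map_add, map_mul]
      _ ≤ n * 2 ^ (n - 1) + ρ * ‖Φ u‖ :=
          norm_add_le_of_le norm_Q (norm_mul_le_of_le hpow le_rfl)
  rw [le_div_iff₀ (by linarith)]
  linarith

variable {S B : Type*} [NormedRing B] [NormedAlgebra ℝ B]

/-- The operators `e^{-t x} = Φ (exp (-t x))`, `t ≥ 0`, form a semigroup of contractions. The case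
`t = 0` says that `‖Φ 1‖ ≤ 1`. -/
def IsContractionSemigroup (Φ : (S → ℝ) →ₐ[ℝ] B) (x : S → ℝ) : Prop :=
  ∀ t : ℝ, 0 ≤ t → ‖Φ fun s => Real.exp (-(t * x s))‖ ≤ 1

variable {Φ : (S → ℝ) →ₐ[ℝ] B} {x : S → ℝ}

lemma norm_complexify_mul_resolvent_le (h_one : ‖Φ 1‖ ≤ 1) (hx_nonneg : ∀ s, 0 ≤ x s) {C μ : ℝ}
    (hR : (1 + |μ|) * ‖complexify Φ fun s => (x s + (1 + μ * Complex.I) : ℂ)⁻¹‖ ≤ C) :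
    ‖complexify Φ fun s => x s * (x s + (1 + μ * Complex.I) : ℂ)⁻¹‖ ≤ 1 + 2 * C := by
  set R : S → ℂ := fun s => (x s + (1 + μ * Complex.I) : ℂ)⁻¹
  have mul_R_eq : (fun s => (x s : ℂ) * R s) = 1 - fun s => (1 + μ * Complex.I) * R s := by
    ext s
    have : (x s + (1 + μ * Complex.I) : ℂ) ≠ 0 := by
      simpa [add_assoc] using add_mul_I_ne_zero (by linarith [hx_nonneg s] : 0 < x s + 1) μ
    simp only [R, Pi.sub_apply, Pi.one_apply]
    field_simp
    ring
  have norm_scalar : ‖(1 + μ * Complex.I : ℂ)‖ ≤ 1 + |μ| := norm_add_le_of_le (by simp) (by simp)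
  rw [mul_R_eq, map_sub]
  refine norm_sub_le_of_le ((norm_complexify_one Φ).trans_le h_one)
    ((norm_complexify_const_mul_le Φ _ _).trans ?_)
  calc 2 * ‖(1 + μ * Complex.I : ℂ)‖ * ‖complexify Φ R‖
      ≤ 2 * (1 + |μ|) * ‖complexify Φ R‖ := by gcongr
    _ ≤ 2 * C := by linarith

lemma norm_complexify_mul_resolvent_pow_three_le (h_one : ‖Φ 1‖ ≤ 1)
    (hx_nonneg : ∀ s, 0 ≤ x s) {C μ : ℝ}
    (hR : (1 + |μ|) * ‖complexify Φ fun s => (x s + (1 + μ * Complex.I) : ℂ)⁻¹‖ ≤ C) :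
    ‖complexify Φ fun s => Complex.exp (μ * Complex.I) *
      (x s * ((x s + (1 + μ * Complex.I) : ℂ)⁻¹) ^ 3)‖ ≤
        8 * (1 + 2 * C) * C ^ 2 * (1 + μ ^ 2)⁻¹ := by
  set R : S → ℂ := fun s => (x s + (1 + μ * Complex.I) : ℂ)⁻¹
  have C_nonneg : 0 ≤ C := (by positivity : (0 : ℝ) ≤ _).trans hR
  have norm_R_sq : ‖complexify Φ R‖ ^ 2 ≤ C ^ 2 * (1 + μ ^ 2)⁻¹ := by
    rw [← div_eq_mul_inv, le_div_iff₀ (by positivity)]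
    calc ‖complexify Φ R‖ ^ 2 * (1 + μ ^ 2) ≤ ((1 + |μ|) * ‖complexify Φ R‖) ^ 2 := by
          rw [mul_pow, mul_comm, ← sq_abs μ]
          gcongr
          nlinarith [abs_nonneg μ]
      _ ≤ C ^ 2 := by gcongr
  have cube_eq : (fun s => (x s : ℂ) * R s ^ 3) = (fun s => (x s : ℂ) * R s) * (R * R) := by
    ext s
    simp only [Pi.mul_apply]
    ring
  calc _ ≤ 2 * 1 * ‖complexify Φ fun s => (x s : ℂ) * R s ^ 3‖ := by
        rw [← Complex.norm_exp_ofReal_mul_I μ]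
        exact norm_complexify_const_mul_le Φ _ _
    _ ≤ 2 * 1 * (2 * (1 + 2 * C) * (2 * ‖complexify Φ R‖ * ‖complexify Φ R‖)) := by
        rw [cube_eq]
        gcongr
        refine (norm_complexify_mul_le Φ _ _).trans ?_
        gcongr
        · exact norm_complexify_mul_resolvent_le h_one hx_nonneg hR
        · exact norm_complexify_mul_le Φ _ _
    _ = 8 * (1 + 2 * C) * ‖complexify Φ R‖ ^ 2 := by ring
    _ ≤ 8 * (1 + 2 * C) * (C ^ 2 * (1 + μ ^ 2)⁻¹) := by gcongr
    _ = _ := by ring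

/-- Kato's bound for the operators `t x e^{-t x}`, in terms of a bound `C₀` for the operators
`(1 + e^{-t x})⁻¹`; `2 + 24 π C₀` is the resolvent bound on the line `Re z = 1`. -/
noncomputable def katoConst (C₀ : ℝ) : ℝ :=
  8 * Real.exp 1 * (1 + 2 * (2 + 24 * Real.pi * C₀)) * (2 + 24 * Real.pi * C₀) ^ 2

lemma katoConst_pos {C₀ : ℝ} (hC₀ : 0 ≤ C₀) : 0 < katoConst C₀ := by
  unfold katoConst
  positivity

namespace IsContractionSemigroup

lemma norm_map_one_le (hx : IsContractionSemigroup Φ x) : ‖Φ 1‖ ≤ 1 := by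
  have one_eq : (1 : S → ℝ) = fun s => Real.exp (-(0 * x s)) := by ext; simp
  exact one_eq ▸ hx 0 le_rfl

lemma const_mul (hx : IsContractionSemigroup Φ x) {t : ℝ} (ht : 0 ≤ t) :
    IsContractionSemigroup Φ fun s => t * x s := fun r hr => by
  simpa only [mul_assoc] using hx (r * t) (mul_nonneg hr ht)

lemma norm_complexify_setIntegral_cexp_le [Finite S] (hx : IsContractionSemigroup Φ x) (z : ℂ)
    {A : Set ℝ} (hA : MeasurableSet A) (hA_nonneg : A ⊆ Ici 0)
    (h_exp : ∀ s, IntegrableOn (fun w : ℝ => Complex.exp (-(x s + z) * w)) A)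
    (h_bound : IntegrableOn (fun w : ℝ => Real.exp (-z.re * w)) A) :
    ‖complexify Φ fun s => ∫ w in A, Complex.exp (-(x s + z) * w)‖ ≤
      2 * ∫ w in A, Real.exp (-z.re * w) := by
  rw [← integral_const_mul]
  refine norm_complexify_integral_le Φ h_exp (h_bound.const_mul 2) ?_
  filter_upwards [ae_restrict_mem hA] with w hw
  have exp_split : (fun s => Complex.exp (-(x s + z) * w)) =
      fun s => Complex.exp (-z * w) * ((Real.exp (-(w * x s)) : ℝ) : ℂ) := by
    ext s
    rw [Complex.ofReal_exp, ← Complex.exp_add]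
    push_cast
    ring_nf
  rw [exp_split]
  refine (norm_complexify_const_mul_le _ _ _).trans ?_
  rw [norm_complexify_ofReal, Complex.norm_exp]
  simpa using mul_le_mul_of_nonneg_left (hx w (hA_nonneg hw)) (by positivity)

lemma norm_complexify_resolvent_le [Finite S] (hx : IsContractionSemigroup Φ x)
    (hx_nonneg : ∀ s, 0 ≤ x s) {z : ℂ} (hz : 0 < z.re) :
    ‖complexify Φ fun s => (x s + z)⁻¹‖ ≤ 2 / z.re := by
  have re_pos (s : S) : (-(x s + z)).re < 0 := by
    simpa using (neg_neg_of_pos hz).trans_le (hx_nonneg s)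
  have laplace (s : S) : ∫ w in Ioi (0 : ℝ), Complex.exp (-(x s + z) * w) = (x s + z)⁻¹ := by
    rw [integral_exp_mul_complex_Ioi (re_pos s)]
    rw [Complex.ofReal_zero, mul_zero, Complex.exp_zero, neg_div_neg_eq, one_div]
  have real_laplace : ∫ w in Ioi (0 : ℝ), Real.exp (-z.re * w) = z.re⁻¹ := by
    simpa [neg_div_neg_eq] using integral_exp_mul_Ioi (neg_neg_of_pos hz) 0
  have bound := hx.norm_complexify_setIntegral_cexp_le z measurableSet_Ioi Ioi_subset_Ici_self
    (fun s => integrableOn_exp_mul_complex_Ioi (re_pos s) 0)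
    (integrableOn_exp_mul_Ioi (neg_neg_of_pos hz) 0)
  simpa only [laplace, real_laplace, ← div_eq_mul_inv] using bound

/-- Truncating the Laplace integral of the resolvent at `T = π / |μ|`, where `exp (-i μ T) = -1`,
produces the factor `1 + exp (-T x)`. -/
lemma norm_complexify_resolvent_mul_I_le [Finite S] (hx : IsContractionSemigroup Φ x) {C₀ : ℝ}
    (hC₀ : ∀ t : ℝ, 0 ≤ t → ‖Φ fun s => (1 + Real.exp (-(t * x s)))⁻¹‖ ≤ C₀) {μ : ℝ} (hμ : μ ≠ 0) :
    ‖complexify Φ fun s => (x s + μ * Complex.I : ℂ)⁻¹‖ ≤ 4 * Real.pi * C₀ / |μ| := by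
  set T := Real.pi / |μ|
  have T_nonneg : 0 ≤ T := by positivity
  have ne_zero (s : S) : (x s + μ * Complex.I : ℂ) ≠ 0 := fun h =>
    hμ (by simpa using congrArg Complex.im h)
  have truncated (s : S) : ∫ w in Ioc 0 T, Complex.exp (-(x s + μ * Complex.I) * w) =
      (1 + (Real.exp (-(T * x s)) : ℝ)) * (x s + μ * Complex.I : ℂ)⁻¹ := by
    rw [← intervalIntegral.integral_of_le T_nonneg,
      integral_exp_mul_complex (neg_ne_zero.2 (ne_zero s)), cexp_neg_add_mul_I_mul_pi_div_abs _ hμ]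
    simp only [Complex.ofReal_zero, mul_zero, Complex.exp_zero]
    rw [div_neg, neg_div', neg_sub, sub_neg_eq_add, div_eq_mul_inv]
  have factor : (fun s => (x s + μ * Complex.I : ℂ)⁻¹) =
      (fun s => (((1 + Real.exp (-(T * x s)))⁻¹ : ℝ) : ℂ)) *
        fun s => ∫ w in Ioc 0 T, Complex.exp (-(x s + μ * Complex.I) * w) := by
    ext s
    have one_add_ne_zero : (1 + (Real.exp (-(T * x s)) : ℝ) : ℂ) ≠ 0 :=
      mod_cast (by positivity : (1 + Real.exp (-(T * x s)) : ℝ) ≠ 0)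
    rw [Pi.mul_apply, truncated, ← mul_assoc, Complex.ofReal_inv, Complex.ofReal_add,
      Complex.ofReal_one, inv_mul_cancel₀ one_add_ne_zero, one_mul]
  have norm_truncated : ‖complexify Φ fun s =>
      ∫ w in Ioc 0 T, Complex.exp (-(x s + μ * Complex.I) * w)‖ ≤ 2 * T := by
    refine (hx.norm_complexify_setIntegral_cexp_le (μ * Complex.I) measurableSet_Ioc
      (fun w hw => hw.1.le) (fun s => (Continuous.integrableOn_Ioc (by fun_prop)))
      (Continuous.integrableOn_Ioc (by fun_prop))).trans_eq ?_
    simp [T_nonneg]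
  calc _ ≤ 2 * ‖Φ fun s => (1 + Real.exp (-(T * x s)))⁻¹‖ * (2 * T) := by
        rw [factor, ← norm_complexify_ofReal]
        exact (norm_complexify_mul_le Φ _ _).trans (by gcongr)
    _ ≤ 2 * C₀ * (2 * T) := by gcongr; exact hC₀ T T_nonneg
    _ = 4 * Real.pi * C₀ / |μ| := by ring

lemma norm_complexify_resolvent_one_add_mul_I_le [Finite S] (hx : IsContractionSemigroup Φ x)
    (hx_nonneg : ∀ s, 0 ≤ x s) {C₀ : ℝ}
    (hC₀ : ∀ t : ℝ, 0 ≤ t → ‖Φ fun s => (1 + Real.exp (-(t * x s)))⁻¹‖ ≤ C₀) (μ : ℝ) :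
    (1 + |μ|) * ‖complexify Φ fun s => (x s + (1 + μ * Complex.I) : ℂ)⁻¹‖ ≤
      2 + 24 * Real.pi * C₀ := by
  set R : S → ℂ := fun s => (x s + (1 + μ * Complex.I) : ℂ)⁻¹
  have C₀_nonneg : 0 ≤ C₀ := (norm_nonneg _).trans (hC₀ 0 le_rfl)
  have norm_R : ‖complexify Φ R‖ ≤ 2 := by
    simpa using hx.norm_complexify_resolvent_le hx_nonneg (z := 1 + μ * Complex.I) (by simp)
  rcases eq_or_ne μ 0 with rfl | hμ
  · rw [abs_zero, add_zero, one_mul]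
    exact norm_R.trans (le_add_of_nonneg_right (by positivity))
  have resolvent_identity : R = (fun s => (x s + μ * Complex.I : ℂ)⁻¹) * (1 - R) := by
    ext s
    have : (x s + μ * Complex.I : ℂ) ≠ 0 := fun h => hμ (by simpa using congrArg Complex.im h)
    have : (x s + (1 + μ * Complex.I) : ℂ) ≠ 0 := fun h => hμ (by simpa using congrArg Complex.im h)
    simp only [R, Pi.mul_apply, Pi.sub_apply, Pi.one_apply]
    field_simp
    ring
  have norm_R' : ‖complexify Φ R‖ ≤ 24 * Real.pi * C₀ / |μ| := by
    calc ‖complexify Φ R‖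
        ≤ 2 * ‖complexify Φ fun s => (x s + μ * Complex.I : ℂ)⁻¹‖ * ‖complexify Φ (1 - R)‖ := by
          conv_lhs => rw [resolvent_identity]
          exact norm_complexify_mul_le Φ _ _
      _ ≤ 2 * (4 * Real.pi * C₀ / |μ|) * (1 + 2) := by
          gcongr
          · exact hx.norm_complexify_resolvent_mul_I_le hC₀ hμ
          · rw [map_sub]
            exact norm_sub_le_of_le ((norm_complexify_one Φ).trans_le hx.norm_map_one_le) norm_R
      _ = 24 * Real.pi * C₀ / |μ| := by ring
  rw [le_div_iff₀' (abs_pos.2 hμ)] at norm_R'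
  linarith

/-- Fourier inversion expresses `x e^{-x}` through the third powers of the resolvents on the line
`Re z = 1`. -/
lemma norm_map_mul_exp_neg_le [Finite S] (hx : IsContractionSemigroup Φ x)
    (hx_nonneg : ∀ s, 0 ≤ x s) {C₀ : ℝ}
    (hC₀ : ∀ t : ℝ, 0 ≤ t → ‖Φ fun s => (1 + Real.exp (-(t * x s)))⁻¹‖ ≤ C₀) :
    ‖Φ fun s => x s * Real.exp (-x s)‖ ≤ katoConst C₀ := by
  set C := 2 + 24 * Real.pi * C₀ with hC
  set φ : ℝ → S → ℂ := fun μ s => Complex.exp (μ * Complex.I) *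
      (x s * ((x s + (1 + μ * Complex.I) : ℂ)⁻¹) ^ 3)
  have φ_eq (μ : ℝ) (s : S) : φ μ s = x s * (Complex.exp (μ * Complex.I) *
      (((1 + x s : ℝ) + μ * Complex.I : ℂ)⁻¹) ^ 3) := by
    simp only [φ]
    push_cast
    ring_nf
  have one_add_pos (s : S) : 0 < 1 + x s := by linarith [hx_nonneg s]
  have φ_integrable (s : S) : Integrable fun μ => φ μ s := by
    simp only [φ_eq]
    exact (integrable_cexp_mul_inv_add_mul_I_pow_three (one_add_pos s)).const_mul _
  have φ_integral (s : S) : ((x s * Real.exp (-x s) : ℝ) : ℂ) =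
      (Real.exp 1 / Real.pi) • ∫ μ, φ μ s := by
    simp only [φ_eq]
    rw [integral_const_mul, integral_cexp_mul_inv_add_mul_I_pow_three (one_add_pos s),
      Complex.real_smul, Complex.ofReal_add, neg_add, Complex.exp_add]
    push_cast
    rw [Complex.exp_neg 1]
    field_simp
  have bound := norm_complexify_integral_le Φ φ_integrable
    (integrable_inv_one_add_sq.const_mul (8 * (1 + 2 * C) * C ^ 2))
    (.of_forall fun μ => norm_complexify_mul_resolvent_pow_three_le hx.norm_map_one_le hx_nonneg
      (hx.norm_complexify_resolvent_one_add_mul_I_le hx_nonneg hC₀ μ))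
  rw [integral_const_mul, integral_univ_inv_one_add_sq] at bound
  calc ‖Φ fun s => x s * Real.exp (-x s)‖
      = ‖complexify Φ ((Real.exp 1 / Real.pi) • fun s => ∫ μ, φ μ s)‖ := by
        rw [← norm_complexify_ofReal]
        exact congrArg (‖complexify Φ ·‖) (funext φ_integral)
    _ ≤ Real.exp 1 / Real.pi * (8 * (1 + 2 * C) * C ^ 2 * Real.pi) := by
        rw [map_smul, norm_smul, Real.norm_of_nonneg (by positivity)]
        gcongr
    _ = katoConst C₀ := by
        rw [katoConst, ← hC]
        field_simp

lemma norm_map_mul_exp_neg_mul_le [Finite S] (hx : IsContractionSemigroup Φ x)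
    (hx_nonneg : ∀ s, 0 ≤ x s) {C₀ : ℝ}
    (hC₀ : ∀ t : ℝ, 0 ≤ t → ‖Φ fun s => (1 + Real.exp (-(t * x s)))⁻¹‖ ≤ C₀) {t : ℝ} (ht : 0 < t) :
    ‖Φ fun s => x s * Real.exp (-(t * x s))‖ ≤ katoConst C₀ / t := by
  have scaled := (hx.const_mul ht.le).norm_map_mul_exp_neg_le (C₀ := C₀)
    (fun s => mul_nonneg ht.le (hx_nonneg s))
    (fun r hr => by simpa only [mul_assoc] using hC₀ (r * t) (mul_nonneg hr ht.le))
  have smul_eq : (fun s => t * x s * Real.exp (-(t * x s))) =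
      t • fun s => x s * Real.exp (-(t * x s)) := by
    ext s
    simp only [Pi.smul_apply, smul_eq_mul, mul_assoc]
  rwa [smul_eq, map_smul, norm_smul, Real.norm_of_nonneg ht.le, ← le_div_iff₀' ht] at scaled

end IsContractionSemigroup

lemma norm_map_pow_div_factorial_mul_exp_neg_le {C a : ℝ} (ha : 0 < a)
    (h_exp : ‖Φ fun s => Real.exp (-(a * x s))‖ ≤ 1)
    (h_deriv : ∀ t : ℝ, 0 < t → ‖Φ fun s => x s * Real.exp (-(t * x s))‖ ≤ C / t) (j : ℕ) :
    ‖Φ fun s => x s ^ j / j.factorial * Real.exp (-(a * x s))‖ ≤ (C * Real.exp 1 / a) ^ j := by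
  rcases j.eq_zero_or_pos with rfl | hj
  · simpa using h_exp
  have hC : 0 ≤ C := by simpa using (norm_nonneg _).trans (h_deriv 1 one_pos)
  have pow_eq : (fun s => x s ^ j / j.factorial * Real.exp (-(a * x s))) =
      (j.factorial : ℝ)⁻¹ • (fun s => x s * Real.exp (-(a / j * x s))) ^ j := by
    ext s
    have exponent_eq : (j : ℝ) * -(a / j * x s) = -(a * x s) := by field_simp
    simp only [Pi.smul_apply, Pi.pow_apply, smul_eq_mul, mul_pow, ← Real.exp_nat_mul, exponent_eq]
    ring
  calc _ ≤ (j.factorial : ℝ)⁻¹ * (C / (a / j)) ^ j := by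
        rw [pow_eq, map_smul, map_pow, norm_smul, Real.norm_of_nonneg (by positivity)]
        gcongr
        refine (norm_pow_le' _ hj).trans ?_
        gcongr
        exact h_deriv _ (by positivity)
    _ = (C / a) ^ j * ((j : ℝ) ^ j / j.factorial) := by
        rw [div_div_eq_mul_div, mul_div_right_comm, mul_pow]
        ring
    _ ≤ (C / a) ^ j * Real.exp j := by
        gcongr
        exact Real.pow_div_factorial_le_exp j j.cast_nonneg j
    _ = _ := by rw [← Real.exp_one_pow, ← mul_pow, div_mul_eq_mul_div]

lemma norm_complexify_cexp_neg_add_mul_I_le [Finite S] {C a θ : ℝ} (ha : 0 < a)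
    (h_exp : ‖Φ fun s => Real.exp (-(a * x s))‖ ≤ 1)
    (h_deriv : ∀ t : ℝ, 0 < t → ‖Φ fun s => x s * Real.exp (-(t * x s))‖ ≤ C / t)
    (hθ : |θ| * (C * Real.exp 1 / a) ≤ 1 / 2) :
    ‖complexify Φ fun s => Complex.exp (-(a + θ * Complex.I) * x s)‖ ≤ 4 := by
  cases nonempty_fintype S
  set term : ℕ → S → ℂ := fun j s =>
    (-(θ * Complex.I)) ^ j * ((x s ^ j / j.factorial * Real.exp (-(a * x s)) : ℝ) : ℂ)
  have expansion : HasSum term fun s => Complex.exp (-(a + θ * Complex.I) * x s) := by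
    refine Pi.hasSum.2 fun s => ?_
    have series := (NormedSpace.expSeries_div_hasSum_exp (𝔸 := ℂ)
      (-(θ * Complex.I) * x s)).mul_right ((Real.exp (-(a * x s)) : ℝ) : ℂ)
    rw [← Complex.exp_eq_exp_ℂ, Complex.ofReal_exp, ← Complex.exp_add] at series
    have limit_eq : -(a + θ * Complex.I) * x s =
        -(θ * Complex.I) * x s + ((-(a * x s) : ℝ) : ℂ) := by
      push_cast
      ring
    rw [limit_eq]
    refine (congrArg (HasSum · _) (funext fun j => ?_)).mpr series
    simp only [term]
    push_cast
    ring
  have norm_term (j : ℕ) : ‖complexify Φ (term j)‖ ≤ 2 * (1 / 2) ^ j := by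
    calc _ ≤ 2 * ‖(-(θ * Complex.I)) ^ j‖ * (C * Real.exp 1 / a) ^ j := by
          refine (norm_complexify_const_mul_le Φ _ _).trans ?_
          rw [norm_complexify_ofReal]
          gcongr
          exact norm_map_pow_div_factorial_mul_exp_neg_le ha h_exp h_deriv j
      _ = 2 * (|θ| * (C * Real.exp 1 / a)) ^ j := by
          simp [mul_pow, mul_assoc]
      _ ≤ 2 * (1 / 2) ^ j := by
          have hC : 0 ≤ C := by simpa using (norm_nonneg _).trans (h_deriv 1 one_pos)
          gcongr
  have geometric : HasSum (fun j : ℕ => 2 * (1 / 2 : ℝ) ^ j) 4 := by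
    have double := hasSum_geometric_two.mul_left 2
    rwa [show (2 : ℝ) * 2 = 4 by norm_num] at double
  exact (expansion.map (complexify Φ)
    (LinearMap.continuous_of_finiteDimensional _)).norm_le_of_bounded geometric norm_term

lemma integral_cexp_int_mul_I_neg_pi_pi (d : ℤ) :
    ∫ θ in -Real.pi..Real.pi, Complex.exp (d * Complex.I * θ) =
      if d = 0 then (2 * Real.pi : ℂ) else 0 := by
  split_ifs with hd
  · simp only [hd, Int.cast_zero, zero_mul, Complex.exp_zero, intervalIntegral.integral_const,
      sub_neg_eq_add, Complex.real_smul, Complex.ofReal_add, mul_one]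
    ring
  · rw [integral_exp_mul_complex (by simpa using hd), div_eq_zero_iff]
    left
    rw [sub_eq_zero, Complex.exp_eq_exp_iff_exists_int]
    exact ⟨d, by push_cast; ring⟩

lemma ite_eq_smul_integral_cexp (a : ℝ) (k d : ℕ) :
    ((if k = d then 1 else 0 : ℝ) : ℂ) = (Real.exp (a * d) / (2 * Real.pi)) •
      ∫ θ in Ioc (-Real.pi) Real.pi,
        Complex.exp (d * Complex.I * θ) * Complex.exp (-(a + θ * Complex.I) * (k : ℝ)) := by
  have integrand_eq (θ : ℝ) :
      Complex.exp (d * Complex.I * θ) * Complex.exp (-(a + θ * Complex.I) * (k : ℝ)) =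
        Complex.exp (-(a * k)) * Complex.exp (((d - k : ℤ) : ℂ) * Complex.I * θ) := by
    simp only [← Complex.exp_add]
    push_cast
    ring_nf
  simp only [integrand_eq]
  rw [integral_const_mul, ← intervalIntegral.integral_of_le (by linarith [Real.pi_pos]),
    integral_cexp_int_mul_I_neg_pi_pi]
  split_ifs with hkd hdk hdk
  · rw [hkd, Complex.real_smul, Complex.exp_neg]
    push_cast
    field_simp
  · omega
  · omega
  · simp

/-- The spectral projection is the average of `exp (θ d i) exp (a d) exp (-(a + θ i) k)` over
`|θ| ≤ π`; the choice `a = 2 π e C` brings this whole segment into the domain of analyticity. -/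
lemma norm_map_ite_eq_le [Finite S] {k : S → ℕ} {C : ℝ} (hC : 0 < C)
    (hk : IsContractionSemigroup Φ fun s => (k s : ℝ))
    (h_deriv : ∀ t : ℝ, 0 < t → ‖Φ fun s => k s * Real.exp (-(t * k s))‖ ≤ C / t) (d : ℕ) :
    ‖Φ fun s => if k s = d then 1 else 0‖ ≤ 8 * Real.exp (2 * Real.pi * Real.exp 1 * C * d) := by
  set a := 2 * Real.pi * Real.exp 1 * C with ha
  set φ : ℝ → S → ℂ := fun θ s =>
    Complex.exp (d * Complex.I * θ) * Complex.exp (-(a + θ * Complex.I) * (k s : ℝ))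
  have norm_φ {θ : ℝ} (hθ : θ ∈ Ioc (-Real.pi) Real.pi) : ‖complexify Φ (φ θ)‖ ≤ 8 := by
    have norm_rotation : ‖Complex.exp (d * Complex.I * θ)‖ = 1 := by simp [Complex.norm_exp]
    have in_domain : |θ| * (C * Real.exp 1 / a) ≤ 1 / 2 := by
      calc |θ| * (C * Real.exp 1 / a) ≤ Real.pi * (C * Real.exp 1 / a) := by
            gcongr
            exact abs_le.2 ⟨hθ.1.le, hθ.2⟩
        _ = 1 / 2 := by rw [ha]; field_simp
    refine (norm_complexify_const_mul_le Φ _ _).trans ?_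
    have := norm_complexify_cexp_neg_add_mul_I_le (by positivity) (hk a (by positivity)) h_deriv
      in_domain
    rw [norm_rotation]
    linarith
  have bound := norm_complexify_integral_le Φ (φ := φ)
    (μ := volume.restrict (Ioc (-Real.pi) Real.pi))
    (fun s => Continuous.integrableOn_Ioc (by fun_prop))
    (integrable_const 8) ((ae_restrict_mem measurableSet_Ioc).mono fun θ hθ => norm_φ hθ)
  rw [← norm_complexify_ofReal]
  calc _ = ‖complexify Φ ((Real.exp (a * d) / (2 * Real.pi)) •
          fun s => ∫ θ in Ioc (-Real.pi) Real.pi, φ θ s)‖ :=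
        congrArg (‖complexify Φ ·‖) (funext fun s => ite_eq_smul_integral_cexp a (k s) d)
    _ ≤ Real.exp (a * d) / (2 * Real.pi) * (2 * Real.pi * 8) := by
        rw [map_smul, norm_smul, Real.norm_of_nonneg (by positivity)]
        gcongr
        refine bound.trans_eq ?_
        simp [Real.pi_pos.le, two_mul]
    _ = 8 * Real.exp (a * d) := by field_simp

/-- The hypothesis that `‖(1 - e^{-t k}) ^ n‖` stays below `2 ^ n` is Kato's and Beurling's
criterion for analyticity of a contraction semigroup. -/
lemma norm_map_ite_eq_le_of_norm_one_sub_exp_pow_le [Finite S] {k : S → ℕ}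
    (hk : IsContractionSemigroup Φ fun s => (k s : ℝ)) {n : ℕ} {ρ : ℝ} (hρ : ρ < 2 ^ n)
    (hpow : ∀ t : ℝ, 0 ≤ t → ‖Φ ((1 - fun s => Real.exp (-(t * k s))) ^ n)‖ ≤ ρ) (d : ℕ) :
    ‖Φ fun s => if k s = d then 1 else 0‖ ≤
      8 * Real.exp (2 * Real.pi * Real.exp 1 * katoConst (n * 2 ^ (n - 1) / (2 ^ n - ρ)) * d) := by
  have inv_bound (t : ℝ) (ht : 0 ≤ t) :
      ‖Φ fun s => (1 + Real.exp (-(t * k s)))⁻¹‖ ≤ n * 2 ^ (n - 1) / (2 ^ n - ρ) := by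
    refine norm_map_inv_one_add_le Φ (v := fun s => Real.exp (-(t * k s))) ?_
      hk.norm_map_one_le (hk t ht) hρ (hpow t ht)
    ext s
    exact mul_inv_cancel₀ (by positivity : 1 + Real.exp (-(t * k s)) ≠ 0)
  exact norm_map_ite_eq_le (katoConst_pos ((norm_nonneg _).trans (inv_bound 0 le_rfl))) hk
    (fun t ht => hk.norm_map_mul_exp_neg_mul_le (fun s => (k s).cast_nonneg) inv_bound ht) d

end ContractionSemigroups

section Signs

/-- The sign `±1` encoded by a Boolean, so that `ι → Bool` plays the role of `{-1, 1} ^ ι`. -/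
def boolSign (b : Bool) : ℝ := if b then 1 else -1

lemma boolSign_true : boolSign true = 1 := rfl

lemma boolSign_false : boolSign false = -1 := rfl

lemma boolSign_mul_self (b : Bool) : boolSign b * boolSign b = 1 := by
  cases b <;> simp [boolSign]

lemma boolSign_not (b : Bool) : boolSign (!b) = -boolSign b := by
  cases b <;> simp [boolSign]

lemma norm_boolSign (b : Bool) : ‖boolSign b‖ = 1 := by
  cases b <;> simp [boolSign]

end Signs

section IdempotentProducts

variable {A : Type*} [CommRing A] [Algebra ℝ A] {Y : Type*} [NormedAddCommGroup Y]
  [NormedSpace ℝ Y] (Φ : A →ₐ[ℝ] (Y →L[ℝ] Y)) {ι : Type*}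

lemma norm_map_one_le_one : ‖Φ 1‖ ≤ 1 := by
  rw [map_one]
  exact ContinuousLinearMap.norm_id_le

lemma norm_map_mul_le_of_norm_le_one {g : A} (hg : ‖Φ g‖ ≤ 1) (h : A) : ‖Φ (g * h)‖ ≤ ‖Φ h‖ := by
  rw [map_mul]
  exact (norm_mul_le _ _).trans (mul_le_of_le_one_left (norm_nonneg _) hg)

lemma norm_map_boolSign_smul (b : Bool) (g : A) : ‖Φ (boolSign b • g)‖ = ‖Φ g‖ := by
  rw [map_smul, norm_smul, norm_boolSign, one_mul]

lemma norm_map_prod_one_add_le {g : ι → A} (hg : ∀ k, ‖Φ (g k)‖ ≤ 1) (U : Finset ι) :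
    ‖Φ (∏ k ∈ U, (1 + g k))‖ ≤ 2 ^ U.card := by
  classical
  induction U using Finset.induction_on with
  | empty => simpa using norm_map_one_le_one Φ
  | insert k U hk ih =>
    rw [Finset.prod_insert hk, Finset.card_insert_of_notMem hk, one_add_mul, map_add]
    refine (norm_add_le_of_le ih ((norm_map_mul_le_of_norm_le_one Φ (hg k) _).trans ih)).trans_eq ?_
    ring

lemma norm_map_prod_one_add_sub_one_le {g : ι → A} (hg : ∀ k, ‖Φ (g k)‖ ≤ 1) (U : Finset ι) :
    ‖Φ (∏ k ∈ U, (1 + g k) - 1)‖ ≤ 2 ^ U.card - 1 := by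
  classical
  induction U using Finset.induction_on with
  | empty => simp
  | insert k U hk ih =>
    rw [Finset.prod_insert hk, Finset.card_insert_of_notMem hk, one_add_mul, add_sub_right_comm,
      map_add]
    refine (norm_add_le_of_le ih ((norm_map_mul_le_of_norm_le_one Φ (hg k) _).trans
      (norm_map_prod_one_add_le Φ hg U))).trans_eq ?_
    ring

lemma norm_map_prod_one_add_sub_sum_le {g : ι → A} (hg : ∀ k, ‖Φ (g k)‖ ≤ 1) (U : Finset ι) :
    ‖Φ (∏ k ∈ U, (1 + g k) - ∑ k ∈ U, g k)‖ ≤ 2 ^ U.card - U.card := by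
  classical
  induction U using Finset.induction_on with
  | empty => simpa using norm_map_one_le_one Φ
  | insert k U hk ih =>
    have split_off : (1 + g k) * ∏ i ∈ U, (1 + g i) - (g k + ∑ i ∈ U, g i) =
        (∏ i ∈ U, (1 + g i) - ∑ i ∈ U, g i) + g k * (∏ i ∈ U, (1 + g i) - 1) := by ring
    rw [Finset.prod_insert hk, Finset.sum_insert hk, Finset.card_insert_of_notMem hk, split_off,
      map_add]
    refine (norm_add_le_of_le ih ((norm_map_mul_le_of_norm_le_one Φ (hg k) _).trans
      (norm_map_prod_one_add_sub_one_le Φ hg U))).trans_eq ?_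
    push_cast
    ring

variable {Φ}

lemma two_mul_norm_map_idempotent_mul_le {e : A} (he : ‖Φ e‖ ≤ 1) (hi : IsIdempotentElem e) (h : A)
    (f : Y) : 2 * ‖Φ (e * h) f‖ ≤ ‖Φ ((1 + e) * h) f‖ := by
  have absorb : (2 : ℝ) • (e * h) = e * ((1 + e) * h) := by
    rw [← mul_assoc, mul_add, mul_one, hi.eq, two_smul, add_mul]
  calc 2 * ‖Φ (e * h) f‖ = ‖Φ e (Φ ((1 + e) * h) f)‖ := by
        rw [← mul_apply_eq_comp, ← map_mul, ← absorb, map_smul, smul_apply, norm_smul,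
          Real.norm_two]
    _ ≤ ‖Φ ((1 + e) * h) f‖ := by simpa using (Φ e).le_of_opNorm_le he (Φ ((1 + e) * h) f)

lemma two_mul_sub_norm_map_one_add_boolSign_le {e : A} (he : ‖Φ e‖ ≤ 1) (hi : IsIdempotentElem e)
    {h : A} {f : Y} {M : ℝ} (hM : ‖Φ h f‖ ≤ M) (b : Bool) :
    2 * M - ‖Φ ((1 + boolSign b • e) * h) f‖ ≤ 2 * (2 * M - ‖Φ ((1 - e) * h) f‖) := by
  have triangle : ‖Φ ((1 - e) * h) f‖ ≤ ‖Φ h f‖ + ‖Φ (e * h) f‖ := by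
    rw [one_sub_mul, map_sub]
    exact norm_sub_le _ _
  have norm_e_mul : ‖Φ (e * h) f‖ ≤ ‖Φ h f‖ := by
    simpa [map_mul] using (Φ e).le_of_opNorm_le he (Φ h f)
  cases b
  · rw [boolSign_false, neg_one_smul, ← sub_eq_add_neg]
    linarith
  · rw [boolSign_true, one_smul]
    linarith [two_mul_norm_map_idempotent_mul_le he hi h f]

lemma sub_norm_map_prod_one_add_boolSign_mul_le {e : ι → A} (he : ∀ k, ‖Φ (e k)‖ ≤ 1)
    (hi : ∀ k, IsIdempotentElem (e k)) (σ : ι → Bool) (f : Y) (U : Finset ι) {h : A} {M : ℝ}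
    (hM : ‖Φ h f‖ ≤ M) :
    2 ^ U.card * M - ‖Φ ((∏ k ∈ U, (1 + boolSign (σ k) • e k)) * h) f‖ ≤
      2 ^ U.card * (2 ^ U.card * M - ‖Φ ((∏ k ∈ U, (1 - e k)) * h) f‖) := by
  classical
  induction U using Finset.induction_on generalizing h M with
  | empty => simp
  | insert k U hk ih =>
    have norm_prod : ‖Φ ((∏ i ∈ U, (1 + boolSign (σ i) • e i)) * h) f‖ ≤ 2 ^ U.card * M := by
      have := norm_map_prod_one_add_le Φ (g := fun i => boolSign (σ i) • e i)
        (fun i => (norm_map_boolSign_smul Φ _ _).trans_le (he i)) U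
      rw [map_mul, mul_apply_eq_comp]
      exact ContinuousLinearMap.le_of_opNorm_le_of_le _ this hM
    have norm_one_sub : ‖Φ ((1 - e k) * h) f‖ ≤ 2 * M := by
      have := (Φ (e k)).le_of_opNorm_le_of_le (he k) hM
      rw [one_mul] at this
      rw [one_sub_mul, map_sub, map_mul, two_mul, sub_apply, mul_apply_eq_comp]
      exact norm_sub_le_of_le hM this
    have change_k := two_mul_sub_norm_map_one_add_boolSign_le (he k) (hi k) norm_prod (σ k)
    have change_U := ih norm_one_sub
    rw [mul_left_comm (∏ i ∈ U, _), mul_left_comm (∏ i ∈ U, _)] at change_U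
    rw [Finset.prod_insert hk, Finset.prod_insert hk, Finset.card_insert_of_notMem hk, pow_succ,
      mul_assoc (1 + _), mul_assoc (1 - _)]
    linarith

lemma norm_map_prod_one_add_boolSign_apply_le {e : ι → A} (he : ∀ k, ‖Φ (e k)‖ ≤ 1)
    (σ : ι → Bool) {f : Y} (hf : ‖f‖ ≤ 1) (U : Finset ι) :
    ‖Φ (∏ k ∈ U, (1 + boolSign (σ k) • e k)) f‖ ≤
      2 ^ U.card - U.card + ‖∑ k ∈ U, boolSign (σ k) • Φ (e k) f‖ := by
  have remainder := norm_map_prod_one_add_sub_sum_le Φ (g := fun k => boolSign (σ k) • e k)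
    (fun k => (norm_map_boolSign_smul Φ _ _).trans_le (he k)) U
  have apply_sum : Φ (∑ k ∈ U, boolSign (σ k) • e k) f = ∑ k ∈ U, boolSign (σ k) • Φ (e k) f := by
    simp
  rw [← sub_add_cancel (∏ k ∈ U, _) (∑ k ∈ U, boolSign (σ k) • e k), map_add,
    add_apply, apply_sum]
  refine (norm_add_le _ _).trans (add_le_add_left ?_ _)
  simpa using ContinuousLinearMap.le_of_opNorm_le_of_le _ remainder hf

/-- If `∏ (1 - e k)` nearly attains the norm `2 ^ n` at `f`, so does every `∏ (1 ± e k)`, and then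
every signed sum of the vectors `e k f` has norm nearly `n`. -/
lemma norm_map_prod_one_sub_le [Fintype ι] {c : ℝ}
    (h_signs : ∀ y : ι → Y, (∀ k, ‖y k‖ ≤ 1) → ∃ σ : ι → Bool, ‖∑ k, boolSign (σ k) • y k‖ ≤ c)
    {e : ι → A} (he : ∀ k, ‖Φ (e k)‖ ≤ 1) (hi : ∀ k, IsIdempotentElem (e k)) :
    ‖Φ (∏ k, (1 - e k))‖ ≤
      2 ^ Fintype.card ι - (Fintype.card ι - c) / 2 ^ Fintype.card ι := by
  set n := Fintype.card ι
  have bound_nonneg : 0 ≤ (2 : ℝ) ^ n - (n - c) / 2 ^ n := by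
    obtain ⟨σ, hσ⟩ := h_signs 0 (by simp)
    have c_nonneg : 0 ≤ c := (norm_nonneg _).trans hσ
    have n_lt : (n : ℝ) < 2 ^ n := mod_cast Nat.lt_two_pow_self
    have one_le : (1 : ℝ) ≤ 2 ^ n := one_le_pow₀ one_le_two
    have : ((n : ℝ) - c) / 2 ^ n ≤ 1 := (div_le_one (by positivity)).2 (by linarith)
    linarith
  refine ContinuousLinearMap.opNorm_le_of_unit_norm bound_nonneg fun f hf => ?_
  obtain ⟨σ, hσ⟩ := h_signs (fun k => Φ (e k) f) fun k => by
    simpa using (Φ (e k)).le_of_opNorm_le_of_le (he k) hf.le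
  have norm_f : ‖Φ 1 f‖ ≤ 1 := by simpa using hf.le
  have deficit := sub_norm_map_prod_one_add_boolSign_mul_le he hi σ f Finset.univ norm_f
  have upper := norm_map_prod_one_add_boolSign_apply_le he σ hf.le Finset.univ
  simp only [mul_one, Finset.card_univ] at deficit upper
  have : (n - c) / 2 ^ n ≤ 2 ^ n - ‖Φ (∏ k, (1 - e k)) f‖ := by
    rw [div_le_iff₀' (by positivity)]
    linarith
  linarith

end IdempotentProducts

section Walsh

/-- The algebra homomorphism sending a real function on the index set of a complete system of
orthogonal idempotents to the corresponding linear combination of the idempotents. -/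
noncomputable def idempotentsAlgHom {S B : Type*} [Fintype S] [Ring B] [Algebra ℝ B] {e : S → B}
    (he : CompleteOrthogonalIdempotents e) : (S → ℝ) →ₐ[ℝ] B :=
  AlgHom.ofLinearMap (Fintype.linearCombination ℝ e)
    (by simp [Fintype.linearCombination_apply, he.complete])
    (by
      classical
      intro F G
      simp [Fintype.linearCombination_apply, Finset.sum_mul, Finset.mul_sum, he.mul_eq, smul_smul,
        mul_comm])

lemma idempotentsAlgHom_apply {S B : Type*} [Fintype S] [Ring B] [Algebra ℝ B] {e : S → B}
    (he : CompleteOrthogonalIdempotents e) (F : S → ℝ) :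
    idempotentsAlgHom he F = ∑ s, F s • e s :=
  rfl

variable {ι : Type*}

/-- The Walsh function `w_A (x) = ∏ j ∈ A, x j` on the cube `{-1, 1} ^ ι`. -/
def walsh (A : Finset ι) (x : ι → Bool) : ℝ := ∏ j ∈ A, boolSign (x j)

lemma walsh_singleton (j : ι) (x : ι → Bool) : walsh {j} x = boolSign (x j) :=
  Finset.prod_singleton _ _

/-- Flipping the `j`-th coordinate of a point of the cube. -/
def flipAt [DecidableEq ι] (j : ι) (x : ι → Bool) : ι → Bool := Function.update x j (!x j)

lemma flipAt_involutive [DecidableEq ι] (j : ι) : Function.Involutive (flipAt j) := fun x => by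
  simp [flipAt]

lemma walsh_flipAt [DecidableEq ι] (j : ι) (A : Finset ι) (x : ι → Bool) :
    walsh A (flipAt j x) = (if j ∈ A then -1 else 1) * walsh A x := by
  have off_j (B : Finset ι) (hj : j ∉ B) : walsh B (flipAt j x) = walsh B x :=
    Finset.prod_congr rfl fun i hi => by
      rw [flipAt, Function.update_of_ne (ne_of_mem_of_not_mem hi hj)]
  split_ifs with hj
  · have split_off (y : ι → Bool) : walsh A y = boolSign (y j) * walsh (A.erase j) y :=
      (Finset.mul_prod_erase A _ hj).symm
    rw [split_off, split_off, off_j _ (Finset.notMem_erase j A), flipAt, Function.update_self,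
      boolSign_not]
    ring
  · rw [off_j A hj, one_mul]

lemma sum_walsh_mul_walsh [Fintype ι] [DecidableEq ι] (A A' : Finset ι) :
    ∑ x, walsh A x * walsh A' x = if A = A' then 2 ^ Fintype.card ι else 0 := by
  split_ifs with h
  · subst h
    simp [walsh, ← Finset.prod_mul_distrib, boolSign_mul_self]
  · obtain ⟨j, hj⟩ : ∃ j, ¬(j ∈ A ↔ j ∈ A') := by
      by_contra! h_iff
      exact h (Finset.ext h_iff)
    have odd (x : ι → Bool) :
        walsh A (flipAt j x) * walsh A' (flipAt j x) = -(walsh A x * walsh A' x) := by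
      rw [walsh_flipAt, walsh_flipAt]
      by_cases hA : j ∈ A <;> by_cases hA' : j ∈ A' <;> simp_all
    have := Equiv.sum_comp (flipAt_involutive j).toPerm fun x => walsh A x * walsh A' x
    simp only [Function.Involutive.coe_toPerm, odd, Finset.sum_neg_distrib] at this
    linarith

lemma sum_finset_walsh_mul_walsh [Fintype ι] (x y : ι → Bool) :
    ∑ A, walsh A x * walsh A y = if x = y then 2 ^ Fintype.card ι else 0 := by
  have sum_eq_prod : ∑ A, walsh A x * walsh A y = ∏ j, (1 + boolSign (x j) * boolSign (y j)) := by
    simp [Finset.prod_one_add, walsh, Finset.prod_mul_distrib]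
  rw [sum_eq_prod]
  split_ifs with h
  · simp [h, boolSign_mul_self, one_add_one_eq_two]
  · obtain ⟨j, hj⟩ := Function.ne_iff.1 h
    refine Finset.prod_eq_zero (Finset.mem_univ j) ?_
    cases hx : x j <;> cases hy : y j <;> simp_all [boolSign]

/-- The symbol of the conditional expectation that averages over the coordinates in `D`. -/
def disjointIndicator [DecidableEq ι] (D A : Finset ι) : ℝ := if Disjoint D A then 1 else 0

lemma isIdempotentElem_disjointIndicator [DecidableEq ι] (D : Finset ι) :
    IsIdempotentElem (disjointIndicator D) := by
  funext A
  simp [disjointIndicator]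

/-- The probability that the set of coordinates rerandomised by the noise operator with parameter
`w` is `D`, each coordinate being kept independently with probability `w`. -/
def noiseWeight [Fintype ι] (w : ℝ) (D : Finset ι) : ℝ :=
  (1 - w) ^ D.card * w ^ (Fintype.card ι - D.card)

lemma noiseWeight_nonneg [Fintype ι] {w : ℝ} (hw₀ : 0 ≤ w) (hw₁ : w ≤ 1) (D : Finset ι) :
    0 ≤ noiseWeight w D :=
  mul_nonneg (pow_nonneg (sub_nonneg.2 hw₁) _) (pow_nonneg hw₀ _)

lemma sum_noiseWeight [Fintype ι] (w : ℝ) : ∑ D : Finset ι, noiseWeight w D = 1 := by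
  simpa [noiseWeight] using Fintype.sum_pow_mul_eq_add_pow ι (1 - w) w

lemma sum_noiseWeight_mul_disjointIndicator [Fintype ι] [DecidableEq ι] (w : ℝ)
    (A : Finset ι) :
    ∑ D, noiseWeight w D * disjointIndicator D A = w ^ A.card := by
  have disjoint_iff (D : Finset ι) : Disjoint D A ↔ D ∈ Aᶜ.powerset := by
    rw [Finset.mem_powerset, Finset.subset_compl_iff_disjoint_right]
  have weight_eq (D : Finset ι) (hD : D ∈ Aᶜ.powerset) :
      noiseWeight w D = w ^ A.card * ((1 - w) ^ D.card * w ^ (Aᶜ.card - D.card)) := by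
    have := Finset.card_le_card (Finset.mem_powerset.1 hD)
    have card_add := A.card_add_card_compl
    rw [noiseWeight, mul_left_comm, ← pow_add]
    congr 2
    lia
  simp only [disjointIndicator, disjoint_iff, mul_ite, mul_one, mul_zero, Finset.sum_ite_mem,
    Finset.univ_inter]
  rw [Finset.sum_congr rfl weight_eq, ← Finset.mul_sum, Finset.sum_pow_mul_eq_add_pow]
  simp

variable [Fintype ι] [DecidableEq ι] {X : Type*} [NormedAddCommGroup X] [NormedSpace ℝ X]

/-- The space of functions `{-1, 1} ^ ι → X` with the `ℓ²` norm for the counting measure. -/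
abbrev CubeL2 (ι X : Type*) [Fintype ι] [DecidableEq ι] [NormedAddCommGroup X] :=
  PiLp 2 fun _ : ι → Bool => X

/-- The `A`-th Walsh coefficient `𝔼 w_A f`. -/
noncomputable def walshCoeff (A : Finset ι) : CubeL2 ι X →L[ℝ] X :=
  ((2 : ℝ) ^ Fintype.card ι)⁻¹ • ∑ y, walsh A y • PiLp.proj 2 (fun _ : ι → Bool => X) y

lemma walshCoeff_apply (A : Finset ι) (f : CubeL2 ι X) :
    walshCoeff A f = ((2 : ℝ) ^ Fintype.card ι)⁻¹ • ∑ y, walsh A y • f y := by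
  simp [walshCoeff]

/-- The embedding `v ↦ w_A v` of `X` as the `A`-th Walsh chaos. -/
noncomputable def walshEmbedding (A : Finset ι) : X →L[ℝ] CubeL2 ι X :=
  (PiLp.continuousLinearEquiv 2 ℝ fun _ : ι → Bool => X).symm.toContinuousLinearMap ∘L
    ContinuousLinearMap.pi fun x => walsh A x • ContinuousLinearMap.id ℝ X

lemma walshEmbedding_apply (A : Finset ι) (v : X) (x : ι → Bool) :
    walshEmbedding A v x = walsh A x • v := by
  simp [walshEmbedding]

lemma walshCoeff_walshEmbedding (A A' : Finset ι) (v : X) :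
    walshCoeff A (walshEmbedding A' v) = if A = A' then v else 0 := by
  rw [walshCoeff_apply]
  simp only [walshEmbedding_apply, smul_smul, ← Finset.sum_smul, sum_walsh_mul_walsh]
  split_ifs <;> simp

/-- The projection of `CubeL2 ι X` onto the `A`-th Walsh chaos. -/
noncomputable def walshProj (A : Finset ι) : CubeL2 ι X →L[ℝ] CubeL2 ι X :=
  walshEmbedding A ∘L walshCoeff A

lemma walshProj_apply (A : Finset ι) (f : CubeL2 ι X) (x : ι → Bool) :
    walshProj A f x = walsh A x • walshCoeff A f :=
  walshEmbedding_apply A _ x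

lemma sum_walshProj : ∑ A, (walshProj A : CubeL2 ι X →L[ℝ] CubeL2 ι X) = 1 := by
  ext f x
  calc (∑ A, walshProj A : CubeL2 ι X →L[ℝ] CubeL2 ι X) f x
      = ∑ A, ((2 : ℝ) ^ Fintype.card ι)⁻¹ • ∑ y, (walsh A x * walsh A y) • f y := by
        simp only [sum_apply, WithLp.ofLp_sum, Finset.sum_apply, walshProj_apply, walshCoeff_apply,
          smul_comm (walsh _ x) (_⁻¹ : ℝ), Finset.smul_sum (r := walsh _ x), smul_smul]
    _ = f x := by
        rw [← Finset.smul_sum, Finset.sum_comm]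
        simp [← Finset.sum_smul, sum_finset_walsh_mul_walsh]

lemma completeOrthogonalIdempotents_walshProj :
    CompleteOrthogonalIdempotents (walshProj : Finset ι → CubeL2 ι X →L[ℝ] CubeL2 ι X) := by
  have mul_eq (A A' : Finset ι) :
      walshProj A * walshProj A' = if A = A' then (walshProj A : CubeL2 ι X →L[ℝ] _) else 0 := by
    ext1 f
    change walshEmbedding A (walshCoeff A (walshEmbedding A' (walshCoeff A' f))) = _
    rw [walshCoeff_walshEmbedding]
    split_ifs with h
    · rw [h]; rfl
    · simp
  exact ⟨OrthogonalIdempotents.iff_mul_eq.2 mul_eq, sum_walshProj⟩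

variable (ι X) in
/-- The Fourier multiplier on the cube with symbol `F`, acting as the scalar `F A` on the `A`-th
Walsh chaos. -/
noncomputable def walshMultiplier : (Finset ι → ℝ) →ₐ[ℝ] (CubeL2 ι X →L[ℝ] CubeL2 ι X) :=
  idempotentsAlgHom completeOrthogonalIdempotents_walshProj

lemma walshMultiplier_apply (F : Finset ι → ℝ) (f : CubeL2 ι X) (x : ι → Bool) :
    walshMultiplier ι X F f x = ∑ A, (F A * walsh A x) • walshCoeff A f := by
  simp only [walshMultiplier, idempotentsAlgHom_apply, sum_apply, WithLp.ofLp_sum,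
    Finset.sum_apply, smul_apply, PiLp.smul_apply, walshProj_apply, smul_smul]

lemma walshMultiplier_card_eq_one_apply (f : CubeL2 ι X) (x : ι → Bool) :
    walshMultiplier ι X (fun A => if A.card = 1 then 1 else 0) f x =
      ∑ j, boolSign (x j) • walshCoeff {j} f := by
  have card_eq (A : Finset ι) : A.card = 1 ↔ A ∈ Finset.powersetCard 1 Finset.univ := by simp
  simp only [walshMultiplier_apply, card_eq, ite_mul, one_mul, zero_mul, ite_smul, zero_smul,
    Finset.sum_ite_mem, Finset.univ_inter, Finset.powersetCard_one, Finset.sum_map]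
  exact Finset.sum_congr rfl fun j _ => congrArg (· • _) (walsh_singleton j x)

lemma walshMultiplier_ite_mem_apply (j : ι) (f : CubeL2 ι X) (x : ι → Bool) :
    walshMultiplier ι X (fun A => if j ∈ A then -1 else 1) f x = f (flipAt j x) := by
  have expansion : f (flipAt j x) = walshMultiplier ι X 1 f (flipAt j x) := by rw [map_one]; rfl
  simp only [expansion, walshMultiplier_apply, walsh_flipAt, Pi.one_apply, one_mul]

lemma norm_walshMultiplier_ite_mem_le (j : ι) :
    ‖walshMultiplier ι X fun A => if j ∈ A then -1 else 1‖ ≤ 1 := by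
  refine ContinuousLinearMap.opNorm_le_bound _ zero_le_one fun f => ?_
  rw [one_mul, PiLp.norm_eq_of_L2, PiLp.norm_eq_of_L2]
  simp only [walshMultiplier_ite_mem_apply]
  exact (congrArg _ (Equiv.sum_comp (flipAt_involutive j).toPerm fun x => ‖f x‖ ^ 2)).le

lemma norm_walshMultiplier_disjointIndicator_le (D : Finset ι) :
    ‖walshMultiplier ι X (disjointIndicator D)‖ ≤ 1 := by
  induction D using Finset.induction_on with
  | empty =>
    have : disjointIndicator (∅ : Finset ι) = 1 := by
      funext A
      simp [disjointIndicator]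
    exact this ▸ norm_map_one_le_one _
  | insert j D _ ih =>
    set flip : Finset ι → ℝ := fun A => if j ∈ A then -1 else 1
    have average_flip :
        disjointIndicator (insert j D) = (2⁻¹ : ℝ) • (1 + flip) * disjointIndicator D := by
      funext A
      by_cases hA : j ∈ A <;> simp [disjointIndicator, flip, hA, ← two_mul]
    have norm_average : ‖walshMultiplier ι X ((2⁻¹ : ℝ) • (1 + flip))‖ ≤ 1 := by
      rw [map_smul, norm_smul, map_add, Real.norm_of_nonneg (by norm_num)]
      linarith [norm_add_le_of_le (norm_map_one_le_one (walshMultiplier ι X))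
        (norm_walshMultiplier_ite_mem_le j)]
    rw [average_flip]
    exact (norm_map_mul_le_of_norm_le_one _ norm_average _).trans ih

lemma norm_walshMultiplier_pow_card_le {w : ℝ} (hw₀ : 0 ≤ w) (hw₁ : w ≤ 1) :
    ‖walshMultiplier ι X fun A => w ^ A.card‖ ≤ 1 := by
  have convex_combination : (fun A : Finset ι => w ^ A.card) =
      ∑ D, noiseWeight w D • disjointIndicator D := by
    funext A
    simp [← sum_noiseWeight_mul_disjointIndicator w A]
  rw [convex_combination, map_sum, ← sum_noiseWeight (ι := ι) w]
  refine norm_sum_le_of_le _ fun D _ => ?_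
  have weight_nonneg := noiseWeight_nonneg hw₀ hw₁ D
  rw [map_smul, norm_smul, Real.norm_of_nonneg weight_nonneg]
  exact mul_le_of_le_one_right weight_nonneg (norm_walshMultiplier_disjointIndicator_le D)

lemma norm_walshMultiplier_one_sub_pow_card_pow_le {w : ℝ} (hw₀ : 0 ≤ w)
    (hw₁ : w ≤ 1) {n : ℕ} {ρ : ℝ}
    (hρ : ∀ D : Fin n → Finset ι, ‖walshMultiplier ι X (∏ k, (1 - disjointIndicator (D k)))‖ ≤ ρ) :
    ‖walshMultiplier ι X ((1 - fun A => w ^ A.card) ^ n)‖ ≤ ρ := by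
  have weight_nonneg (D : Fin n → Finset ι) : 0 ≤ ∏ k, noiseWeight w (D k) :=
    Finset.prod_nonneg fun k _ => noiseWeight_nonneg hw₀ hw₁ _
  have sum_weight : ∑ D : Fin n → Finset ι, ∏ k, noiseWeight w (D k) = 1 := by
    rw [← Fintype.sum_pow, sum_noiseWeight, one_pow]
  have one_sub : (1 - fun A : Finset ι => w ^ A.card) =
      ∑ D, noiseWeight w D • (1 - disjointIndicator D) := by
    funext A
    simp [mul_sub, sum_noiseWeight, sum_noiseWeight_mul_disjointIndicator]
  rw [one_sub, Fintype.sum_pow, map_sum, ← one_mul ρ, ← sum_weight, Finset.sum_mul]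
  refine norm_sum_le_of_le _ fun D _ => ?_
  rw [Finset.prod_smul, map_smul, norm_smul, Real.norm_of_nonneg (weight_nonneg D)]
  exact mul_le_mul_of_nonneg_left (hρ D) (weight_nonneg D)

lemma exp_neg_mul_natCast (t : ℝ) (k : ℕ) : Real.exp (-(t * k)) = Real.exp (-t) ^ k := by
  rw [← Real.exp_nat_mul]
  ring_nf

lemma isContractionSemigroup_walshMultiplier :
    IsContractionSemigroup (walshMultiplier ι X) fun A => (A.card : ℝ) := fun t ht => by
  simp only [exp_neg_mul_natCast]
  exact norm_walshMultiplier_pow_card_le (Real.exp_pos _).le (Real.exp_le_one_iff.2 (by linarith))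

lemma exists_norm_walshMultiplier_card_eq_one_le {n : ℕ} {c : ℝ} (hc : c < n) :
    ∃ K : ℝ, 0 < K ∧ ∀ (ι : Type*) [Fintype ι] [DecidableEq ι],
      (∀ y : Fin n → CubeL2 ι X, (∀ k, ‖y k‖ ≤ 1) →
        ∃ σ : Fin n → Bool, ‖∑ k, boolSign (σ k) • y k‖ ≤ c) →
      ‖walshMultiplier ι X fun A => if A.card = 1 then 1 else 0‖ ≤ K := by
  have lt_two_pow : (2 : ℝ) ^ n - (n - c) / 2 ^ n < 2 ^ n :=
    sub_lt_self _ (div_pos (sub_pos.2 hc) (by positivity))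
  refine ⟨8 * Real.exp (2 * Real.pi * Real.exp 1 *
    katoConst (n * 2 ^ (n - 1) / (2 ^ n - (2 ^ n - (n - c) / 2 ^ n))) * (1 : ℕ)), by positivity,
    fun ι _ _ h_signs => norm_map_ite_eq_le_of_norm_one_sub_exp_pow_le
      (Φ := walshMultiplier ι X) isContractionSemigroup_walshMultiplier lt_two_pow
      (fun t ht => ?_) 1⟩
  simp only [exp_neg_mul_natCast]
  refine norm_walshMultiplier_one_sub_pow_card_pow_le (Real.exp_pos _).le
    (Real.exp_le_one_iff.2 (by linarith)) fun D => ?_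
  simpa using norm_map_prod_one_sub_le h_signs
    (fun k => norm_walshMultiplier_disjointIndicator_le (D k))
    (fun k => isIdempotentElem_disjointIndicator (D k))

end Walsh

section TypeAndCotype

lemma sum_rpow_le_sqrt_card_mul_rpow {ι : Type*} [Fintype ι] {p : ℝ} (hp : 1 ≤ p) {a : ι → ℝ}
    (ha : ∀ k, 0 ≤ a k) :
    ∑ k, a k ^ p ≤ √(Fintype.card ι) * √(∑ k, a k ^ 2) ^ p := by
  set A := √(∑ k, a k ^ 2)
  have le_A (k : ι) : a k ≤ A := Real.le_sqrt_of_sq_le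
    (Finset.single_le_sum (f := fun k => a k ^ 2) (fun k _ => sq_nonneg _) (Finset.mem_univ k))
  have sum_le : ∑ k, a k ≤ √(Fintype.card ι) * A := by
    rw [← Real.sqrt_mul (by positivity)]
    exact Real.le_sqrt_of_sq_le (sq_sum_le_card_mul_sum_sq (s := Finset.univ) (f := a))
  have rpow_split {x : ℝ} (hx : 0 ≤ x) : x ^ p = x * x ^ (p - 1) := by
    rw [← Real.rpow_one_add' hx (by linarith), add_sub_cancel]
  calc ∑ k, a k ^ p ≤ ∑ k, a k * A ^ (p - 1) := by
        refine Finset.sum_le_sum fun k _ => ?_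
        rw [rpow_split (ha k)]
        exact mul_le_mul_of_nonneg_left
          (Real.rpow_le_rpow (ha k) (le_A k) (sub_nonneg.2 hp)) (ha k)
    _ ≤ √(Fintype.card ι) * A * A ^ (p - 1) := by
        rw [← Finset.sum_mul]
        gcongr
    _ = √(Fintype.card ι) * A ^ p := by rw [mul_assoc, ← rpow_split (Real.sqrt_nonneg _)]

lemma sum_mul_rpow_sum_rpow_le {ι : Type*} [Fintype ι] {p : ℝ} (hp : 1 ≤ p) {a : ι → ℝ}
    (ha : ∀ k, 0 ≤ a k) :
    (∑ k, a k) * (∑ k, a k ^ p) ^ (1 / p) ≤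
      (Fintype.card ι : ℝ) ^ (1 / 2 + 1 / (2 * p)) * ∑ k, a k ^ 2 := by
  set A := √(∑ k, a k ^ 2) with hA
  set n := (Fintype.card ι : ℝ)
  have sum_le : ∑ k, a k ≤ √n * A := by
    simpa using sum_rpow_le_sqrt_card_mul_rpow le_rfl ha
  have rpow_sum_le : (∑ k, a k ^ p) ^ (1 / p) ≤ √n ^ (1 / p) * A := by
    refine (Real.rpow_le_rpow (Finset.sum_nonneg fun k _ => Real.rpow_nonneg (ha k) p)
      (sum_rpow_le_sqrt_card_mul_rpow hp ha) (by positivity)).trans_eq ?_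
    rw [Real.mul_rpow (by positivity) (by positivity), one_div,
      Real.rpow_rpow_inv (Real.sqrt_nonneg _) (by positivity)]
  calc (∑ k, a k) * (∑ k, a k ^ p) ^ (1 / p) ≤ √n * A * (√n ^ (1 / p) * A) :=
        mul_le_mul sum_le rpow_sum_le (Real.rpow_nonneg (Finset.sum_nonneg fun k _ =>
          Real.rpow_nonneg (ha k) p) _) (by positivity)
    _ = √n * √n ^ (1 / p) * A ^ 2 := by ring
    _ = n ^ (1 / 2 + 1 / (2 * p)) * ∑ k, a k ^ 2 := by
        rw [hA, Real.sq_sqrt (Finset.sum_nonneg fun k _ => sq_nonneg _), Real.sqrt_eq_rpow,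
          ← Real.rpow_mul (by positivity), ← Real.rpow_add_of_nonneg (by positivity) (by positivity)
          (by positivity)]
        congr 3
        ring

/-- The mean square of the signed sums of `n` vectors is at most `β ∑ ‖x k‖ ^ 2`. This always holds
for `β = n`, and with some `β < n` it is a quantitative form of B-convexity. -/
def SignedSumSqBound (Y : Type*) [NormedAddCommGroup Y] [NormedSpace ℝ Y] (n : ℕ) (β : ℝ) : Prop :=
  ∀ x : Fin n → Y,
    ((2 : ℝ) ^ n)⁻¹ * ∑ σ : Fin n → Bool, ‖∑ k, boolSign (σ k) • x k‖ ^ 2 ≤ β * ∑ k, ‖x k‖ ^ 2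

variable {X : Type*} [NormedAddCommGroup X] [NormedSpace ℝ X]

lemma mean_norm_sq_signedSum_le {n : ℕ} (x : Fin n → X) :
    ((2 : ℝ) ^ n)⁻¹ * ∑ σ : Fin n → Bool, ‖∑ k, boolSign (σ k) • x k‖ ^ 2 ≤
      (∑ k, ‖x k‖) * (((2 : ℝ) ^ n)⁻¹ * ∑ σ : Fin n → Bool, ‖∑ k, boolSign (σ k) • x k‖) := by
  have norm_le (σ : Fin n → Bool) : ‖∑ k, boolSign (σ k) • x k‖ ≤ ∑ k, ‖x k‖ :=
    norm_sum_le_of_le _ fun k _ => by rw [norm_smul, norm_boolSign, one_mul]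
  rw [mul_left_comm]
  refine mul_le_mul_of_nonneg_left ?_ (by positivity)
  rw [Finset.mul_sum]
  refine Finset.sum_le_sum fun σ _ => ?_
  rw [sq]
  exact mul_le_mul_of_nonneg_right (norm_le σ) (norm_nonneg _)

lemma exists_signedSumSqBound_of_rademacherType {p : ℝ} (hp : 1 < p) (h : RademacherType X p) :
    ∃ n : ℕ, ∃ β : ℝ, 0 ≤ β ∧ β < n ∧ SignedSumSqBound X n β := by
  obtain ⟨T, hT, type_le⟩ := h
  set γ := 1 / 2 + 1 / (2 * p) with hγ
  have γ_lt : γ < 1 := by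
    have : 1 / (2 * p) < 1 / 2 := by gcongr; linarith
    linarith
  have growth : Tendsto (fun n : ℕ => (n : ℝ) ^ (1 - γ)) atTop atTop :=
    (tendsto_rpow_atTop (sub_pos.2 γ_lt)).comp tendsto_natCast_atTop_atTop
  obtain ⟨n, hn, n_pos⟩ := ((growth.eventually_gt_atTop T).and (eventually_gt_atTop 0)).exists
  refine ⟨n, T * n ^ γ, by positivity, ?_, fun x => ?_⟩
  · calc T * (n : ℝ) ^ γ < n ^ (1 - γ) * n ^ γ := by gcongr
      _ = n := by rw [← Real.rpow_add (by positivity)]; simp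
  · calc ((2 : ℝ) ^ n)⁻¹ * ∑ σ : Fin n → Bool, ‖∑ k, boolSign (σ k) • x k‖ ^ 2
        ≤ (∑ k, ‖x k‖) * (((2 : ℝ) ^ n)⁻¹ * ∑ σ : Fin n → Bool, ‖∑ k, boolSign (σ k) • x k‖) :=
          mean_norm_sq_signedSum_le x
      _ ≤ (∑ k, ‖x k‖) * (T * (∑ k, ‖x k‖ ^ p) ^ (1 / p)) :=
          mul_le_mul_of_nonneg_left (type_le n x) (by positivity)
      _ = T * ((∑ k, ‖x k‖) * (∑ k, ‖x k‖ ^ p) ^ (1 / p)) := mul_left_comm _ _ _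
      _ ≤ T * (n ^ γ * ∑ k, ‖x k‖ ^ 2) := by
          have := sum_mul_rpow_sum_rpow_le hp.le fun k => norm_nonneg (x k)
          rw [Fintype.card_fin] at this
          exact mul_le_mul_of_nonneg_left this hT.le
      _ = T * n ^ γ * ∑ k, ‖x k‖ ^ 2 := (mul_assoc _ _ _).symm

lemma SignedSumSqBound.piLp {n : ℕ} {β : ℝ} (h : SignedSumSqBound X n β) (S : Type*) [Fintype S] :
    SignedSumSqBound (PiLp 2 fun _ : S => X) n β := fun y => by
  simp only [PiLp.norm_sq_eq_of_L2]
  calc ((2 : ℝ) ^ n)⁻¹ * ∑ σ : Fin n → Bool, ∑ s, ‖(∑ k, boolSign (σ k) • y k) s‖ ^ 2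
      = ∑ s, ((2 : ℝ) ^ n)⁻¹ * ∑ σ : Fin n → Bool, ‖∑ k, boolSign (σ k) • y k s‖ ^ 2 := by
        rw [Finset.sum_comm, Finset.mul_sum]
        simp
    _ ≤ ∑ s, β * ∑ k, ‖y k s‖ ^ 2 := Finset.sum_le_sum fun s _ => h fun k => y k s
    _ = β * ∑ k, ∑ s, ‖y k s‖ ^ 2 := by rw [← Finset.mul_sum, Finset.sum_comm]

lemma SignedSumSqBound.exists_norm_sum_le {n : ℕ} {β : ℝ} (hβ : 0 ≤ β)
    (h : SignedSumSqBound X n β) {y : Fin n → X} (hy : ∀ k, ‖y k‖ ≤ 1) :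
    ∃ σ : Fin n → Bool, ‖∑ k, boolSign (σ k) • y k‖ ≤ √(β * n) := by
  have mean_le : ((2 : ℝ) ^ n)⁻¹ * ∑ σ : Fin n → Bool, ‖∑ k, boolSign (σ k) • y k‖ ^ 2 ≤ β * n :=
    calc _ ≤ β * ∑ k, ‖y k‖ ^ 2 := h y
      _ ≤ β * ∑ _ : Fin n, 1 := by
          gcongr with k
          exact pow_le_one₀ (norm_nonneg _) (hy k)
      _ = β * n := by simp
  have sum_le : ∑ σ : Fin n → Bool, ‖∑ k, boolSign (σ k) • y k‖ ^ 2 ≤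
      ∑ _ : Fin n → Bool, β * n := by
    rw [inv_mul_le_iff₀ (by positivity)] at mean_le
    simpa using mean_le
  obtain ⟨σ, -, hσ⟩ := Finset.exists_le_of_sum_le Finset.univ_nonempty sum_le
  exact ⟨σ, Real.le_sqrt_of_sq_le hσ⟩

lemma exists_norm_rademacherProj_le {p : ℝ} (hp : 1 < p) (h : RademacherType X p) :
    ∃ K : ℝ, 0 < K ∧ ∀ N : ℕ,
      ‖walshMultiplier (Fin N) X fun A => if A.card = 1 then 1 else 0‖ ≤ K := by
  obtain ⟨n, β, hβ, β_lt, bound⟩ := exists_signedSumSqBound_of_rademacherType hp h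
  have sqrt_lt : √(β * n) < n := by
    have n_pos : (0 : ℝ) < n := hβ.trans_lt β_lt
    rw [Real.sqrt_lt' n_pos, sq]
    gcongr
  obtain ⟨K, hK, proj_le⟩ := exists_norm_walshMultiplier_card_eq_one_le (X := X) sqrt_lt
  exact ⟨K, hK, fun N => proj_le (Fin N) fun y hy => (bound.piLp _).exists_norm_sum_le hβ hy⟩

lemma inv_card_mul_sum_rpow_le {S : Type*} [Fintype S] [Nonempty S] {q : ℝ} (hq : 1 ≤ q)
    {z : S → ℝ} (hz : ∀ s, 0 ≤ z s) :
    ((Fintype.card S : ℝ)⁻¹ * ∑ s, z s) ^ q ≤ (Fintype.card S : ℝ)⁻¹ * ∑ s, z s ^ q := by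
  have := Real.rpow_arith_mean_le_arith_mean_rpow Finset.univ
    (fun _ : S => (Fintype.card S : ℝ)⁻¹) z (fun _ _ => by positivity) (by simp)
    (fun s _ => hz s) hq
  simpa [Finset.mul_sum] using this

lemma inv_card_mul_sum_norm_rpow_le_of_opNorm_le {S : Type*} [Fintype S] [Nonempty S] {q K : ℝ}
    (hq : 2 ≤ q) {R : PiLp 2 (fun _ : S => X) →L[ℝ] PiLp 2 fun _ : S => X} (hR : ‖R‖ ≤ K)
    (f : PiLp 2 fun _ : S => X) :
    ((Fintype.card S : ℝ)⁻¹ * ∑ s, ‖R f s‖) ^ q ≤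
      K ^ q * ((Fintype.card S : ℝ)⁻¹ * ∑ s, ‖f s‖ ^ q) := by
  have hK : 0 ≤ K := (norm_nonneg R).trans hR
  have rpow_half {x : ℝ} (hx : 0 ≤ x) : (x ^ 2) ^ (q / 2) = x ^ q := by
    rw [← Real.rpow_natCast_mul hx]
    congr 1
    push_cast
    ring
  have sum_sq_le : ∑ s, ‖R f s‖ ^ 2 ≤ K ^ 2 * ∑ s, ‖f s‖ ^ 2 := by
    simpa only [mul_pow, PiLp.norm_sq_eq_of_L2] using
      pow_le_pow_left₀ (norm_nonneg _) (R.le_of_opNorm_le hR f) 2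
  have mean_sq_le : ((Fintype.card S : ℝ)⁻¹ * ∑ s, ‖R f s‖) ^ 2 ≤
      K ^ 2 * ((Fintype.card S : ℝ)⁻¹ * ∑ s, ‖f s‖ ^ 2) := by
    have := inv_card_mul_sum_rpow_le one_le_two fun s => norm_nonneg (R f s)
    simp only [Real.rpow_two] at this
    refine this.trans ?_
    rw [mul_left_comm]
    gcongr
  have jensen := inv_card_mul_sum_rpow_le (q := q / 2) (by linarith) fun s => sq_nonneg ‖f s‖
  simp only [rpow_half (norm_nonneg _)] at jensen
  calc ((Fintype.card S : ℝ)⁻¹ * ∑ s, ‖R f s‖) ^ q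
      = (((Fintype.card S : ℝ)⁻¹ * ∑ s, ‖R f s‖) ^ 2) ^ (q / 2) := (rpow_half (by positivity)).symm
    _ ≤ (K ^ 2 * ((Fintype.card S : ℝ)⁻¹ * ∑ s, ‖f s‖ ^ 2)) ^ (q / 2) := by gcongr
    _ = K ^ q * ((Fintype.card S : ℝ)⁻¹ * ∑ s, ‖f s‖ ^ 2) ^ (q / 2) := by
        rw [Real.mul_rpow (by positivity) (by positivity), rpow_half hK]
    _ ≤ K ^ q * ((Fintype.card S : ℝ)⁻¹ * ∑ s, ‖f s‖ ^ q) := by gcongr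

lemma exists_sum_norm_walshCoeff_singleton_rpow_le {p q : ℝ} (hp : 1 < p) (hq : 2 ≤ q)
    (htype : RademacherType X p) (hcotype : RademacherCotype X q) :
    ∃ K : ℝ, 0 < K ∧ ∀ (N : ℕ) (f : CubeL2 (Fin N) X),
      ∑ j, ‖walshCoeff {j} f‖ ^ q ≤ K ^ q * (((2 : ℝ) ^ N)⁻¹ * ∑ ε, ‖f ε‖ ^ q) := by
  obtain ⟨K, hK, proj_le⟩ := exists_norm_rademacherProj_le hp htype
  obtain ⟨C, hC, cotype_le⟩ := hcotype
  refine ⟨C * K, by positivity, fun N f => ?_⟩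
  set R := walshMultiplier (Fin N) X fun A => if A.card = 1 then 1 else 0
  have cotype_coeff : (∑ j, ‖walshCoeff {j} f‖ ^ q) ^ (1 / q) ≤
      C * (((2 : ℝ) ^ N)⁻¹ * ∑ ε, ‖R f ε‖) := by
    simp only [R, walshMultiplier_card_eq_one_apply]
    exact cotype_le N fun j => walshCoeff {j} f
  have mean_proj_le := inv_card_mul_sum_norm_rpow_le_of_opNorm_le hq (proj_le N) f
  simp only [Fintype.card_fun, Fintype.card_bool, Fintype.card_fin, Nat.cast_pow, Nat.cast_ofNat]
    at mean_proj_le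
  calc ∑ j, ‖walshCoeff {j} f‖ ^ q
      ≤ (C * (((2 : ℝ) ^ N)⁻¹ * ∑ ε, ‖R f ε‖)) ^ q := by
        rw [one_div] at cotype_coeff
        exact (Real.rpow_inv_le_iff_of_pos (by positivity) (by positivity) (by positivity)).1
          cotype_coeff
    _ = C ^ q * (((2 : ℝ) ^ N)⁻¹ * ∑ ε, ‖R f ε‖) ^ q := Real.mul_rpow hC.le (by positivity)
    _ ≤ C ^ q * (K ^ q * (((2 : ℝ) ^ N)⁻¹ * ∑ ε, ‖f ε‖ ^ q)) := by gcongr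
    _ = (C * K) ^ q * (((2 : ℝ) ^ N)⁻¹ * ∑ ε, ‖f ε‖ ^ q) := by
        rw [Real.mul_rpow hC.le hK.le, mul_assoc]

end TypeAndCotype

section TernaryCube

/-- The set `{-1, 0, 1} ^ n` of discrete directions in `ℤ ^ n`. -/
abbrev TernaryCube (n : ℕ) := Fin n → ({-1, 0, 1} : Finset ℤ)

instance (n : ℕ) : Nonempty (TernaryCube n) := ⟨fun _ => ⟨0, by simp⟩⟩

lemma card_ternaryCube (n : ℕ) : (Fintype.card (TernaryCube n) : ℝ) = 3 ^ n := by
  rw [Fintype.card_fun, Fintype.card_coe, Fintype.card_fin]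
  norm_cast

lemma norm_ternary_le_one (d : ({-1, 0, 1} : Finset ℤ)) : ‖((d : ℤ) : ℝ)‖ ≤ 1 := by
  have hd := d.2
  simp only [Finset.mem_insert, Finset.mem_singleton] at hd
  rcases hd with h | h | h <;> simp [h]

/-- The sign change `d ↦ -d` on `{-1, 0, 1}`. -/
def ternaryNeg (d : ({-1, 0, 1} : Finset ℤ)) : ({-1, 0, 1} : Finset ℤ) :=
  ⟨-d.1, by
    have hd := d.2
    simp only [Finset.mem_insert, Finset.mem_singleton] at hd ⊢
    omega⟩

lemma ternaryNeg_involutive : Function.Involutive ternaryNeg := fun d => by simp [ternaryNeg]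

variable {n : ℕ}

/-- The coordinatewise product of a sign vector `ε`, encoded by booleans as in `boolSign`, and a
vector `δ ∈ {-1, 0, 1} ^ n`. -/
def signAct (ε : Fin n → Bool) (δ : TernaryCube n) : TernaryCube n :=
  fun i => if ε i then δ i else ternaryNeg (δ i)

lemma signAct_involutive (ε : Fin n → Bool) : Function.Involutive (signAct ε) := fun δ => by
  funext i
  by_cases h : ε i <;> simp [signAct, h, ternaryNeg_involutive _]

lemma signAct_apply (ε : Fin n → Bool) (δ : TernaryCube n) (i : Fin n) :
    ((signAct ε δ i : ℤ) : ℝ) = (δ i : ℤ) * boolSign (ε i) := by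
  by_cases h : ε i <;> simp [signAct, ternaryNeg, h, boolSign_true, boolSign_false]

lemma sum_signAct {M : Type*} [AddCommMonoid M] (ε : Fin n → Bool) (φ : TernaryCube n → M) :
    ∑ δ, φ (signAct ε δ) = ∑ δ, φ δ :=
  Equiv.sum_comp (signAct_involutive ε).toPerm φ

variable {X : Type*} [NormedAddCommGroup X] [NormedSpace ℝ X]

lemma sum_smul_walshCoeff_signAct (G : TernaryCube n → X) (j : Fin n) :
    ∑ δ : TernaryCube n, ((δ j : ℤ) : ℝ) •
        walshCoeff {j} (WithLp.toLp 2 fun ε => G (signAct ε δ) : CubeL2 (Fin n) X) =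
      ∑ δ : TernaryCube n, ((δ j : ℤ) : ℝ) • G δ := by
  have sum_signed (ε : Fin n → Bool) :
      ∑ δ : TernaryCube n, ((δ j : ℤ) : ℝ) • boolSign (ε j) • G (signAct ε δ) =
        ∑ δ : TernaryCube n, ((δ j : ℤ) : ℝ) • G δ := by
    simp only [smul_smul, ← signAct_apply]
    exact sum_signAct ε fun δ => ((δ j : ℤ) : ℝ) • G δ
  simp only [walshCoeff_apply, walsh_singleton, smul_comm _ ((2 : ℝ) ^ _)⁻¹, ← Finset.smul_sum]
  simp only [Finset.smul_sum (s := (Finset.univ : Finset (Fin n → Bool)))]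
  rw [Finset.sum_comm]
  simp only [sum_signed]
  rw [Finset.sum_const, Finset.card_univ, ← Nat.cast_smul_eq_nsmul ℝ, smul_smul]
  simp

lemma norm_mean_smul_rpow_le {q : ℝ} (hq : 1 ≤ q) (G : TernaryCube n → X) (j : Fin n) :
    ‖((3 : ℝ) ^ n)⁻¹ • ∑ δ : TernaryCube n, ((δ j : ℤ) : ℝ) • G δ‖ ^ q ≤
      ((3 : ℝ) ^ n)⁻¹ * ∑ δ, ‖G δ‖ ^ q := by
  have jensen := inv_card_mul_sum_rpow_le hq fun δ => norm_nonneg (G δ)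
  rw [card_ternaryCube] at jensen
  refine le_trans (Real.rpow_le_rpow (norm_nonneg _) ?_ (by linarith)) jensen
  rw [norm_smul, Real.norm_of_nonneg (by positivity)]
  refine mul_le_mul_of_nonneg_left (norm_sum_le_of_le _ fun δ _ => ?_) (by positivity)
  rw [norm_smul]
  exact mul_le_of_le_one_left (norm_nonneg _) (norm_ternary_le_one _)

theorem exists_sum_norm_mean_smul_rpow_le {p q : ℝ} (hp : 1 < p) (hq : 2 ≤ q)
    (htype : RademacherType X p) (hcotype : RademacherCotype X q) :
    ∃ K : ℝ, 0 < K ∧ ∀ (n : ℕ) (G : TernaryCube n → X),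
      ∑ j, ‖((3 : ℝ) ^ n)⁻¹ • ∑ δ : TernaryCube n, ((δ j : ℤ) : ℝ) • G δ‖ ^ q ≤
        K ^ q * (((3 : ℝ) ^ n)⁻¹ * ∑ δ, ‖G δ‖ ^ q) := by
  obtain ⟨K, hK, coeff_le⟩ := exists_sum_norm_walshCoeff_singleton_rpow_le hp hq htype hcotype
  refine ⟨K, hK, fun n G => ?_⟩
  let orbit (δ : TernaryCube n) : CubeL2 (Fin n) X := WithLp.toLp 2 fun ε => G (signAct ε δ)
  calc ∑ j, ‖((3 : ℝ) ^ n)⁻¹ • ∑ δ : TernaryCube n, ((δ j : ℤ) : ℝ) • G δ‖ ^ q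
      ≤ ∑ j, ((3 : ℝ) ^ n)⁻¹ * ∑ δ, ‖walshCoeff {j} (orbit δ)‖ ^ q := by
        refine Finset.sum_le_sum fun j _ => ?_
        rw [← sum_smul_walshCoeff_signAct]
        exact norm_mean_smul_rpow_le (by linarith) _ j
    _ = ((3 : ℝ) ^ n)⁻¹ * ∑ δ, ∑ j, ‖walshCoeff {j} (orbit δ)‖ ^ q := by
        rw [← Finset.mul_sum, Finset.sum_comm]
    _ ≤ ((3 : ℝ) ^ n)⁻¹ *
          ∑ δ : TernaryCube n, K ^ q * (((2 : ℝ) ^ n)⁻¹ * ∑ ε, ‖G (signAct ε δ)‖ ^ q) := by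
        refine mul_le_mul_of_nonneg_left (Finset.sum_le_sum fun δ _ => ?_) (by positivity)
        exact coeff_le n (orbit δ)
    _ = K ^ q * (((3 : ℝ) ^ n)⁻¹ * (((2 : ℝ) ^ n)⁻¹ *
          ∑ ε : Fin n → Bool, ∑ δ : TernaryCube n, ‖G (signAct ε δ)‖ ^ q)) := by
        rw [← Finset.mul_sum, ← Finset.mul_sum, Finset.sum_comm]
        ring
    _ = K ^ q * (((3 : ℝ) ^ n)⁻¹ * ∑ δ, ‖G δ‖ ^ q) := by
        simp only [sum_signAct _ fun δ => ‖G δ‖ ^ q]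
        simp

end TernaryCube

section Torus

/-- The element `0` of `{-1, 0, 1}`. -/
def ternaryZero : ({-1, 0, 1} : Finset ℤ) := ⟨0, by simp⟩

/-- The element `1` of `{-1, 0, 1}`. -/
def ternaryOne : ({-1, 0, 1} : Finset ℤ) := ⟨1, by simp⟩

lemma sum_ternary {M : Type*} [AddCommMonoid M] (φ : ({-1, 0, 1} : Finset ℤ) → M) :
    ∑ d, φ d = φ (ternaryNeg ternaryOne) + (φ ternaryZero + φ ternaryOne) := by
  have univ_eq : (Finset.univ : Finset ({-1, 0, 1} : Finset ℤ)) =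
      {ternaryNeg ternaryOne, ternaryZero, ternaryOne} := by decide
  rw [univ_eq, Finset.sum_insert (by decide), Finset.sum_insert (by decide), Finset.sum_singleton]

lemma sum_sum_update {ι α M : Type*} [Fintype ι] [DecidableEq ι] [Fintype α] [AddCommMonoid M]
    (j : ι) (φ : (ι → α) → M) :
    ∑ δ : ι → α, ∑ d, φ (Function.update δ j d) = Fintype.card α • ∑ δ, φ δ := by
  have swap_involutive : Function.Involutive
      fun z : (ι → α) × α => (Function.update z.1 j z.2, z.1 j) := by
    rintro ⟨δ, d⟩
    simp
  have sum_swap := Equiv.sum_comp swap_involutive.toPerm fun z => φ z.1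
  simp only [Function.Involutive.coe_toPerm, Fintype.sum_prod_type, Finset.sum_const,
    Finset.card_univ, ← Finset.smul_sum] at sum_swap
  exact sum_swap

lemma sum_sum_update_ternary {n : ℕ} {E : Type*} [AddCommGroup E] [Module ℝ E] (j : Fin n)
    (φ : TernaryCube n → E) :
    ∑ δ : TernaryCube n, ∑ d, φ (Function.update δ j d) = (3 : ℝ) • ∑ δ, φ δ := by
  rw [sum_sum_update, ← Nat.cast_smul_eq_nsmul ℝ]
  rfl

variable {n : ℕ}

/-- The class of `δ ∈ {-1, 0, 1} ^ n` in the discrete torus `(ℤ / m) ^ n`. -/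
def toTorus (m : ℕ) (δ : TernaryCube n) : Fin n → ZMod m := fun i => ((δ i : ℤ) : ZMod m)

variable {m : ℕ}

lemma toTorus_update (δ : TernaryCube n) (j : Fin n) (d : ({-1, 0, 1} : Finset ℤ)) :
    toTorus m (Function.update δ j d) =
      toTorus m (Function.update δ j ternaryZero) + Pi.single j ((d : ℤ) : ZMod m) := by
  funext i
  by_cases h : i = j
  · subst h
    simp [toTorus, ternaryZero]
  · simp [toTorus, h]

variable {X : Type*} [NormedAddCommGroup X]

/-- The mean over `δ ∈ {-1, 0, 1} ^ n` of the `q`-th power sums of the increments of `f` in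
direction `δ`: the right-hand side of the metric cotype inequality without the factor
`(C m) ^ q`. -/
noncomputable def edgeEnergy (q : ℝ) [NeZero m] (f : (Fin n → ZMod m) → X) : ℝ :=
  ((3 : ℝ) ^ n)⁻¹ * ∑ δ : TernaryCube n, ∑ x, ‖f (x + toTorus m δ) - f x‖ ^ q

lemma edgeEnergy_nonneg (q : ℝ) [NeZero m] (f : (Fin n → ZMod m) → X) : 0 ≤ edgeEnergy q f := by
  unfold edgeEnergy
  positivity

variable [NormedSpace ℝ X]

/-- The average of `f (x + δ)` over those `δ ∈ {-1, 0, 1} ^ n` with `δ j = 0`, written as an average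
over all `δ` with the `j`-th coordinate reset to `0`. -/
noncomputable def transverseMean (f : (Fin n → ZMod m) → X) (j : Fin n) (x : Fin n → ZMod m) : X :=
  ((3 : ℝ) ^ n)⁻¹ • ∑ δ : TernaryCube n, f (x + toTorus m (Function.update δ j ternaryZero))

/-- The average over `δ ∈ {-1, 0, 1} ^ n` of the increment of `f` in direction `δ`, weighted by
`δ j`: a smoothed `j`-th partial derivative. -/
noncomputable def meanDeriv (f : (Fin n → ZMod m) → X) (j : Fin n) (x : Fin n → ZMod m) : X :=
  ((3 : ℝ) ^ n)⁻¹ • ∑ δ : TernaryCube n, ((δ j : ℤ) : ℝ) • (f (x + toTorus m δ) - f x)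

lemma three_smul_meanDeriv (f : (Fin n → ZMod m) → X) (j : Fin n) (x : Fin n → ZMod m) :
    (3 : ℝ) • meanDeriv f j x =
      transverseMean f j (x + Pi.single j 1) - transverseMean f j (x - Pi.single j 1) := by
  rw [meanDeriv, smul_comm, ← sum_sum_update_ternary j, transverseMean, transverseMean,
    ← smul_sub, ← Finset.sum_sub_distrib]
  congr 1
  refine Finset.sum_congr rfl fun δ _ => ?_
  rw [sum_ternary, toTorus_update δ j ternaryOne, toTorus_update δ j (ternaryNeg ternaryOne),
    add_right_comm x, sub_add_eq_add_sub x, sub_eq_add_neg (x + _), add_assoc x, add_assoc x]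
  simp [Pi.single_neg, ternaryNeg, ternaryOne, ternaryZero]

lemma transverseMean_sub_self (f : (Fin n → ZMod m) → X) (j : Fin n) (x : Fin n → ZMod m) :
    transverseMean f j x - f x = ((3 : ℝ) ^ n)⁻¹ •
      ∑ δ : TernaryCube n, (f (x + toTorus m (Function.update δ j ternaryZero)) - f x) := by
  rw [Finset.sum_sub_distrib, smul_sub, transverseMean, Finset.sum_const, Finset.card_univ,
    ← Nat.cast_smul_eq_nsmul ℝ, card_ternaryCube, inv_smul_smul₀ (by positivity)]

lemma transverseMean_add_sub (f : (Fin n → ZMod m) → X) (j : Fin n) (l : ℕ)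
    (x : Fin n → ZMod m) :
    transverseMean f j (x + (2 * l) • Pi.single j 1) - transverseMean f j x =
      ∑ i ∈ Finset.range l, (3 : ℝ) • meanDeriv f j (x + (2 * i + 1) • Pi.single j 1) := by
  have telescope := Finset.sum_range_sub
    (fun i : ℕ => transverseMean f j (x + (2 * i) • Pi.single j 1)) l
  rw [mul_zero, zero_smul, add_zero] at telescope
  rw [← telescope]
  refine Finset.sum_congr rfl fun i _ => ?_
  rw [three_smul_meanDeriv]
  congr 2 <;> module

lemma norm_transverseMean_sub_self_rpow_le {q : ℝ} (hq : 1 ≤ q) (f : (Fin n → ZMod m) → X)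
    (j : Fin n) (x : Fin n → ZMod m) :
    ‖transverseMean f j x - f x‖ ^ q ≤
      ((3 : ℝ) ^ n)⁻¹ * (3 * ∑ δ : TernaryCube n, ‖f (x + toTorus m δ) - f x‖ ^ q) := by
  set increment := fun δ : TernaryCube n => ‖f (x + toTorus m δ) - f x‖
  have jensen := inv_card_mul_sum_rpow_le hq
    (z := fun δ => increment (Function.update δ j ternaryZero)) fun _ => norm_nonneg _
  rw [card_ternaryCube] at jensen
  have norm_le : ‖transverseMean f j x - f x‖ ≤
      ((3 : ℝ) ^ n)⁻¹ * ∑ δ, increment (Function.update δ j ternaryZero) := by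
    rw [transverseMean_sub_self, norm_smul, Real.norm_of_nonneg (by positivity)]
    exact mul_le_mul_of_nonneg_left (norm_sum_le _ _) (by positivity)
  refine (Real.rpow_le_rpow (norm_nonneg _) norm_le (by linarith)).trans (jensen.trans ?_)
  refine mul_le_mul_of_nonneg_left ?_ (by positivity)
  rw [← smul_eq_mul, ← sum_sum_update_ternary j fun δ => increment δ ^ q]
  exact Finset.sum_le_sum fun δ _ => Finset.single_le_sum
    (f := fun d => increment (Function.update δ j d) ^ q) (fun _ _ => by positivity)
    (Finset.mem_univ ternaryZero)

lemma norm_transverseMean_add_sub_rpow_le {q : ℝ} (hq : 1 ≤ q) (f : (Fin n → ZMod m) → X)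
    (j : Fin n) (l : ℕ) (x : Fin n → ZMod m) :
    ‖transverseMean f j (x + (2 * l) • Pi.single j 1) - transverseMean f j x‖ ^ q ≤
      (l : ℝ) ^ (q - 1) *
        ∑ i ∈ Finset.range l, 3 ^ q * ‖meanDeriv f j (x + (2 * i + 1) • Pi.single j 1)‖ ^ q := by
  have power_mean := Real.rpow_sum_le_const_mul_sum_rpow_of_nonneg (Finset.range l)
    (f := fun i => 3 * ‖meanDeriv f j (x + (2 * i + 1) • Pi.single j 1)‖) hq
    fun _ _ => by positivity
  simp only [Finset.card_range, Real.mul_rpow zero_le_three (norm_nonneg _)] at power_mean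
  refine (Real.rpow_le_rpow (norm_nonneg _) ?_ (by linarith)).trans power_mean
  rw [transverseMean_add_sub]
  exact norm_sum_le_of_le _ fun i _ => by simp [norm_smul]

lemma norm_add_three_rpow_le {q : ℝ} (hq : 1 ≤ q) {E : Type*} [SeminormedAddCommGroup E]
    (a b c : E) : ‖a + b + c‖ ^ q ≤ 3 ^ (q - 1) * (‖a‖ ^ q + ‖b‖ ^ q + ‖c‖ ^ q) := by
  have power_mean := Real.rpow_sum_le_const_mul_sum_rpow_of_nonneg (Finset.univ : Finset (Fin 3))
    (f := ![‖a‖, ‖b‖, ‖c‖]) hq fun i _ => by fin_cases i <;> simp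
  refine (Real.rpow_le_rpow (norm_nonneg _) norm_add₃_le (by linarith)).trans ?_
  simpa [Fin.sum_univ_three] using power_mean

variable [NeZero m]

lemma sum_norm_transverseMean_sub_self_rpow_le {q : ℝ} (hq : 1 ≤ q) (f : (Fin n → ZMod m) → X)
    (j : Fin n) : ∑ x, ‖transverseMean f j x - f x‖ ^ q ≤ 3 * edgeEnergy q f := by
  refine (Finset.sum_le_sum fun x _ =>
    norm_transverseMean_sub_self_rpow_le hq f j x).trans_eq ?_
  rw [← Finset.mul_sum, ← Finset.mul_sum, Finset.sum_comm, edgeEnergy, mul_left_comm]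

lemma sum_norm_transverseMean_add_sub_rpow_le {q : ℝ} (hq : 1 ≤ q) (f : (Fin n → ZMod m) → X)
    (j : Fin n) {l : ℕ} (hl : 0 < l) :
    ∑ x, ‖transverseMean f j (x + (2 * l) • Pi.single j 1) - transverseMean f j x‖ ^ q ≤
      (l : ℝ) ^ q * (3 ^ q * ∑ x, ‖meanDeriv f j x‖ ^ q) := by
  have sum_shift (v : Fin n → ZMod m) :
      ∑ x, 3 ^ q * ‖meanDeriv f j (x + v)‖ ^ q = 3 ^ q * ∑ x, ‖meanDeriv f j x‖ ^ q := by
    rw [← Finset.mul_sum]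
    exact congrArg _ (Equiv.sum_comp (Equiv.addRight v) fun x => ‖meanDeriv f j x‖ ^ q)
  refine (Finset.sum_le_sum fun x _ =>
    norm_transverseMean_add_sub_rpow_le hq f j l x).trans_eq ?_
  rw [← Finset.mul_sum, Finset.sum_comm]
  simp only [sum_shift, Finset.sum_const, Finset.card_range, nsmul_eq_mul]
  rw [← mul_assoc, ← Real.rpow_add_one (by positivity), sub_add_cancel]

lemma sum_norm_add_sub_rpow_le {q : ℝ} (hq : 1 ≤ q) (f : (Fin n → ZMod m) → X)
    (j : Fin n) {l : ℕ} (hl : 0 < l) :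
    ∑ x, ‖f (x + (2 * l) • Pi.single j 1) - f x‖ ^ q ≤
      3 ^ (q - 1) * (6 * edgeEnergy q f + (l : ℝ) ^ q * (3 ^ q * ∑ x, ‖meanDeriv f j x‖ ^ q)) := by
  set H := transverseMean f j
  set v : Fin n → ZMod m := (2 * l) • Pi.single j 1
  have smoothing_le := sum_norm_transverseMean_sub_self_rpow_le hq f j
  have telescoping_le := sum_norm_transverseMean_add_sub_rpow_le hq f j hl
  have sum_shift : ∑ x, ‖f (x + v) - H (x + v)‖ ^ q = ∑ x, ‖H x - f x‖ ^ q := by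
    simp only [norm_sub_rev (f _)]
    exact Equiv.sum_comp (Equiv.addRight v) fun x => ‖H x - f x‖ ^ q
  calc ∑ x, ‖f (x + v) - f x‖ ^ q
      ≤ ∑ x, 3 ^ (q - 1) *
          (‖f (x + v) - H (x + v)‖ ^ q + ‖H (x + v) - H x‖ ^ q + ‖H x - f x‖ ^ q) := by
        refine Finset.sum_le_sum fun x _ => ?_
        simpa using norm_add_three_rpow_le hq (f (x + v) - H (x + v)) (H (x + v) - H x) (H x - f x)
    _ = 3 ^ (q - 1) * (∑ x, ‖H x - f x‖ ^ q + ∑ x, ‖H (x + v) - H x‖ ^ q +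
          ∑ x, ‖H x - f x‖ ^ q) := by
        rw [← Finset.mul_sum, Finset.sum_add_distrib, Finset.sum_add_distrib, sum_shift]
    _ ≤ 3 ^ (q - 1) *
          (6 * edgeEnergy q f + (l : ℝ) ^ q * (3 ^ q * ∑ x, ‖meanDeriv f j x‖ ^ q)) := by
        refine mul_le_mul_of_nonneg_left ?_ (by positivity)
        linarith

lemma sum_sum_norm_add_sub_rpow_le {q K : ℝ} (hq : 1 ≤ q)
    (f : (Fin n → ZMod m) → X)
    (hf : ∑ j, ∑ x, ‖meanDeriv f j x‖ ^ q ≤ K ^ q * edgeEnergy q f) (hK : 0 ≤ K)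
    {l : ℕ} (hl : 0 < l) :
    ∑ j, ∑ x, ‖f (x + (2 * l) • Pi.single j 1) - f x‖ ^ q ≤
      3 ^ (q - 1) * (6 * n + (l : ℝ) ^ q * (3 * K) ^ q) * edgeEnergy q f :=
  calc ∑ j, ∑ x, ‖f (x + (2 * l) • Pi.single j 1) - f x‖ ^ q
      ≤ ∑ j, 3 ^ (q - 1) *
          (6 * edgeEnergy q f + (l : ℝ) ^ q * (3 ^ q * ∑ x, ‖meanDeriv f j x‖ ^ q)) :=
        Finset.sum_le_sum fun j _ => sum_norm_add_sub_rpow_le hq f j hl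
    _ = 3 ^ (q - 1) * (6 * (n * edgeEnergy q f) +
          (l : ℝ) ^ q * (3 ^ q * ∑ j, ∑ x, ‖meanDeriv f j x‖ ^ q)) := by
        simp only [← Finset.mul_sum, Finset.sum_add_distrib, Finset.sum_const, Finset.card_univ,
          Fintype.card_fin, nsmul_eq_mul]
    _ ≤ 3 ^ (q - 1) * (6 * (n * edgeEnergy q f) +
          (l : ℝ) ^ q * (3 ^ q * (K ^ q * edgeEnergy q f))) := by gcongr
    _ = 3 ^ (q - 1) * (6 * n + (l : ℝ) ^ q * (3 * K) ^ q) * edgeEnergy q f := by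
        rw [Real.mul_rpow zero_le_three hK]
        ring

lemma rpow_mul_six_mul_add_le {q K N l : ℝ} (hq : 1 ≤ q) (hK : 0 ≤ K) (hl : 0 ≤ l)
    (hN : N ≤ l ^ q) :
    3 ^ (q - 1) * (6 * N + l ^ q * (3 * K) ^ q) ≤ (3 * (6 + 3 * K) * l) ^ q := by
  have six_add_le : (6 : ℝ) + (3 * K) ^ q ≤ (6 + 3 * K) ^ q :=
    calc (6 : ℝ) + (3 * K) ^ q ≤ 6 ^ q + (3 * K) ^ q := by
          gcongr
          exact Real.self_le_rpow_of_one_le (by norm_num) hq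
      _ ≤ (6 + 3 * K) ^ q := Real.add_rpow_le_rpow_add (by norm_num) (by positivity) hq
  calc 3 ^ (q - 1) * (6 * N + l ^ q * (3 * K) ^ q)
      ≤ 3 ^ (q - 1) * (6 * l ^ q + l ^ q * (3 * K) ^ q) := by gcongr
    _ ≤ 3 ^ q * (6 * l ^ q + l ^ q * (3 * K) ^ q) := by
        gcongr
        · norm_num
        · linarith
    _ = 3 ^ q * (6 + (3 * K) ^ q) * l ^ q := by ring
    _ ≤ 3 ^ q * (6 + 3 * K) ^ q * l ^ q := by gcongr
    _ = (3 * (6 + 3 * K) * l) ^ q := by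
        rw [← Real.mul_rpow zero_le_three (by positivity), ← Real.mul_rpow (by positivity) hl]

theorem exists_sum_norm_add_sub_rpow_le_edgeEnergy (X : Type*) [NormedAddCommGroup X]
    [NormedSpace ℝ X] {p q : ℝ} (hp : 1 < p) (hq : 2 ≤ q)
    (htype : RademacherType X p) (hcotype : RademacherCotype X q) :
    ∃ C : ℝ, 0 < C ∧ ∀ (n m l : ℕ) [NeZero m] (f : (Fin n → ZMod m) → X), 0 < l →
      (n : ℝ) ≤ (l : ℝ) ^ q →
        ∑ j, ∑ x, ‖f (x + (2 * l) • Pi.single j 1) - f x‖ ^ q ≤ (C * l) ^ q * edgeEnergy q f := by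
  obtain ⟨K, hK, mean_le⟩ := exists_sum_norm_mean_smul_rpow_le hp hq htype hcotype
  refine ⟨3 * (6 + 3 * K), by positivity, fun n m l _ f hl hn => ?_⟩
  have meanDeriv_le : ∑ j, ∑ x, ‖meanDeriv f j x‖ ^ q ≤ K ^ q * edgeEnergy q f := by
    rw [Finset.sum_comm]
    refine (Finset.sum_le_sum fun x _ =>
      mean_le n fun δ => f (x + toTorus m δ) - f x).trans_eq ?_
    rw [← Finset.mul_sum, ← Finset.mul_sum, Finset.sum_comm, edgeEnergy]
  exact (sum_sum_norm_add_sub_rpow_le (by linarith) f meanDeriv_le hK.le hl).trans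
    (mul_le_mul_of_nonneg_right (rpow_mul_six_mul_add_le (by linarith) hK.le (by positivity) hn)
      (edgeEnergy_nonneg q f))

lemma ite_eq_nsmul_single {α : Type*} {n : ℕ} [NonAssocSemiring α] (k : ℕ) (j : Fin n) :
    (fun i => if i = j then (k : α) else 0) = k • Pi.single j 1 := by
  funext i
  simp [Pi.single_apply]

end Torus

theorem metric_cotype_with_sharp_m_general (X : Type*) [NormedAddCommGroup X] [NormedSpace ℝ X]
    (p q : ℝ) (hp : 1 < p) (hq : 2 ≤ q)
    (htype : RademacherType X p) (hcotype : RademacherCotype X q) :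
    ∃ κ C : ℝ, 0 < κ ∧ 0 < C ∧ ∀ n : ℕ, 0 < n → ∃ m : ℕ, ∃ hm : m ≠ 0, Even m ∧
      (m : ℝ) ≤ κ * (n : ℝ) ^ (1 / q) ∧
      (haveI : NeZero m := ⟨hm⟩
       ∀ f : (Fin n → ZMod m) → X,
        (∑ j : Fin n, ∑ x : Fin n → ZMod m,
            ‖f (x + fun i => if i = j then ((m / 2 : ℕ) : ZMod m) else 0) - f x‖ ^ q) ≤
          (C * m) ^ q / 3 ^ n *
            ∑ ε : Fin n → ({-1, 0, 1} : Finset ℤ), ∑ x : Fin n → ZMod m,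
              ‖f (x + fun i => ((ε i : ℤ) : ZMod m)) - f x‖ ^ q) := by
  obtain ⟨C, hC, half_turn_le⟩ :=
    exists_sum_norm_add_sub_rpow_le_edgeEnergy X hp hq htype hcotype
  refine ⟨8, C / 4, by norm_num, by positivity, fun n hn => ?_⟩
  set r := (n : ℝ) ^ (1 / q)
  set l := ⌈r⌉₊
  have one_le_r : 1 ≤ r := Real.one_le_rpow (by exact_mod_cast hn) (by positivity)
  have l_pos : 0 < l := Nat.ceil_pos.2 (by linarith)
  have l_lt : (l : ℝ) < r + 1 := Nat.ceil_lt_add_one (by linarith)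
  have n_le : (n : ℝ) ≤ (l : ℝ) ^ q := by
    rw [← Real.rpow_inv_le_iff_of_pos (by positivity) (by positivity) (by linarith), ← one_div]
    exact Nat.le_ceil r
  refine ⟨4 * l, by omega, ⟨2 * l, by ring⟩, by push_cast; linarith, ?_⟩
  have : NeZero (4 * l) := ⟨by omega⟩
  intro f
  have half : 4 * l / 2 = 2 * l := by omega
  have scale : C / 4 * ((4 * l : ℕ) : ℝ) = C * l := by push_cast; ring
  simp only [ite_eq_nsmul_single, half, scale]
  rw [div_eq_mul_inv, mul_assoc]
  exact half_turn_le n (4 * l) l f l_pos n_le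

/-- If a Banach space `X` has Rademacher cotype `q < ∞` and Rademacher type `p > 1`, then the
metric cotype `q` inequality holds with `m ≤ κ n^{1/q}`, where `κ, C` depend only on `X`. -/
theorem metric_cotype_with_sharp_m (X : Type*) [NormedAddCommGroup X] [NormedSpace ℝ X]
    [CompleteSpace X] (p q : ℝ) (hp : 1 < p) (hq : 2 ≤ q)
    (htype : RademacherType X p) (hcotype : RademacherCotype X q) :
    ∃ κ C : ℝ, 0 < κ ∧ 0 < C ∧ ∀ n : ℕ, 0 < n → ∃ m : ℕ, ∃ hm : m ≠ 0, Even m ∧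
      (m : ℝ) ≤ κ * (n : ℝ) ^ (1 / q) ∧
      (haveI : NeZero m := ⟨hm⟩
       ∀ f : (Fin n → ZMod m) → X,
        (∑ j : Fin n, ∑ x : Fin n → ZMod m,
            ‖f (x + fun i => if i = j then ((m / 2 : ℕ) : ZMod m) else 0) - f x‖ ^ q) ≤
          (C * m) ^ q / 3 ^ n *
            ∑ ε : Fin n → ({-1, 0, 1} : Finset ℤ), ∑ x : Fin n → ZMod m,
              ‖f (x + fun i => ((ε i : ℤ) : ZMod m)) - f x‖ ^ q) :=
  metric_cotype_with_sharp_m_general X p q hp hq htype hcotype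
end

section
/- Fix p,q ∈ [1,∞). The Banach space L_p[0,1] is uniformly homeomorphic to a subset of L_q[0,1] — i.e., there exists an injection f : L_p[0,1] → L_q[0,1] such that f is uniformly continuous and its inverse, defined on the image f(L_p[0,1]), is uniformly continuous — if and only if p ≤ q or both p,q ∈ [1,2]. -/
open MeasureTheory

/-!
**Embeddings.** For `p < q`, translates of the truncated power `t₊ ^ s` with `s q + 1 = p` satisfy
`∫ |(t - a)₊ ^ s - (t - b)₊ ^ s| ^ q dt = C |a - b| ^ p`, so applying `a ↦ (t - a)₊ ^ s - t₊ ^ s`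
to the values of `f ∈ L_p(μ)` gives a map into `L_q(μ × ℝ)` that turns the distance `d` into a
multiple of `d ^ (p / q)`. For `q ≤ 2`, independent Gaussian variables embed `L_2` linearly in
`L_q`; hence `L_p` embeds in `L_q` through `L_2` whenever `p, q ≤ 2`. All measure spaces involved
are transported to `[0, 1]`.

**Obstruction** (Mendel and Naor). Suppose `max q 2 < p`. After the embedding of `L_q` in `L_2`
when `q < 2`, assume `q ≥ 2`. The discrete torus `(ℤ/4k)^n` sits in `L_p` with all diagonal steps
of length `O(n ^ (1 / p) / k)` and with antipodes `2k eⱼ` at distance at least `1`. In `L_q` the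
Rademacher coefficients satisfy Bessel's inequality with exponent `q`. Applied to a map of the torus
averaged over the diagonal steps in all directions but one, it shows that if diagonal steps are
short in the image, then on average so are the moves to the antipodes, as soon as `k` is of order
`n ^ (1 / q)`. Since `n ^ (1 / p - 1 / q) → 0`, uniform continuity makes diagonal steps short,
while uniform continuity of the inverse keeps the antipodes apart.
-/

namespace LpUniformEmbedding

open Filter Set Topology
open scoped ENNReal NNReal Uniformity

section UniformEmbedding

theorem uniformContinuousOn_range_iff_comap_uniformity_le {X Y : Type*} [UniformSpace X]
    [UniformSpace Y] {f : X → Y} {g : Y → X} (hgf : Function.LeftInverse g f) :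
    UniformContinuousOn g (range f) ↔ comap (Prod.map f f) (𝓤 Y) ≤ 𝓤 X := by
  have hid : Prod.map g g ∘ Prod.map f f = id := by
    rw [Prod.map_comp_map, hgf.comp_eq_id, Prod.map_id]
  change map (Prod.map g g) _ ≤ _ ↔ _
  rw [← range_prodMap, ← map_comap, map_map, hid, map_id]

theorem exists_uniformContinuousOn_leftInverse_iff_isUniformEmbedding {X Y : Type*} [UniformSpace X]
    [Nonempty X] [UniformSpace Y] {f : X → Y} :
    (Function.Injective f ∧ UniformContinuous f ∧
      ∃ g : Y → X, Function.LeftInverse g f ∧ UniformContinuousOn g (range f)) ↔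
    IsUniformEmbedding f := by
  rw [isUniformEmbedding_iff, isUniformInducing_iff']
  constructor
  · rintro ⟨hinj, hf, g, hgf, hg⟩
    exact ⟨⟨hf, (uniformContinuousOn_range_iff_comap_uniformity_le hgf).1 hg⟩, hinj⟩
  · rintro ⟨⟨hf, hcomap⟩, hinj⟩
    have hgf := Function.leftInverse_invFun hinj
    exact ⟨hinj, hf, _, hgf, (uniformContinuousOn_range_iff_comap_uniformity_le hgf).2 hcomap⟩

theorem isUniformEmbedding_of_edist_eq_mul_rpow {X Y : Type*} [EMetricSpace X]
    [PseudoEMetricSpace Y] {f : X → Y} {C : ℝ≥0∞} {α : ℝ} (hC₀ : C ≠ 0) (hC : C ≠ ∞) (hα : 0 < α)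
    (hf : ∀ x y, edist (f x) (f y) = C * edist x y ^ α) : IsUniformEmbedding f := by
  have hlt {x y : X} {δ : ℝ≥0∞} : edist (f x) (f y) < C * δ ^ α ↔ edist x y < δ := by
    rw [hf, ENNReal.mul_lt_mul_iff_right hC₀ hC, ENNReal.rpow_lt_rpow_iff hα]
  refine EMetric.isUniformEmbedding_iff'.2 ⟨fun ε hε => ?_, fun δ hδ => ?_⟩
  · have hε_eq : C * ((ε / C) ^ α⁻¹) ^ α = ε := by
      rw [ENNReal.rpow_inv_rpow hα.ne', ENNReal.mul_div_cancel hC₀ hC]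
    have hε_pos : 0 < (ε / C) ^ α⁻¹ := by
      simp [pos_iff_ne_zero, hα.not_gt, hε.ne', hC]
    exact ⟨_, hε_pos, fun hxy => hε_eq ▸ hlt.2 hxy⟩
  · have hδ_pos : 0 < C * δ ^ α := by
      simp [pos_iff_ne_zero, hC₀, hδ.ne', hα.not_gt]
    exact ⟨_, hδ_pos, hlt.1⟩

end UniformEmbedding

section UnitInterval

/-- Lebesgue measure on `[0, 1]`, as a probability measure on `ℝ`. -/
noncomputable abbrev lebesgueUnit : Measure ℝ := volume.restrict (Icc (0 : ℝ) 1)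

instance : IsProbabilityMeasure lebesgueUnit := ⟨by simp⟩

theorem measurePreserving_projIcc_lebesgueUnit :
    MeasurePreserving (projIcc (0 : ℝ) 1 zero_le_one) lebesgueUnit volume := by
  refine ⟨continuous_projIcc.measurable, ?_⟩
  have hcoe : Measure.map (↑) (volume : Measure unitInterval) = lebesgueUnit :=
    unitInterval.measurePreserving_coe.map_eq
  rw [← hcoe, Measure.map_map continuous_projIcc.measurable measurable_subtype_coe]
  have hproj : projIcc (0 : ℝ) 1 zero_le_one ∘ ((↑) : unitInterval → ℝ) = id :=
    funext (projIcc_val _)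
  rw [hproj, Measure.map_id]

variable {X : Type*} [MeasurableSpace X]

theorem exists_measurePreserving_lebesgueUnit [StandardBorelSpace X] (μ : Measure X)
    [IsProbabilityMeasure μ] : ∃ φ : ℝ → X, MeasurePreserving φ lebesgueUnit μ := by
  have := nonempty_of_isProbabilityMeasure μ
  obtain ⟨φ, hφ, hmap⟩ := Measure.exists_measurable_map_eq μ
  exact ⟨_, MeasurePreserving.comp ⟨hφ, hmap⟩ measurePreserving_projIcc_lebesgueUnit⟩

theorem eLpNorm_withDensity {P : Measure X} {ρ : X → ℝ≥0∞} (hρ : AEMeasurable ρ P)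
    (hρ_top : ∀ᵐ x ∂P, ρ x < ∞) {q : ℝ≥0∞} (hq₀ : q ≠ 0) (hq : q ≠ ∞) (f : X → ℝ) :
    eLpNorm f q (P.withDensity ρ) = eLpNorm (fun x => (ρ x).toReal ^ q.toReal⁻¹ * f x) q P := by
  have hq_pos := ENNReal.toReal_pos hq₀ hq
  simp only [eLpNorm_eq_lintegral_rpow_enorm_toReal hq₀ hq]
  rw [lintegral_withDensity_eq_lintegral_mul_non_measurable₀ _ hρ hρ_top]
  congr 1
  refine lintegral_congr_ae (hρ_top.mono fun x hx => ?_)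
  simp only [Pi.mul_apply]
  rw [enorm_mul, ENNReal.mul_rpow_of_nonneg _ _ hq_pos.le, Real.enorm_rpow_of_nonneg
    ENNReal.toReal_nonneg (inv_nonneg.2 hq_pos.le), ENNReal.rpow_inv_rpow hq_pos.ne',
    Real.enorm_eq_ofReal ENNReal.toReal_nonneg, ENNReal.ofReal_toReal hx.ne]

theorem exists_isometry_Lp_withDensity {P : Measure X} {ρ : X → ℝ≥0∞} (hρ : Measurable ρ)
    (hρ_top : ∀ᵐ x ∂P, ρ x < ∞) {q : ℝ≥0∞} [Fact (1 ≤ q)] (hq : q ≠ ∞) :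
    ∃ J : Lp ℝ q (P.withDensity ρ) → Lp ℝ q P, Isometry J := by
  have hq₀ : q ≠ 0 := (zero_lt_one.trans_le Fact.out).ne'
  let weighted (f : X → ℝ) (x : X) : ℝ := (ρ x).toReal ^ q.toReal⁻¹ * f x
  have hmem (f : Lp ℝ q (P.withDensity ρ)) : MemLp (weighted f) q P := by
    refine ⟨?_, ?_⟩
    · exact ((hρ.ennreal_toReal.pow_const _).mul
        (Lp.stronglyMeasurable f).measurable).aestronglyMeasurable
    · rw [← eLpNorm_withDensity hρ.aemeasurable hρ_top hq₀ hq]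
      exact Lp.eLpNorm_lt_top f
  refine ⟨fun f => (hmem f).toLp, fun f g => ?_⟩
  have hsub : weighted f - weighted g = weighted (f - g) :=
    funext fun x => (mul_sub _ (f x) (g x)).symm
  rw [Lp.edist_toLp_toLp, hsub, ← eLpNorm_withDensity hρ.aemeasurable hρ_top hq₀ hq, Lp.edist_def]

theorem exists_isometry_Lp_lebesgueUnit [StandardBorelSpace X] (μ : Measure X) [SigmaFinite μ]
    {q : ℝ≥0∞} [Fact (1 ≤ q)] (hq : q ≠ ∞) :
    ∃ J : Lp ℝ q μ → Lp ℝ q lebesgueUnit, Isometry J := by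
  rcases eq_zero_or_neZero μ with rfl | _
  · have : Subsingleton (Lp ℝ q (0 : Measure X)) :=
      ⟨fun f g => Lp.ext (by simp [Filter.EventuallyEq])⟩
    exact ⟨0, isometry_subsingleton⟩
  have hμ : μ.toFinite.withDensity (μ.rnDeriv μ.toFinite) = μ :=
    Measure.withDensity_rnDeriv_eq _ _ (absolutelyContinuous_toFinite μ)
  have hJ := exists_isometry_Lp_withDensity (Measure.measurable_rnDeriv μ μ.toFinite)
    (Measure.rnDeriv_lt_top _ _) hq
  rw [hμ] at hJ
  obtain ⟨J, hJ⟩ := hJ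
  obtain ⟨φ, hφ⟩ := exists_measurePreserving_lebesgueUnit μ.toFinite
  exact ⟨_, (Lp.isometry_compMeasurePreserving (E := ℝ) (p := q) hφ).comp hJ⟩

end UnitInterval

section TruncPow

/-- The truncated power `t₊ ^ s`, the kernel in the Mandelbrot–Van Ness representation of
fractional Brownian motion. It vanishes on `(-∞, 0]` even for `s = 0`, where it is the indicator
of `(0, ∞)`. -/
noncomputable def truncPow (s t : ℝ) : ℝ := if 0 < t then t ^ s else 0

variable {s : ℝ}

theorem truncPow_of_pos {t : ℝ} (ht : 0 < t) : truncPow s t = t ^ s := if_pos ht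

theorem truncPow_of_nonpos {t : ℝ} (ht : t ≤ 0) : truncPow s t = 0 := if_neg ht.not_gt

theorem measurable_truncPow : Measurable (truncPow s) :=
  Measurable.ite measurableSet_Ioi (measurable_id.pow_const s) measurable_const

theorem truncPow_mul_of_pos {c : ℝ} (hc : 0 < c) (t : ℝ) :
    truncPow s (c * t) = c ^ s * truncPow s t := by
  rcases lt_or_ge 0 t with ht | ht
  · rw [truncPow_of_pos ht, truncPow_of_pos (mul_pos hc ht), Real.mul_rpow hc.le ht.le]
  · rw [truncPow_of_nonpos ht, truncPow_of_nonpos (mul_nonpos_of_nonneg_of_nonpos hc.le ht),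
      mul_zero]

theorem monotone_truncPow (hs : 0 ≤ s) : Monotone (truncPow s) := by
  intro t u htu
  rcases le_or_gt t 0 with ht | ht
  · rw [truncPow_of_nonpos ht, truncPow]
    split_ifs <;> positivity
  · rw [truncPow_of_pos ht, truncPow_of_pos (ht.trans_le htu)]
    exact Real.rpow_le_rpow ht.le htu hs

theorem truncPow_add_one_sub_le_one (hs₀ : 0 ≤ s) (hs₁ : s ≤ 1) (t : ℝ) :
    truncPow s (t + 1) - truncPow s t ≤ 1 := by
  rcases le_or_gt t 0 with ht | ht
  · have hmono := monotone_truncPow hs₀ (show t + 1 ≤ 1 by linarith)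
    rw [truncPow_of_pos one_pos, Real.one_rpow] at hmono
    rwa [truncPow_of_nonpos ht, sub_zero]
  · rw [truncPow_of_pos ht, truncPow_of_pos (by positivity), sub_le_iff_le_add']
    simpa using Real.rpow_add_le_add_rpow ht.le zero_le_one hs₀ hs₁

theorem truncPow_add_one_sub_le_rpow (hs₀ : 0 ≤ s) (hs₁ : s ≤ 1) {t : ℝ} (ht : 0 < t) :
    truncPow s (t + 1) - truncPow s t ≤ t ^ (s - 1) := by
  rw [truncPow_of_pos ht, truncPow_of_pos (by positivity), sub_le_iff_le_add']
  calc (t + 1) ^ s = t ^ s * (1 + t⁻¹) ^ s := by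
        rw [← Real.mul_rpow ht.le (by positivity), mul_add, mul_one, mul_inv_cancel₀ ht.ne']
    _ ≤ t ^ s * (1 + s * t⁻¹) := by
        gcongr
        exact rpow_one_add_le_one_add_mul_self (by linarith [inv_pos.2 ht]) hs₀ hs₁
    _ ≤ t ^ s * (1 + 1 * t⁻¹) := by gcongr
    _ = t ^ s + t ^ (s - 1) := by rw [Real.rpow_sub_one ht.ne']; ring

variable {q : ℝ}

theorem lintegral_truncPow_add_one_sub_lt_top (hs₀ : 0 ≤ s) (hs₁ : s ≤ 1)
    (hsq : (s - 1) * q < -1) :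
    ∫⁻ t, ‖truncPow s (t + 1) - truncPow s t‖ₑ ^ q < ∞ := by
  have hq_pos : 0 < q := by nlinarith
  have henorm (t : ℝ) : ‖truncPow s (t + 1) - truncPow s t‖ₑ =
      ENNReal.ofReal (truncPow s (t + 1) - truncPow s t) :=
    Real.enorm_eq_ofReal (sub_nonneg.2 (monotone_truncPow hs₀ (by linarith)))
  have hbound (t : ℝ) : ‖truncPow s (t + 1) - truncPow s t‖ₑ ^ q ≤
      (Ioc (-1) 1).indicator 1 t +
        (Ioi 1).indicator (fun t => ENNReal.ofReal (t ^ ((s - 1) * q))) t := by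
    rw [henorm]
    rcases le_or_gt t (-1) with hlow | hlow
    · rw [truncPow_of_nonpos (by linarith), truncPow_of_nonpos (by linarith)]
      simp [hq_pos]
    rcases le_or_gt t 1 with hmid | hhigh
    · rw [indicator_of_mem (mem_Ioc.2 ⟨hlow, hmid⟩), Pi.one_apply]
      exact le_add_right (ENNReal.rpow_le_one (ENNReal.ofReal_le_one.2
        (truncPow_add_one_sub_le_one hs₀ hs₁ t)) hq_pos.le)
    · have ht : 0 < t := by linarith
      rw [indicator_of_mem (mem_Ioi.2 hhigh), Real.rpow_mul ht.le,
        ← ENNReal.ofReal_rpow_of_nonneg (by positivity) hq_pos.le]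
      refine le_add_left ?_
      gcongr
      exact truncPow_add_one_sub_le_rpow hs₀ hs₁ ht
  calc ∫⁻ t, ‖truncPow s (t + 1) - truncPow s t‖ₑ ^ q
      ≤ volume (Ioc (-1 : ℝ) 1) + ∫⁻ t in Ioi 1, ENNReal.ofReal (t ^ ((s - 1) * q)) := by
        refine (lintegral_mono hbound).trans_eq ?_
        rw [lintegral_add_left (measurable_one.indicator measurableSet_Ioc),
          lintegral_indicator_one measurableSet_Ioc, lintegral_indicator measurableSet_Ioi]
    _ < ∞ := ENNReal.add_lt_top.2 ⟨measure_Ioc_lt_top,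
        (integrableOn_Ioi_rpow_of_lt hsq one_pos).lintegral_lt_top⟩

theorem lintegral_truncPow_add_one_sub_pos :
    0 < ∫⁻ t, ‖truncPow s (t + 1) - truncPow s t‖ₑ ^ q := by
  have hmeas : Measurable fun t => ‖truncPow s (t + 1) - truncPow s t‖ₑ ^ q :=
    ((measurable_truncPow.comp (measurable_add_const 1)).sub
      measurable_truncPow).enorm.pow_const q
  have hsupp : Ioo (-1) 0 ⊆ Function.support fun t => ‖truncPow s (t + 1) - truncPow s t‖ₑ ^ q := by
    intro t ht
    have hpos : 0 < t + 1 := by linarith [ht.1]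
    rw [Function.mem_support, truncPow_of_pos hpos, truncPow_of_nonpos ht.2.le, sub_zero]
    exact (ENNReal.rpow_pos (enorm_pos.2 (Real.rpow_pos_of_pos hpos s).ne') enorm_ne_top).ne'
  rw [lintegral_pos_iff_support hmeas]
  exact (by simp : 0 < volume (Ioo (-1 : ℝ) 0)).trans_le (measure_mono hsupp)

theorem lintegral_eq_ofReal_abs_mul_lintegral_comp_mul_add (F : ℝ → ℝ≥0∞) {c : ℝ} (hc : c ≠ 0)
    (b : ℝ) : ∫⁻ t, F t = ENNReal.ofReal |c| * ∫⁻ t, F (c * t + b) := by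
  calc ∫⁻ t, F t = ∫⁻ t, F (t + b) := (lintegral_add_right_eq_self F b).symm
    _ = ∫⁻ t, F (t + b) ∂(ENNReal.ofReal |c| • Measure.map (c * ·) volume) := by
        rw [Real.smul_map_volume_mul_left hc]
    _ = ENNReal.ofReal |c| * ∫⁻ t, F (c * t + b) := by
        rw [lintegral_smul_measure, smul_eq_mul,
          (measurableEmbedding_mulLeft₀ hc).lintegral_map]

theorem lintegral_truncPow_sub_sub (hq : 0 < q) (hsq : 0 < s * q + 1) (a b : ℝ) :
    ∫⁻ t, ‖truncPow s (t - a) - truncPow s (t - b)‖ₑ ^ q =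
      (∫⁻ t, ‖truncPow s (t + 1) - truncPow s t‖ₑ ^ q) * ‖a - b‖ₑ ^ (s * q + 1) := by
  wlog hab : a < b generalizing a b with hlt
  · rcases (not_lt.1 hab).eq_or_lt with rfl | hba
    · simp [hq, hsq]
    · rw [← enorm_sub_rev b a, ← hlt b a hba]
      simp_rw [enorm_sub_rev]
  have hc : 0 < b - a := sub_pos.2 hab
  have hscale (t : ℝ) : ‖truncPow s ((b - a) * t + b - a) - truncPow s ((b - a) * t + b - b)‖ₑ ^ q =
      ENNReal.ofReal (b - a) ^ (s * q) * ‖truncPow s (t + 1) - truncPow s t‖ₑ ^ q := by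
    rw [show (b - a) * t + b - a = (b - a) * (t + 1) by ring, add_sub_cancel_right,
      truncPow_mul_of_pos hc, truncPow_mul_of_pos hc, ← mul_sub, enorm_mul,
      ENNReal.mul_rpow_of_nonneg _ _ hq.le, Real.enorm_eq_ofReal (by positivity),
      ← ENNReal.ofReal_rpow_of_pos hc, ENNReal.rpow_mul]
  rw [lintegral_eq_ofReal_abs_mul_lintegral_comp_mul_add _ hc.ne' b, lintegral_congr hscale,
    lintegral_const_mul' _ _ (by simp [hab.not_ge]), abs_of_pos hc, enorm_sub_rev,
    Real.enorm_eq_ofReal hc.le, ENNReal.rpow_add _ _ (by simpa using hab) (by simp),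
    ENNReal.rpow_one]
  ring

end TruncPow

section Snowflake

variable {X Z : Type*} [MeasurableSpace X] [MeasurableSpace Z] {p q C : ℝ≥0∞} {μ : Measure X}
  {ν : Measure Z} [SFinite ν] {Φ : ℝ → Z → ℝ}

theorem eLpNorm_superposition_sub_rpow (hp₀ : p ≠ 0) (hp : p ≠ ∞) (hq₀ : q ≠ 0) (hq : q ≠ ∞)
    (hC : C ≠ ∞) (hΦ : Measurable (Function.uncurry Φ))
    (hΦ_dist : ∀ a b, ∫⁻ z, ‖Φ a z - Φ b z‖ₑ ^ q.toReal ∂ν = C * ‖a - b‖ₑ ^ p.toReal)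
    {f g : X → ℝ} (hf : Measurable f) (hg : Measurable g) :
    eLpNorm (fun w : X × Z => Φ (f w.1) w.2 - Φ (g w.1) w.2) q (μ.prod ν) ^ q.toReal =
      C * eLpNorm (f - g) p μ ^ p.toReal := by
  have hmeas : Measurable fun w : X × Z => ‖Φ (f w.1) w.2 - Φ (g w.1) w.2‖ₑ ^ q.toReal :=
    ((hΦ.comp (hf.prodMap measurable_id)).sub
      (hΦ.comp (hg.prodMap measurable_id))).enorm.pow_const _
  rw [eLpNorm_eq_lintegral_rpow_enorm_toReal hq₀ hq, eLpNorm_eq_lintegral_rpow_enorm_toReal hp₀ hp,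
    one_div, one_div, ENNReal.rpow_inv_rpow (ENNReal.toReal_pos hq₀ hq).ne',
    ENNReal.rpow_inv_rpow (ENNReal.toReal_pos hp₀ hp).ne',
    lintegral_prod _ hmeas.aemeasurable]
  simp only [hΦ_dist, Pi.sub_apply]
  exact lintegral_const_mul' C _ hC

theorem exists_Lp_prod_edist_rpow_eq [Fact (1 ≤ p)] [Fact (1 ≤ q)] (hp : p ≠ ∞) (hq : q ≠ ∞)
    (hC : C ≠ ∞) (hΦ : Measurable (Function.uncurry Φ)) (hΦ_zero : Φ 0 = 0)
    (hΦ_dist : ∀ a b, ∫⁻ z, ‖Φ a z - Φ b z‖ₑ ^ q.toReal ∂ν = C * ‖a - b‖ₑ ^ p.toReal) :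
    ∃ T : Lp ℝ p μ → Lp ℝ q (μ.prod ν),
      ∀ f g, edist (T f) (T g) ^ q.toReal = C * edist f g ^ p.toReal := by
  have hp₀ : p ≠ 0 := (zero_lt_one.trans_le Fact.out).ne'
  have hq₀ : q ≠ 0 := (zero_lt_one.trans_le Fact.out).ne'
  have hmeas (f : Lp ℝ p μ) : Measurable f := (Lp.stronglyMeasurable f).measurable
  have hmem (f : Lp ℝ p μ) : MemLp (fun w : X × Z => Φ (f w.1) w.2) q (μ.prod ν) := by
    refine ⟨(hΦ.comp ((hmeas f).prodMap measurable_id)).aestronglyMeasurable, ?_⟩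
    have hnorm := eLpNorm_superposition_sub_rpow (μ := μ) hp₀ hp hq₀ hq hC hΦ hΦ_dist (hmeas f)
      measurable_zero
    simp only [Pi.zero_apply, hΦ_zero, sub_zero] at hnorm
    rw [← ENNReal.rpow_lt_top_iff_of_pos (ENNReal.toReal_pos hq₀ hq), hnorm]
    exact ENNReal.mul_lt_top hC.lt_top
      (ENNReal.rpow_lt_top_of_nonneg ENNReal.toReal_nonneg (Lp.eLpNorm_ne_top f))
  refine ⟨fun f => (hmem f).toLp, fun f g => ?_⟩
  rw [Lp.edist_toLp_toLp, Lp.edist_def]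
  exact eLpNorm_superposition_sub_rpow hp₀ hp hq₀ hq hC hΦ hΦ_dist (hmeas f) (hmeas g)

theorem exists_isUniformEmbedding_Lp_prod_of_lt [Fact (1 ≤ p)] [Fact (1 ≤ q)] (hq : q ≠ ∞)
    (hpq : p < q) :
    ∃ T : Lp ℝ p μ → Lp ℝ q (μ.prod (volume : Measure ℝ)), IsUniformEmbedding T := by
  have hp : p ≠ ∞ := hpq.ne_top
  have hp_one : 1 ≤ p.toReal := ENNReal.toReal_one ▸ ENNReal.toReal_mono hp Fact.out
  have hpq_real : p.toReal < q.toReal := ENNReal.toReal_strict_mono hq hpq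
  have hq_pos : 0 < q.toReal := by linarith
  -- chosen so that `∫ |(t - a)₊ ^ s - (t - b)₊ ^ s| ^ q` scales like `|a - b| ^ p`
  let s := (p.toReal - 1) / q.toReal
  have hsq : s * q.toReal + 1 = p.toReal := by simp [s, hq_pos.ne']
  have hs₀ : 0 ≤ s := div_nonneg (by linarith) hq_pos.le
  have hs₁ : s ≤ 1 := (div_le_one hq_pos).2 (by linarith)
  let C := ∫⁻ t, ‖truncPow s (t + 1) - truncPow s t‖ₑ ^ q.toReal
  have hC₀ : C ≠ 0 := lintegral_truncPow_add_one_sub_pos.ne'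
  have hC : C ≠ ∞ := (lintegral_truncPow_add_one_sub_lt_top hs₀ hs₁ (by linarith)).ne
  let Φ (a t : ℝ) := truncPow s (t - a) - truncPow s t
  have hΦ_dist (a b : ℝ) : ∫⁻ t, ‖Φ a t - Φ b t‖ₑ ^ q.toReal = C * ‖a - b‖ₑ ^ p.toReal := by
    simp_rw [Φ, sub_sub_sub_cancel_right]
    rw [lintegral_truncPow_sub_sub hq_pos (by linarith), hsq]
  have hΦ : Measurable (Function.uncurry Φ) := by
    have := measurable_truncPow (s := s)
    fun_prop
  obtain ⟨T, hT⟩ := exists_Lp_prod_edist_rpow_eq (μ := μ) hp hq hC hΦ (by ext; simp [Φ]) hΦ_dist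
  refine ⟨T, isUniformEmbedding_of_edist_eq_mul_rpow (C := C ^ q.toReal⁻¹)
    (α := p.toReal * q.toReal⁻¹) ?_ ?_ (by positivity) fun f g => ?_⟩
  · simp [hC₀, hC, hq_pos.not_gt]
  · simp [hC₀, hC, hq_pos.not_gt]
  · rw [ENNReal.rpow_mul, ← ENNReal.mul_rpow_of_nonneg _ _ (by positivity), ← hT,
      ENNReal.rpow_rpow_inv hq_pos.ne']

theorem exists_isUniformEmbedding_Lp_lebesgueUnit_of_lt [StandardBorelSpace X] [SigmaFinite μ]
    [Fact (1 ≤ p)] [Fact (1 ≤ q)] (hq : q ≠ ∞) (hpq : p < q) :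
    ∃ T : Lp ℝ p μ → Lp ℝ q lebesgueUnit, IsUniformEmbedding T := by
  obtain ⟨T, hT⟩ := exists_isUniformEmbedding_Lp_prod_of_lt (μ := μ) hq hpq
  obtain ⟨J, hJ⟩ := exists_isometry_Lp_lebesgueUnit (μ.prod (volume : Measure ℝ)) hq
  exact ⟨J ∘ T, hJ.isUniformEmbedding.comp hT⟩

end Snowflake

theorem coeFn_sum_smul_ae_eq {X E κ : Type*} [MeasurableSpace X] {μ : Measure X}
    [NormedAddCommGroup E] [NormedSpace ℝ E] {p : ℝ≥0∞} (s : Finset κ) (a : κ → ℝ)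
    (f : κ → Lp E p μ) :
    ⇑(∑ i ∈ s, a i • f i) =ᵐ[μ] fun x => ∑ i ∈ s, a i • f i x := by
  refine (Lp.coeFn_fun_finsetSum s fun i => a i • f i).trans ?_
  filter_upwards [(Finset.eventually_all s).2 fun i _ => Lp.coeFn_smul (a i) (f i)] with x hsmul
  exact Finset.sum_congr rfl hsmul

section Gaussian

open ProbabilityTheory

theorem countable_of_orthonormal {H ι : Type*} [NormedAddCommGroup H] [InnerProductSpace ℝ H]
    [TopologicalSpace.SeparableSpace H] {e : ι → H} (he : Orthonormal ℝ e) : Countable ι := by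
  have hdist {i j : ι} (hij : i ≠ j) : 1 ≤ dist (e i) (e j) := by
    have hsq : ‖e i - e j‖ ^ 2 = 2 := by
      rw [norm_sub_sq_real, he.inner_eq_zero hij, he.norm_eq_one, he.norm_eq_one]
      norm_num
    rw [dist_eq_norm]
    nlinarith [norm_nonneg (e i - e j)]
  refine countable_univ_iff.1 <| PairwiseDisjoint.countable_of_isOpen
    (s := fun i => Metric.ball (e i) (1 / 2)) (fun i _ j _ hij => ?_)
    (fun _ _ => Metric.isOpen_ball) (fun i _ => ⟨e i, Metric.mem_ball_self (by norm_num)⟩)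
  exact Metric.ball_disjoint_ball (by linarith [hdist hij])

variable {Ω : Type*} [MeasurableSpace Ω] {P : Measure Ω} {q : ℝ≥0∞}

theorem eLpNorm_eq_of_hasLaw_gaussianReal {Y : Ω → ℝ} {v : ℝ≥0}
    (hY : HasLaw Y (gaussianReal 0 v) P) (q : ℝ≥0∞) :
    eLpNorm Y q P = ENNReal.ofReal √v * eLpNorm id q (gaussianReal 0 1) := by
  have hscale : gaussianReal 0 v = (gaussianReal 0 1).map (√v * ·) := by
    rw [gaussianReal_map_const_mul]
    congr 1
    · simp
    · ext; simp
  have hcomp : id ∘ (√(v : ℝ) * ·) = √(v : ℝ) • (id : ℝ → ℝ) := rfl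
  rw [← Function.id_comp Y, ← eLpNorm_map_measure (by fun_prop) hY.aemeasurable, hY.map_eq, hscale,
    eLpNorm_map_measure (by fun_prop) (by fun_prop), hcomp, eLpNorm_const_smul,
    Real.enorm_eq_ofReal (by positivity)]

theorem eLpNorm_id_gaussianReal_ne_zero (hq : q ≠ 0) : eLpNorm id q (gaussianReal 0 1) ≠ 0 := by
  rw [Ne, eLpNorm_eq_zero_iff (by fun_prop) hq]
  intro hzero
  simpa using variance_congr hzero

theorem eLpNorm_id_gaussianReal_ne_top (hq : q ≠ ∞) : eLpNorm id q (gaussianReal 0 1) ≠ ∞ :=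
  (memLp_id_gaussianReal' q hq).eLpNorm_ne_top

/-- The ratio of the `L_q` norm to the `L_2` norm of a centered Gaussian variable. -/
noncomputable def gaussianNormRatio (q : ℝ≥0∞) : ℝ≥0∞ :=
  eLpNorm id q (gaussianReal 0 1) / eLpNorm id 2 (gaussianReal 0 1)

theorem gaussianNormRatio_ne_zero (hq : q ≠ 0) : gaussianNormRatio q ≠ 0 :=
  ENNReal.div_ne_zero.2 ⟨eLpNorm_id_gaussianReal_ne_zero hq,
    eLpNorm_id_gaussianReal_ne_top ENNReal.ofNat_ne_top⟩

theorem gaussianNormRatio_ne_top (hq : q ≠ ∞) : gaussianNormRatio q ≠ ∞ :=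
  ENNReal.div_ne_top (eLpNorm_id_gaussianReal_ne_top hq)
    (eLpNorm_id_gaussianReal_ne_zero two_ne_zero)

theorem eLpNorm_eq_gaussianNormRatio_mul {Y : Ω → ℝ} {v : ℝ≥0}
    (hY : HasLaw Y (gaussianReal 0 v) P) (q : ℝ≥0∞) :
    eLpNorm Y q P = gaussianNormRatio q * eLpNorm Y 2 P := by
  rw [eLpNorm_eq_of_hasLaw_gaussianReal hY, eLpNorm_eq_of_hasLaw_gaussianReal hY,
    gaussianNormRatio, mul_left_comm, ENNReal.div_mul_cancel
      (eLpNorm_id_gaussianReal_ne_zero two_ne_zero)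
      (eLpNorm_id_gaussianReal_ne_top ENNReal.ofNat_ne_top)]

variable {ι : Type*} {ξ : ι → Ω → ℝ}

theorem exists_hasLaw_sum_smul_gaussianReal (hξ : ∀ i, HasLaw (ξ i) (gaussianReal 0 1) P)
    (hindep : iIndepFun ξ P) (a : ι → ℝ) (s : Finset ι) :
    ∃ v, HasLaw (fun ω => ∑ i ∈ s, a i • ξ i ω) (gaussianReal 0 v) P := by
  have hgauss (i : ι) : HasGaussianLaw (fun ω => a i • ξ i ω) P := (hξ i).hasGaussianLaw.fun_smul _
  have hindep_smul : iIndepFun (fun (i : s) ω => a i • ξ i ω) P :=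
    (hindep.comp (fun i x => a i • x) fun i => measurable_const_smul _).precomp
      Subtype.val_injective
  have hsum : HasGaussianLaw (fun ω => ∑ i ∈ s, a i • ξ i ω) P := by
    have hattach := hindep_smul.hasGaussianLaw_fun_sum fun i : s => hgauss i
    have hsum_coe (ω : Ω) : ∑ i : s, a i • ξ i ω = ∑ i ∈ s, a i • ξ i ω :=
      Finset.sum_coe_sort s fun i => a i • ξ i ω
    simpa only [hsum_coe] using hattach
  have hmean : P[fun ω => ∑ i ∈ s, a i • ξ i ω] = 0 := by
    rw [integral_finsetSum _ fun i _ => (hgauss i).integrable]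
    exact Finset.sum_eq_zero fun i _ => by
      rw [integral_smul, (hξ i).integral_eq, integral_id_gaussianReal, smul_zero]
  exact ⟨_, hsum.aemeasurable, hmean ▸ hsum.map_eq_gaussianReal⟩

theorem orthonormal_of_iIndepFun_gaussianReal {e : ι → Lp ℝ 2 P}
    (he : ∀ i, HasLaw (e i) (gaussianReal 0 1) P) (hindep : iIndepFun (fun i => ⇑(e i)) P) :
    Orthonormal ℝ e := by
  classical
  have hmean (i : ι) : P[e i] = 0 := by rw [(he i).integral_eq, integral_id_gaussianReal]
  refine orthonormal_iff_ite.2 fun i j => ?_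
  rw [L2.inner_def]
  simp only [RCLike.inner_apply, conj_trivial]
  split_ifs with hij
  · subst hij
    have hvar := (he i).variance_eq
    rw [variance_of_integral_eq_zero (he i).aemeasurable (hmean i),
      variance_id_gaussianReal] at hvar
    simpa [sq] using hvar
  · have hmul := (hindep.indepFun (Ne.symm hij)).integral_mul_eq_mul_integral
      (Lp.aestronglyMeasurable _) (Lp.aestronglyMeasurable _)
    rw [hmean, zero_mul] at hmul
    exact hmul

theorem continuous_inclusion_Lp {E : Type*} [NormedAddCommGroup E] [IsProbabilityMeasure P]
    {p : ℝ≥0∞} [Fact (1 ≤ p)] [Fact (1 ≤ q)] (hqp : q ≤ p) :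
    Continuous (AddSubgroup.inclusion (Lp.antitone hqp : Lp E p P ≤ Lp E q P)) := by
  refine AddMonoidHomClass.continuous_of_bound _ 1 fun f => ?_
  rw [one_mul, Lp.norm_def, Lp.norm_def]
  exact ENNReal.toReal_mono (Lp.eLpNorm_ne_top f)
    (eLpNorm_le_eLpNorm_of_exponent_le hqp (Lp.aestronglyMeasurable f))

theorem enorm_inclusion_eq_of_hasSum_gaussian [IsProbabilityMeasure P] [Fact (1 ≤ q)] (hq : q ≤ 2)
    {e : ι → Lp ℝ 2 P} (he : ∀ i, HasLaw (e i) (gaussianReal 0 1) P)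
    (hindep : iIndepFun (fun i => ⇑(e i)) P) {a : ι → ℝ} {f : Lp ℝ 2 P}
    (hf : HasSum (fun i => a i • e i) f) :
    ‖AddSubgroup.inclusion (Lp.antitone hq : Lp ℝ 2 P ≤ Lp ℝ q P) f‖ₑ =
      gaussianNormRatio q * ‖f‖ₑ := by
  have hfinite (s : Finset ι) :
      ‖AddSubgroup.inclusion (Lp.antitone hq : Lp ℝ 2 P ≤ Lp ℝ q P) (∑ i ∈ s, a i • e i)‖ₑ =
        gaussianNormRatio q * ‖∑ i ∈ s, a i • e i‖ₑ := by
    obtain ⟨v, hv⟩ := exists_hasLaw_sum_smul_gaussianReal he hindep a s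
    rw [Lp.enorm_def, Lp.enorm_def]
    exact eLpNorm_eq_gaussianNormRatio_mul (hv.congr (coeFn_sum_smul_ae_eq s a e)) q
  have hratio : gaussianNormRatio q ≠ ∞ :=
    gaussianNormRatio_ne_top (ne_top_of_le_ne_top ENNReal.ofNat_ne_top hq)
  refine tendsto_nhds_unique (((continuous_inclusion_Lp hq).enorm.tendsto f).comp hf) ?_
  exact (ENNReal.Tendsto.const_mul ((continuous_enorm.tendsto f).comp hf) (.inr hratio)).congr
    fun s => (hfinite s).symm

theorem exists_isUniformEmbedding_lp_two_of_iIndepFun_gaussianReal [Fact (1 ≤ q)] (hq : q ≤ 2)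
    (hξ : ∀ i, HasLaw (ξ i) (gaussianReal 0 1) P) (hindep : iIndepFun ξ P) :
    ∃ T : lp (fun _ : ι => ℝ) 2 → Lp ℝ q P, IsUniformEmbedding T := by
  have := hindep.isProbabilityMeasure
  have hmem (i : ι) : MemLp (ξ i) 2 P := (hξ i).hasGaussianLaw.memLp_two
  let e (i : ι) : Lp ℝ 2 P := (hmem i).toLp
  have he_ae (i : ι) : e i =ᵐ[P] ξ i := (hmem i).coeFn_toLp
  have he_law (i : ι) : HasLaw (e i) (gaussianReal 0 1) P := (hξ i).congr (he_ae i)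
  have he_indep : iIndepFun (fun i => ⇑(e i)) P := hindep.congr fun i => (he_ae i).symm
  have he := (orthonormal_of_iIndepFun_gaussianReal he_law he_indep).orthogonalFamily
  let T := (AddSubgroup.inclusion (Lp.antitone hq : Lp ℝ 2 P ≤ Lp ℝ q P)).comp
    he.linearIsometry.toLinearMap.toAddMonoidHom
  have hT (x : lp (fun _ : ι => ℝ) 2) : ‖T x‖ₑ = gaussianNormRatio q * ‖x‖ₑ := by
    rw [← he.linearIsometry.enorm_map x]
    exact enorm_inclusion_eq_of_hasSum_gaussian hq he_law he_indep (he.hasSum_linearIsometry x)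
  refine ⟨T, isUniformEmbedding_of_edist_eq_mul_rpow
    (gaussianNormRatio_ne_zero (zero_lt_one.trans_le Fact.out).ne')
    (gaussianNormRatio_ne_top (ne_top_of_le_ne_top ENNReal.ofNat_ne_top hq)) one_pos fun x y => ?_⟩
  rw [edist_eq_enorm_sub, edist_eq_enorm_sub, ← map_sub, hT, ENNReal.rpow_one]

theorem exists_isUniformEmbedding_Lp_lebesgueUnit_of_separable {H : Type*} [NormedAddCommGroup H]
    [InnerProductSpace ℝ H] [CompleteSpace H] [TopologicalSpace.SeparableSpace H] [Fact (1 ≤ q)]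
    (hq : q ≤ 2) : ∃ T : H → Lp ℝ q lebesgueUnit, IsUniformEmbedding T := by
  obtain ⟨w, b, -⟩ := exists_hilbertBasis ℝ H
  have : Countable w := countable_of_orthonormal b.orthonormal
  let P : Measure (w → ℝ) := Measure.infinitePi fun _ => gaussianReal 0 1
  have hlaw (i : w) : HasLaw (fun ω : w → ℝ => ω i) (gaussianReal 0 1) P :=
    (measurePreserving_eval_infinitePi (fun _ : w => gaussianReal 0 1) i).hasLaw
  have hindep : iIndepFun (fun (i : w) (ω : w → ℝ) => ω i) P :=
    iIndepFun_infinitePi (X := fun _ x => x) fun _ => measurable_id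
  obtain ⟨T, hT⟩ := exists_isUniformEmbedding_lp_two_of_iIndepFun_gaussianReal hq hlaw hindep
  obtain ⟨J, hJ⟩ := exists_isometry_Lp_lebesgueUnit P (ne_top_of_le_ne_top ENNReal.ofNat_ne_top hq)
  exact ⟨_, hJ.isUniformEmbedding.comp (hT.comp b.repr.isometry.isUniformEmbedding)⟩

end Gaussian

section Rademacher

theorem norm_rpow_eq_integral {X E : Type*} [MeasurableSpace X]
    [NormedAddCommGroup E] {μ : Measure X} {p : ℝ≥0∞} (hp₀ : p ≠ 0) (hp : p ≠ ∞)
    (f : Lp E p μ) :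
    ‖f‖ ^ p.toReal = ∫ x, ‖f x‖ ^ p.toReal ∂μ := by
  have hp_pos := ENNReal.toReal_pos hp₀ hp
  rw [Lp.norm_def, (Lp.memLp f).eLpNorm_eq_integral_rpow_norm hp₀ hp,
    ENNReal.toReal_ofReal (by positivity), Real.rpow_inv_rpow (by positivity) hp_pos.ne']

theorem sum_rpow_le_rpow_sum {κ : Type*} (s : Finset κ) {a : κ → ℝ} (ha : ∀ i, 0 ≤ a i) {r : ℝ}
    (hr : 1 ≤ r) : ∑ i ∈ s, a i ^ r ≤ (∑ i ∈ s, a i) ^ r := by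
  classical
  induction s using Finset.induction_on with
  | empty => simp [Real.zero_rpow (by linarith : r ≠ 0)]
  | insert i s hi ih =>
    rw [Finset.sum_insert hi, Finset.sum_insert hi]
    exact (add_le_add_right ih _).trans
      (Real.add_rpow_le_rpow_add (ha i) (Finset.sum_nonneg fun j _ => ha j) hr)

variable {ι : Type*} [Fintype ι] [DecidableEq ι]

theorem sum_mulSingle_neg_one_mul {M : Type*} [AddCommMonoid M] (j : ι) (F : (ι → ℤˣ) → M) :
    ∑ ε, F ((Pi.mulSingle j (-1) : ι → ℤˣ) * ε) = ∑ ε, F ε :=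
  Equiv.sum_comp (Equiv.mulLeft (Pi.mulSingle j (-1) : ι → ℤˣ)) F

theorem sum_units_mul_units_eq_zero {i j : ι} (hij : i ≠ j) :
    ∑ ε : ι → ℤˣ, ((ε i : ℤ) : ℝ) * (ε j : ℤ) = 0 := by
  have hflip := sum_mulSingle_neg_one_mul i fun ε : ι → ℤˣ => ((ε i : ℤ) : ℝ) * (ε j : ℤ)
  simp only [Pi.mul_apply, Pi.mulSingle_eq_same, Pi.mulSingle_eq_of_ne hij.symm, one_mul,
    neg_mul, Units.val_neg, Int.cast_neg, Finset.sum_neg_distrib] at hflip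
  linarith

variable {E : Type*} [NormedAddCommGroup E] [NormedSpace ℝ E]

/-- The Rademacher coefficient `𝔼 ε_j W(ε)` of a function on the cube of signs. -/
noncomputable def rademacherCoeff (j : ι) (W : (ι → ℤˣ) → E) : E :=
  (Fintype.card (ι → ℤˣ) : ℝ)⁻¹ • ∑ ε, ε j • W ε

variable (ι E) in
/-- Bessel's inequality with exponent `q` for the Rademacher coefficients of `E`-valued functions
on the cube of signs `ι → ℤˣ`. It is the property of the target space that obstructs embeddings. -/
def RademacherBessel (q : ℝ) : Prop :=
  ∀ W : (ι → ℤˣ) → E,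
    ∑ j, ‖rademacherCoeff j W‖ ^ q ≤ (Fintype.card (ι → ℤˣ) : ℝ)⁻¹ * ∑ ε, ‖W ε‖ ^ q

theorem rademacherCoeff_eq_sum_smul (j : ι) (W : (ι → ℤˣ) → E) :
    rademacherCoeff j W = ∑ ε, ((Fintype.card (ι → ℤˣ) : ℝ)⁻¹ * (ε j : ℤ)) • W ε := by
  simp only [rademacherCoeff, Finset.smul_sum, mul_smul, Units.smul_def, Int.cast_smul_eq_zsmul]

theorem rademacherCoeff_sub_const (j : ι) (W : (ι → ℤˣ) → E) (c : E) :
    rademacherCoeff j (fun ε => W ε - c) = rademacherCoeff j W := by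
  have hsum : ∑ ε : ι → ℤˣ, (ε j : ℤ) = 0 := by
    have hflip := sum_mulSingle_neg_one_mul j fun ε : ι → ℤˣ => (ε j : ℤ)
    simp only [Pi.mul_apply, Pi.mulSingle_eq_same, neg_mul, one_mul, Units.val_neg,
      Finset.sum_neg_distrib] at hflip
    linarith
  simp only [rademacherCoeff, smul_sub, Finset.sum_sub_distrib, Units.smul_def, ← Finset.sum_smul,
    hsum, zero_smul, sub_zero]

theorem rademacherBessel_real_two : RademacherBessel ι ℝ 2 := by
  intro w
  set N : ℝ := (Fintype.card (ι → ℤˣ) : ℝ) with hN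
  have hN_pos : 0 < N := Nat.cast_pos.2 Fintype.card_pos
  let r (j : ι) : EuclideanSpace ℝ (ι → ℤˣ) := WithLp.toLp 2 fun ε => (√N)⁻¹ * (ε j : ℤ)
  have hinner (j : ι) (u : EuclideanSpace ℝ (ι → ℤˣ)) :
      inner ℝ (r j) u = (√N)⁻¹ * ∑ ε : ι → ℤˣ, ((ε j : ℤ) : ℝ) * u ε := by
    simp only [PiLp.inner_apply, r, RCLike.inner_apply, conj_trivial, Finset.mul_sum]
    exact Finset.sum_congr rfl fun ε _ => by ring
  have hr : Orthonormal ℝ r := by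
    refine orthonormal_iff_ite.2 fun i j => ?_
    have hsqrt := Real.mul_self_sqrt hN_pos.le
    simp only [hinner, r, mul_left_comm _ (√N)⁻¹, ← Finset.mul_sum]
    split_ifs with hij
    · subst hij
      have hsq (ε : ι → ℤˣ) : ((ε i : ℤ) : ℝ) * (ε i : ℤ) = 1 := by
        rw [← Int.cast_mul, Int.units_coe_mul_self, Int.cast_one]
      simp only [hsq, Finset.sum_const, Finset.card_univ, nsmul_eq_mul, mul_one, ← hN]
      rw [← mul_assoc, ← mul_inv, hsqrt, inv_mul_cancel₀ hN_pos.ne']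
    · rw [sum_units_mul_units_eq_zero hij, mul_zero, mul_zero]
  have hcoeff (j : ι) : rademacherCoeff j w = (√N)⁻¹ * inner ℝ (r j) (WithLp.toLp 2 w) := by
    rw [hinner, ← mul_assoc, ← mul_inv, Real.mul_self_sqrt hN_pos.le, rademacherCoeff_eq_sum_smul,
      Finset.mul_sum]
    exact Finset.sum_congr rfl fun ε _ => mul_assoc _ _ _
  have hbessel := hr.sum_inner_products_le (x := WithLp.toLp 2 w) (s := Finset.univ)
  rw [EuclideanSpace.norm_sq_eq] at hbessel
  simp only [Real.rpow_two, hcoeff, norm_mul, mul_pow, ← Finset.mul_sum, norm_inv,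
    Real.norm_of_nonneg (Real.sqrt_nonneg N), inv_pow, Real.sq_sqrt hN_pos.le]
  gcongr

theorem rademacherBessel_real {q : ℝ} (hq : 2 ≤ q) : RademacherBessel ι ℝ q := by
  intro w
  have hpow (x : ℝ) : ‖x‖ ^ q = (‖x‖ ^ (2 : ℝ)) ^ (q / 2) := by
    rw [← Real.rpow_mul (norm_nonneg x), mul_div_cancel₀ q two_ne_zero]
  simp only [hpow]
  calc ∑ j, (‖rademacherCoeff j w‖ ^ (2 : ℝ)) ^ (q / 2)
      ≤ (∑ j, ‖rademacherCoeff j w‖ ^ (2 : ℝ)) ^ (q / 2) :=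
        sum_rpow_le_rpow_sum _ (fun _ => by positivity) (by linarith)
    _ ≤ ((Fintype.card (ι → ℤˣ) : ℝ)⁻¹ * ∑ ε, ‖w ε‖ ^ (2 : ℝ)) ^ (q / 2) := by
        gcongr
        exact rademacherBessel_real_two w
    _ ≤ (Fintype.card (ι → ℤˣ) : ℝ)⁻¹ * ∑ ε, (‖w ε‖ ^ (2 : ℝ)) ^ (q / 2) := by
        simp only [Finset.mul_sum]
        exact Real.rpow_arith_mean_le_arith_mean_rpow _ _ _ (fun _ _ => by positivity) (by simp)
          (fun _ _ => by positivity) (by linarith)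

variable {X : Type*} [MeasurableSpace X] {μ : Measure X}

theorem rademacherBessel_Lp {q : ℝ≥0∞} [Fact (1 ≤ q)] (hq₂ : 2 ≤ q) (hq : q ≠ ∞) :
    RademacherBessel ι (Lp ℝ q μ) q.toReal := by
  intro W
  have hq₀ : q ≠ 0 := (two_pos.trans_le hq₂).ne'
  have hint (f : Lp ℝ q μ) : Integrable (fun x => ‖f x‖ ^ q.toReal) μ :=
    (Lp.memLp f).integrable_norm_rpow hq₀ hq
  have hcoeff (j : ι) : ⇑(rademacherCoeff j W) =ᵐ[μ] fun x => rademacherCoeff j fun ε => W ε x := by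
    simp only [rademacherCoeff_eq_sum_smul]
    exact coeFn_sum_smul_ae_eq _ _ W
  simp only [norm_rpow_eq_integral hq₀ hq]
  rw [← integral_finsetSum _ fun j _ => hint _, ← integral_finsetSum _ fun ε _ => hint _,
    ← integral_const_mul]
  refine integral_mono_ae (integrable_finsetSum _ fun j _ => hint _)
    ((integrable_finsetSum _ fun ε _ => hint _).const_mul _) ?_
  filter_upwards [ae_all_iff.2 hcoeff] with x hx
  simp only [hx]
  exact rademacherBessel_real ((ENNReal.ofReal_le_iff_le_toReal hq).1 (by simpa)) fun ε => W ε x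

end Rademacher

section MetricCotype

theorem card_rpow_mul_sum_le_of_sum_rpow_le {ι : Type*} [Fintype ι] {a : ι → ℝ}
    (ha : ∀ i, 0 ≤ a i) {q M : ℝ} (hq : 1 ≤ q) (hM : 0 ≤ M) (h : ∑ i, a i ^ q ≤ M ^ q) :
    (Fintype.card ι : ℝ) ^ (1 / q) * ∑ i, a i ≤ Fintype.card ι * M := by
  have hq_pos : 0 < q := by linarith
  have hsum : 0 ≤ ∑ i, a i := Finset.sum_nonneg fun i _ => ha i
  rw [← Real.rpow_le_rpow_iff (by positivity) (by positivity) hq_pos,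
    Real.mul_rpow (by positivity) hsum, Real.mul_rpow (by positivity) hM, one_div,
    Real.rpow_inv_rpow (by positivity) hq_pos.ne']
  calc (Fintype.card ι : ℝ) * (∑ i, a i) ^ q
      ≤ Fintype.card ι * ((Fintype.card ι : ℝ) ^ (q - 1) * ∑ i, a i ^ q) := by
        gcongr
        exact Real.rpow_sum_le_const_mul_sum_rpow_of_nonneg Finset.univ hq fun i _ => ha i
    _ ≤ Fintype.card ι * ((Fintype.card ι : ℝ) ^ (q - 1) * M ^ q) := by gcongr
    _ = (Fintype.card ι : ℝ) ^ q * M ^ q := by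
        rw [← mul_assoc, ← Real.rpow_one_add' (by positivity) (by linarith), add_sub_cancel]

variable {ι G E : Type*} [Fintype ι] [DecidableEq ι] [AddCommGroup G] [NormedAddCommGroup E]
  [NormedSpace ℝ E] {v : ι → G} {f : G → E} {η : ℝ}

variable (v f) in
/-- The Mendel–Naor smoothing of `f` in direction `j`: its average over the points
`z + ∑ i ≠ j, ± v i`. -/
noncomputable def smoothing (j : ι) (z : G) : E :=
  (Fintype.card (ι → ℤˣ) : ℝ)⁻¹ • ∑ ε : ι → ℤˣ, f (z + ∑ i ∈ Finset.univ.erase j, ε i • v i)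

theorem norm_smoothing_sub_le
    (hf : ∀ x (ε : ι → ℤˣ) s, ‖f (x + ∑ i ∈ s, ε i • v i) - f x‖ ≤ η) (j : ι) (z : G) :
    ‖smoothing v f j z - f z‖ ≤ η := by
  have hN_pos : (0 : ℝ) < Fintype.card (ι → ℤˣ) := Nat.cast_pos.2 Fintype.card_pos
  have haverage : smoothing v f j z - f z = (Fintype.card (ι → ℤˣ) : ℝ)⁻¹ •
      ∑ ε : ι → ℤˣ, (f (z + ∑ i ∈ Finset.univ.erase j, ε i • v i) - f z) := by
    rw [Finset.sum_sub_distrib, smul_sub, Finset.sum_const, Finset.card_univ,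
      ← Nat.cast_smul_eq_nsmul ℝ, inv_smul_smul₀ hN_pos.ne', smoothing]
  rw [haverage, norm_smul, norm_inv, Real.norm_of_nonneg hN_pos.le, inv_mul_le_iff₀ hN_pos]
  refine (norm_sum_le_of_le _ fun ε _ => hf z ε _).trans_eq ?_
  rw [Finset.sum_const, Finset.card_univ, nsmul_eq_mul]

theorem smoothing_add_sub_smoothing_sub (j : ι) (y : G) :
    smoothing v f j (y + v j) - smoothing v f j (y - v j) =
      (2 : ℝ) • rademacherCoeff j fun ε => f (y + ∑ i, ε i • v i) := by
  let rest (ε : ι → ℤˣ) : G := ∑ i ∈ Finset.univ.erase j, ε i • v i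
  have hsplit (ε : ι → ℤˣ) : ∑ i, ε i • v i = ε j • v j + rest ε :=
    (Finset.add_sum_erase _ _ (Finset.mem_univ j)).symm
  have hrest_flip (ε : ι → ℤˣ) : rest ((Pi.mulSingle j (-1) : ι → ℤˣ) * ε) = rest ε := by
    refine Finset.sum_congr rfl fun i hi => ?_
    rw [Pi.mul_apply, Pi.mulSingle_eq_of_ne (Finset.ne_of_mem_erase hi), one_mul]
  have hpair (ε : ι → ℤˣ) : f (y + v j + rest ε) - f (y - v j + rest ε) =
      ε j • f (y + (ε j • v j + rest ε)) + -ε j • f (y + (-ε j • v j + rest ε)) := by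
    rcases Int.units_eq_one_or (ε j) with hε | hε
    · simp [hε, sub_eq_add_neg, add_assoc]
    · simp [hε, sub_eq_neg_add, add_assoc, add_left_comm]
  have hflip := sum_mulSingle_neg_one_mul j fun ε => ε j • f (y + ∑ i, ε i • v i)
  simp only [hsplit, hrest_flip] at hflip
  simp only [Pi.mul_apply, Pi.mulSingle_eq_same, neg_mul, one_mul] at hflip
  simp only [smoothing, rademacherCoeff, hsplit]
  rw [← smul_sub, ← Finset.sum_sub_distrib, Finset.sum_congr rfl fun ε _ => hpair ε,
    Finset.sum_add_distrib, hflip, smul_comm, two_smul]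

theorem card_rpow_mul_sum_norm_smoothing_sub_le {q : ℝ} (hq : 1 ≤ q)
    (hE : RademacherBessel ι E q)
    (hf : ∀ x (ε : ι → ℤˣ) s, ‖f (x + ∑ i ∈ s, ε i • v i) - f x‖ ≤ η) (y : G) :
    (Fintype.card ι : ℝ) ^ (1 / q) *
      ∑ j, ‖smoothing v f j (y + v j) - smoothing v f j (y - v j)‖ ≤
        Fintype.card ι * (2 * η) := by
  have hη : 0 ≤ η := (norm_nonneg _).trans (hf y 1 ∅)
  have hN_pos : (0 : ℝ) < Fintype.card (ι → ℤˣ) := Nat.cast_pos.2 Fintype.card_pos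
  have hcoeff : ∑ j, ‖rademacherCoeff j fun ε => f (y + ∑ i, ε i • v i)‖ ^ q ≤ η ^ q := by
    simp only [← rademacherCoeff_sub_const _ (fun ε => f (y + ∑ i, ε i • v i)) (f y)]
    refine (hE _).trans ?_
    rw [inv_mul_le_iff₀ hN_pos, ← nsmul_eq_mul, ← Finset.card_univ]
    refine Finset.sum_le_card_nsmul _ _ _ fun ε _ => ?_
    gcongr
    exact hf y ε Finset.univ
  refine card_rpow_mul_sum_le_of_sum_rpow_le (fun _ => norm_nonneg _) hq (by positivity) ?_
  simp only [smoothing_add_sub_smoothing_sub, norm_smul, Real.norm_two,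
    Real.mul_rpow zero_le_two (norm_nonneg _), Real.mul_rpow zero_le_two hη, ← Finset.mul_sum]
  gcongr

theorem sub_le_sum_norm_smoothing_sub {k : ℕ} {δ : ℝ} {j : ι} {x : G}
    (hf : ∀ x (ε : ι → ℤˣ) s, ‖f (x + ∑ i ∈ s, ε i • v i) - f x‖ ≤ η)
    (hfar : δ ≤ ‖f (x + (2 * k) • v j) - f x‖) :
    δ - 2 * η ≤ ∑ i ∈ Finset.range k, ‖smoothing v f j (x + (2 * i + 1) • v j + v j) -
      smoothing v f j (x + (2 * i + 1) • v j - v j)‖ := by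
  have htelescope : smoothing v f j (x + (2 * k) • v j) - smoothing v f j x =
      ∑ i ∈ Finset.range k, (smoothing v f j (x + (2 * i + 1) • v j + v j) -
        smoothing v f j (x + (2 * i + 1) • v j - v j)) := by
    have hsum := Finset.sum_range_sub (fun i => smoothing v f j (x + (2 * i) • v j)) k
    rw [mul_zero, zero_smul, add_zero] at hsum
    rw [← hsum]
    refine Finset.sum_congr rfl fun i _ => ?_
    congr 2 <;> module
  have hnear := norm_smoothing_sub_le hf j x
  have hnear_shift := norm_smoothing_sub_le hf j (x + (2 * k) • v j)
  have htriangle := norm_add₃_le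
    (a := -(smoothing v f j (x + (2 * k) • v j) - f (x + (2 * k) • v j)))
    (b := smoothing v f j (x + (2 * k) • v j) - smoothing v f j x) (c := smoothing v f j x - f x)
  rw [norm_neg, neg_sub, sub_add_sub_cancel, sub_add_sub_cancel] at htriangle
  have hsum_norm := norm_sum_le (Finset.range k) fun i =>
    smoothing v f j (x + (2 * i + 1) • v j + v j) - smoothing v f j (x + (2 * i + 1) • v j - v j)
  rw [← htelescope] at hsum_norm
  linarith

theorem metric_cotype_inequality [Finite G] [Nonempty ι] {q : ℝ} (hq : 1 ≤ q)
    (hE : RademacherBessel ι E q) {k : ℕ} {δ : ℝ}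
    (hf : ∀ x (ε : ι → ℤˣ) s, ‖f (x + ∑ i ∈ s, ε i • v i) - f x‖ ≤ η)
    (hfar : ∀ x j, δ ≤ ‖f (x + (2 * k) • v j) - f x‖) :
    (Fintype.card ι : ℝ) ^ (1 / q) * (δ - 2 * η) ≤ 2 * k * η := by
  have := Fintype.ofFinite G
  let D (j : ι) (x : G) : ℝ := ‖smoothing v f j (x + v j) - smoothing v f j (x - v j)‖
  have hdirection (j : ι) : Fintype.card G * (δ - 2 * η) ≤ k * ∑ x, D j x := by
    calc Fintype.card G * (δ - 2 * η)
        = ∑ _x : G, (δ - 2 * η) := by rw [Finset.sum_const, Finset.card_univ, nsmul_eq_mul]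
      _ ≤ ∑ x, ∑ i ∈ Finset.range k, D j (x + (2 * i + 1) • v j) :=
          Finset.sum_le_sum fun x _ => sub_le_sum_norm_smoothing_sub hf (hfar x j)
      _ = ∑ i ∈ Finset.range k, ∑ x, D j x := by
          rw [Finset.sum_comm]
          exact Finset.sum_congr rfl fun i _ => Equiv.sum_comp (Equiv.addRight _) (D j)
      _ = k * ∑ x, D j x := by rw [Finset.sum_const, Finset.card_range, nsmul_eq_mul]
  have hcard : (0 : ℝ) < Fintype.card ι * Fintype.card G :=
    mul_pos (Nat.cast_pos.2 Fintype.card_pos) (Nat.cast_pos.2 Fintype.card_pos)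
  refine le_of_mul_le_mul_left ?_ hcard
  calc (Fintype.card ι * Fintype.card G) * ((Fintype.card ι : ℝ) ^ (1 / q) * (δ - 2 * η))
      = (Fintype.card ι : ℝ) ^ (1 / q) * ∑ _j : ι, Fintype.card G * (δ - 2 * η) := by
        rw [Finset.sum_const, Finset.card_univ, nsmul_eq_mul]
        ring
    _ ≤ (Fintype.card ι : ℝ) ^ (1 / q) * ∑ j, k * ∑ x, D j x := by
        gcongr _ * ∑ j, ?_ with j
        exact hdirection j
    _ = k * ∑ x, (Fintype.card ι : ℝ) ^ (1 / q) * ∑ j, D j x := by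
        rw [← Finset.mul_sum, ← Finset.mul_sum, Finset.sum_comm]
        ring
    _ ≤ k * ∑ _x : G, Fintype.card ι * (2 * η) := by
        gcongr _ * ∑ x, ?_ with x
        exact card_rpow_mul_sum_norm_smoothing_sub_le hq hE hf x
    _ = (Fintype.card ι * Fintype.card G) * (2 * k * η) := by
        rw [Finset.sum_const, Finset.card_univ, nsmul_eq_mul]
        ring

end MetricCotype

section DiscreteTorus

theorem exists_isometry_PiLp_lebesgueUnit (κ : Type*) [Fintype κ] {p : ℝ≥0∞} [Fact (1 ≤ p)]
    (hp : p ≠ ∞) : ∃ J : PiLp p (fun _ : κ => ℝ) → Lp ℝ p lebesgueUnit, Isometry J := by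
  let _ : MeasurableSpace κ := ⊤
  have : DiscreteMeasurableSpace κ := ⟨fun _ => trivial⟩
  have hp₀ : p ≠ 0 := (zero_lt_one.trans_le Fact.out).ne'
  obtain ⟨J, hJ⟩ := exists_isometry_Lp_lebesgueUnit (Measure.count : Measure κ) hp
  have hmem (a : PiLp p fun _ : κ => ℝ) : MemLp a p (Measure.count : Measure κ) := .of_discrete
  refine ⟨_, hJ.comp (f := fun a => (hmem a).toLp) fun a b => ?_⟩
  rw [Lp.edist_toLp_toLp, PiLp.edist_eq_sum (ENNReal.toReal_pos hp₀ hp),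
    eLpNorm_eq_lintegral_rpow_enorm_toReal hp₀ hp, lintegral_count, tsum_fintype]
  simp only [Pi.sub_apply, edist_eq_enorm_sub]

theorem norm_stdAddChar_intCast_sub_one_le {N : ℕ} [NeZero N] (e : ℤ) :
    ‖(ZMod.stdAddChar (e : ZMod N) : ℂ) - 1‖ ≤ 2 * Real.pi * |e| / N := by
  have hexp : (2 * Real.pi * Complex.I * e / N : ℂ) =
      Complex.I * ((2 * Real.pi * e / N : ℝ) : ℂ) := by
    push_cast
    ring
  rw [ZMod.stdAddChar_coe, hexp]
  refine Real.norm_exp_I_mul_ofReal_sub_one_le.trans_eq ?_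
  rw [Real.norm_eq_abs, abs_div, abs_mul, abs_of_pos Real.two_pi_pos, Nat.abs_cast, Int.cast_abs]

theorem stdAddChar_natCast_two_mul {m : ℕ} [NeZero (2 * m)] :
    (ZMod.stdAddChar (m : ZMod (2 * m)) : ℂ) = -1 := by
  have hm : (m : ℂ) ≠ 0 := Nat.cast_ne_zero.2 (right_ne_zero_of_mul (NeZero.ne (2 * m)))
  have hexp : (2 * Real.pi * Complex.I * (m : ℤ) / (2 * m : ℕ) : ℂ) = Real.pi * Complex.I := by
    push_cast
    field_simp
  rw [← Int.cast_natCast, ZMod.stdAddChar_coe, hexp, Complex.exp_pi_mul_I]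

theorem norm_stdAddChar_add_sub {N : ℕ} [NeZero N] (a b : ZMod N) :
    ‖(ZMod.stdAddChar (a + b) : ℂ) - ZMod.stdAddChar a‖ = ‖(ZMod.stdAddChar b : ℂ) - 1‖ := by
  rw [AddChar.map_add_eq_mul, ← mul_sub_one, norm_mul, ZMod.stdAddChar_apply, Circle.norm_coe,
    one_mul]

variable {ι : Type*} [Fintype ι] {N : ℕ} [NeZero N]

/-- The standard embedding of the discrete torus `(ℤ/N)^ι` in `ℓ_p`, which maps every coordinate
to the real and imaginary parts of the corresponding `N`-th root of unity. -/
noncomputable def torusMap (p : ℝ≥0∞) (x : ι → ZMod N) : PiLp p fun _ : ι ⊕ ι => ℝ :=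
  WithLp.toLp p (Sum.elim (fun i => (ZMod.stdAddChar (x i) : ℂ).re)
    fun i => (ZMod.stdAddChar (x i) : ℂ).im)

variable {p : ℝ≥0∞} [Fact (1 ≤ p)]

theorem dist_torusMap_le {x y : ι → ZMod N} {r : ℝ} (hr : 0 ≤ r)
    (hxy : ∀ i, ‖(ZMod.stdAddChar (x i) : ℂ) - ZMod.stdAddChar (y i)‖ ≤ r) :
    dist (torusMap p x) (torusMap p y) ≤ (2 * Fintype.card ι : ℝ) ^ (1 / p).toReal * r := by
  have hsup : dist (torusMap p x).ofLp (torusMap p y).ofLp ≤ r := by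
    refine (dist_pi_le_iff hr).2 ?_
    rintro (i | i)
    · exact (Complex.abs_re_le_norm (ZMod.stdAddChar (x i) - ZMod.stdAddChar (y i))).trans (hxy i)
    · exact (Complex.abs_im_le_norm (ZMod.stdAddChar (x i) - ZMod.stdAddChar (y i))).trans (hxy i)
  refine ((PiLp.antilipschitzWith_ofLp p _).le_mul_dist _ _).trans ?_
  simp only [Fintype.card_sum, ← two_mul, NNReal.coe_rpow, Nat.cast_mul, Nat.cast_ofNat,
    NNReal.coe_mul, NNReal.coe_ofNat, NNReal.coe_natCast]
  gcongr

theorem norm_stdAddChar_sub_le_two_mul_dist_torusMap (x y : ι → ZMod N) (j : ι) :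
    ‖(ZMod.stdAddChar (x j) : ℂ) - ZMod.stdAddChar (y j)‖ ≤
      2 * dist (torusMap p x) (torusMap p y) := by
  have hcoord (i : ι ⊕ ι) : dist (torusMap p x i) (torusMap p y i) ≤
      dist (torusMap p x) (torusMap p y) := PiLp.dist_apply_le _ _ i
  rw [two_mul]
  exact (Complex.norm_le_abs_re_add_abs_im _).trans
    (add_le_add (hcoord (Sum.inl j)) (hcoord (Sum.inr j)))

variable [DecidableEq ι]

theorem dist_torusMap_add_sum_le (x : ι → ZMod N) (ε : ι → ℤˣ) (s : Finset ι) :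
    dist (torusMap p (x + ∑ i ∈ s, ε i • Pi.single i 1)) (torusMap p x) ≤
      (2 * Fintype.card ι : ℝ) ^ (1 / p).toReal * (2 * Real.pi / N) := by
  refine dist_torusMap_le (by positivity) fun i => ?_
  obtain ⟨e, he, hmove⟩ : ∃ e : ℤ, |e| ≤ 1 ∧
      (∑ i ∈ s, ε i • Pi.single i 1 : ι → ZMod N) i = e := by
    by_cases hi : i ∈ s
    · refine ⟨ε i, (Int.abs_eq_natAbs _).trans_le (by simp), ?_⟩
      simp [Finset.sum_apply, Pi.single_apply, hi, Units.smul_def]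
    · exact ⟨0, by simp, by simp [Finset.sum_apply, Pi.single_apply, hi]⟩
  rw [Pi.add_apply, hmove, norm_stdAddChar_add_sub]
  refine (norm_stdAddChar_intCast_sub_one_le e).trans ?_
  refine div_le_div_of_nonneg_right (mul_le_of_le_one_right Real.two_pi_pos.le ?_)
    (Nat.cast_nonneg N)
  exact_mod_cast he

theorem one_le_dist_torusMap_antipode {m : ℕ} [NeZero (2 * m)] (x : ι → ZMod (2 * m)) (j : ι) :
    1 ≤ dist (torusMap p (x + m • Pi.single j 1)) (torusMap p x) := by
  have hfar := norm_stdAddChar_sub_le_two_mul_dist_torusMap (p := p) (x + m • Pi.single j 1) x j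
  rw [Pi.add_apply, Pi.smul_apply, Pi.single_eq_same, nsmul_one, norm_stdAddChar_add_sub,
    stdAddChar_natCast_two_mul] at hfar
  have hchord : ‖(-1 : ℂ) - 1‖ = 2 := by norm_num
  linarith

end DiscreteTorus

section Obstruction

theorem exists_torus_size {p q δ : ℝ} (hq : 0 < q) (hqp : q < p) (hδ : 0 < δ) :
    ∃ n k : ℕ, 0 < n ∧ 0 < k ∧ k ≤ 2 * (n : ℝ) ^ (1 / q) ∧
      (2 * n : ℝ) ^ (1 / p) * (2 * Real.pi / (2 * (2 * k) : ℕ)) < δ := by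
  have hexponent : 0 < 1 / q - 1 / p := sub_pos.2 (one_div_lt_one_div_of_lt hq hqp)
  have hlim : Tendsto (fun n : ℕ => 2 ^ (1 / p) * (Real.pi / 2) * (n : ℝ) ^ (-(1 / q - 1 / p)))
      atTop (𝓝 (2 ^ (1 / p) * (Real.pi / 2) * 0)) :=
    ((tendsto_rpow_neg_atTop hexponent).comp tendsto_natCast_atTop_atTop).const_mul _
  rw [mul_zero] at hlim
  obtain ⟨n, hn_lt, hn⟩ := ((hlim.eventually_lt_const hδ).and (eventually_gt_atTop 0)).exists
  have hn_pos : (0 : ℝ) < n := Nat.cast_pos.2 hn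
  have hroot : 1 ≤ (n : ℝ) ^ (1 / q) := Real.one_le_rpow (Nat.one_le_cast.2 hn) (by positivity)
  have hceil := Nat.le_ceil ((n : ℝ) ^ (1 / q))
  refine ⟨n, ⌈(n : ℝ) ^ (1 / q)⌉₊, hn, Nat.ceil_pos.2 (by positivity), ?_, ?_⟩
  · linarith [Nat.ceil_lt_add_one (zero_le_one.trans hroot)]
  · refine lt_of_le_of_lt ?_ hn_lt
    calc (2 * n : ℝ) ^ (1 / p) * (2 * Real.pi / (2 * (2 * ⌈(n : ℝ) ^ (1 / q)⌉₊) : ℕ))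
        ≤ (2 * n : ℝ) ^ (1 / p) * (2 * Real.pi / (2 * (2 * (n : ℝ) ^ (1 / q)))) := by
          push_cast
          gcongr
      _ = 2 ^ (1 / p) * (Real.pi / 2) * (n : ℝ) ^ (-(1 / q - 1 / p)) := by
          rw [Real.mul_rpow zero_le_two hn_pos.le, neg_sub, Real.rpow_sub hn_pos]
          ring

theorem not_isUniformEmbedding_of_rademacherBessel {E : Type*} [NormedAddCommGroup E]
    [NormedSpace ℝ E] {p : ℝ≥0∞} [Fact (1 ≤ p)] (hp : p ≠ ∞) {q : ℝ} (hq : 1 ≤ q)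
    (hqp : q < p.toReal) (hE : ∀ n, RademacherBessel (Fin n) E q)
    (T : Lp ℝ p lebesgueUnit → E) : ¬ IsUniformEmbedding T := by
  intro hT
  obtain ⟨-, huc, hinv⟩ := Metric.isUniformEmbedding_iff.1 hT
  obtain ⟨δ, hδ, hfar⟩ := hinv 1 one_pos
  obtain ⟨r, hr, hnear⟩ := Metric.uniformContinuous_iff.1 huc (δ / 8) (by positivity)
  obtain ⟨n, k, hn, hk, hkn, hsize⟩ := exists_torus_size (zero_lt_one.trans_le hq) hqp hr
  have : NeZero n := ⟨hn.ne'⟩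
  have : NeZero k := ⟨hk.ne'⟩
  obtain ⟨J, hJ⟩ := exists_isometry_PiLp_lebesgueUnit (Fin n ⊕ Fin n) hp
  let f (x : Fin n → ZMod (2 * (2 * k))) : E := T (J (torusMap p x))
  have hf_near (x) (ε : Fin n → ℤˣ) (s : Finset (Fin n)) :
      ‖f (x + ∑ i ∈ s, ε i • Pi.single i 1) - f x‖ ≤ δ / 8 := by
    rw [← dist_eq_norm]
    refine (hnear ?_).le
    rw [hJ.dist_eq]
    refine (dist_torusMap_add_sum_le x ε s).trans_lt ?_
    rwa [Fintype.card_fin, ENNReal.toReal_div, ENNReal.toReal_one]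
  have hf_far (x) (j : Fin n) : δ ≤ ‖f (x + (2 * k) • Pi.single j 1) - f x‖ := by
    rw [← dist_eq_norm]
    refine not_lt.1 fun hlt => (hfar hlt).not_ge ?_
    rw [hJ.dist_eq]
    exact one_le_dist_torusMap_antipode x j
  have hcotype := metric_cotype_inequality hq (hE n) hf_near hf_far
  have hroot : 0 < (n : ℝ) ^ (1 / q) := Real.rpow_pos_of_pos (Nat.cast_pos.2 hn) _
  rw [Fintype.card_fin] at hcotype
  nlinarith

theorem not_isUniformEmbedding_Lp_of_max_lt {X : Type*} [MeasurableSpace X]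
    [StandardBorelSpace X] {μ : Measure X} [SigmaFinite μ] {p q : ℝ≥0∞} [Fact (1 ≤ p)]
    [Fact (1 ≤ q)] (hp : p ≠ ∞) (hqp : max q 2 < p) (T : Lp ℝ p lebesgueUnit → Lp ℝ q μ) :
    ¬ IsUniformEmbedding T := by
  intro hT
  obtain ⟨r, hr, hr₂, hrp, S, hS⟩ : ∃ (r : ℝ≥0∞) (_ : Fact (1 ≤ r)) (_ : 2 ≤ r) (_ : r < p)
      (S : Lp ℝ q μ → Lp ℝ r lebesgueUnit), IsUniformEmbedding S := by
    rcases lt_or_ge q 2 with hq₂ | hq₂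
    · exact ⟨2, ⟨one_le_two⟩, le_rfl, (le_max_right _ _).trans_lt hqp,
        exists_isUniformEmbedding_Lp_lebesgueUnit_of_lt ENNReal.ofNat_ne_top hq₂⟩
    · have hq_lt := (le_max_left _ _).trans_lt hqp
      obtain ⟨J, hJ⟩ := exists_isometry_Lp_lebesgueUnit μ (q := q) hq_lt.ne_top
      exact ⟨q, inferInstance, hq₂, hq_lt, J, hJ.isUniformEmbedding⟩
  have hr_one : 1 ≤ r.toReal := ENNReal.toReal_one ▸ ENNReal.toReal_mono hrp.ne_top hr.out
  exact not_isUniformEmbedding_of_rademacherBessel hp hr_one (ENNReal.toReal_strict_mono hp hrp)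
    (fun n => rademacherBessel_Lp hr₂ hrp.ne_top) _ (hS.comp hT)

end Obstruction

theorem exists_isUniformEmbedding_Lp_lebesgueUnit_of_le_max {p q : ℝ≥0∞} [Fact (1 ≤ p)]
    [Fact (1 ≤ q)] (hq : q ≠ ∞) (hpq : p ≤ max q 2) :
    ∃ T : Lp ℝ p lebesgueUnit → Lp ℝ q lebesgueUnit, IsUniformEmbedding T := by
  have hstep {r : ℝ≥0∞} [Fact (1 ≤ r)] (hr : r ≠ ∞) (hpr : p ≤ r) :
      ∃ T : Lp ℝ p lebesgueUnit → Lp ℝ r lebesgueUnit, IsUniformEmbedding T := by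
    obtain rfl | hlt := hpr.eq_or_lt
    · exact ⟨id, isometry_id.isUniformEmbedding⟩
    · exact exists_isUniformEmbedding_Lp_lebesgueUnit_of_lt hr hlt
  obtain hpq | hp₂ := le_max_iff.1 hpq
  · exact hstep hq hpq
  obtain hq₂ | hq₂ := le_total 2 q
  · exact hstep hq (hp₂.trans hq₂)
  have : Fact ((2 : ℝ≥0∞) ≠ ∞) := ⟨ENNReal.ofNat_ne_top⟩
  obtain ⟨S, hS⟩ := hstep ENNReal.ofNat_ne_top hp₂
  obtain ⟨T, hT⟩ := exists_isUniformEmbedding_Lp_lebesgueUnit_of_separable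
    (H := Lp ℝ 2 lebesgueUnit) hq₂
  exact ⟨T ∘ S, hT.comp hS⟩

theorem exists_isUniformEmbedding_Lp_lebesgueUnit_iff {p q : ℝ≥0∞} [Fact (1 ≤ p)]
    [Fact (1 ≤ q)] (hp : p ≠ ∞) (hq : q ≠ ∞) :
    (∃ T : Lp ℝ p lebesgueUnit → Lp ℝ q lebesgueUnit, IsUniformEmbedding T) ↔ p ≤ max q 2 := by
  refine ⟨fun ⟨T, hT⟩ => ?_, exists_isUniformEmbedding_Lp_lebesgueUnit_of_le_max hq⟩
  exact not_lt.1 fun hqp => not_isUniformEmbedding_Lp_of_max_lt hp hqp T hT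

end LpUniformEmbedding

/-- **Mendel–Naor / Enflo's problem on uniform embeddings of `L_p` into `L_q`.**
For `p, q ∈ [1,∞)`, the space `L_p[0,1]` is uniformly homeomorphic to a subset of `L_q[0,1]`
(i.e., there is an injection `f : L_p[0,1] → L_q[0,1]` that is uniformly continuous and whose
inverse is uniformly continuous on the image) if and only if `p ≤ q` or `p, q ∈ [1,2]`. -/
theorem Lp_uniformly_embeds_into_Lq_iff (p q : ℝ) (hp : 1 ≤ p) (hq : 1 ≤ q) :
    haveI : Fact (1 ≤ ENNReal.ofReal p) := ⟨ENNReal.one_le_ofReal.mpr hp⟩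
    haveI : Fact (1 ≤ ENNReal.ofReal q) := ⟨ENNReal.one_le_ofReal.mpr hq⟩
    ((∃ f : Lp ℝ (ENNReal.ofReal p) (volume.restrict (Set.Icc (0 : ℝ) 1)) →
          Lp ℝ (ENNReal.ofReal q) (volume.restrict (Set.Icc (0 : ℝ) 1)),
        Function.Injective f ∧ UniformContinuous f ∧
          ∃ g : Lp ℝ (ENNReal.ofReal q) (volume.restrict (Set.Icc (0 : ℝ) 1)) →
              Lp ℝ (ENNReal.ofReal p) (volume.restrict (Set.Icc (0 : ℝ) 1)),
            Function.LeftInverse g f ∧ UniformContinuousOn g (Set.range f)) ↔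
      (p ≤ q ∨ (p ≤ 2 ∧ q ≤ 2))) := by
  have : Fact (1 ≤ ENNReal.ofReal p) := ⟨ENNReal.one_le_ofReal.mpr hp⟩
  have : Fact (1 ≤ ENNReal.ofReal q) := ⟨ENNReal.one_le_ofReal.mpr hq⟩
  have hexponents : ENNReal.ofReal p ≤ max (ENNReal.ofReal q) 2 ↔ p ≤ q ∨ p ≤ 2 ∧ q ≤ 2 := by
    rw [← ENNReal.ofReal_ofNat 2, ← ENNReal.ofReal_max,
      ENNReal.ofReal_le_ofReal_iff (by positivity), le_max_iff]
    grind
  simp only [LpUniformEmbedding.exists_uniformContinuousOn_leftInverse_iff_isUniformEmbedding]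
  exact (LpUniformEmbedding.exists_isUniformEmbedding_Lp_lebesgueUnit_iff ENNReal.ofReal_ne_top
    ENNReal.ofReal_ne_top).trans hexponents
end
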